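/- arXiv:1812.10819 — 2 statements merged into one kernel-verified Lean document; each statement's English description precedes it below -/
import Mathlib

section
/- Let k be a field, G a finite group, T an indeterminate, L a finite Galois extension of the rational function field k(T), and α : G → Gal(L/k(T)) a surjective group homomorphism admitting a group-theoretic section (i.e., there is an injective homomorphism α' : Gal(L/k(T)) → G with α ∘ α' = id). Then there exist a finite separable extension E of k(T) with L ⊆ E such that every element of E algebraic over k lies in L (i.e., E ∩ k̄ = L ∩ k̄), and an isomorphism β : Aut(E/k(T)) → G such that every σ ∈ Aut(E/k(T)) maps L onto itself and σ|_L = α(β(σ)). -/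
set_option synthInstance.maxHeartbeats 1000000
set_option maxHeartbeats 1000000

section helpers
open Polynomial

section place
variable (k K A kb : Type) [Field k] [Field K] [Field A] [Field kb]
  [Algebra k[X] K] [IsFractionRing k[X] K] [Algebra K A] [Algebra k[X] A]
  [IsScalarTower k[X] K A] [Algebra k A] [IsScalarTower k k[X] A] [Algebra k kb]

structure DDPlace (a : kb) where
  B : IntermediateField K A
  O : Subring A
  ρ : O →+* kb
  le : ∀ x ∈ O, x ∈ B
  int : ∀ f : O[X], f.Monic → ∀ x ∈ B, f.eval₂ O.subtype x = 0 → x ∈ O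
  alg : ∀ x : A, IsAlgebraic k x → x ∈ B
  poly_mem : ∀ g : k[X], algebraMap k[X] A g ∈ O
  poly : ∀ g : k[X], ρ ⟨_, poly_mem g⟩ = aeval a g
  hensel : ∀ f : O[X], f.Monic → ∀ z : kb, (f.map ρ).eval z = 0 →
    (derivative (f.map ρ)).eval z ≠ 0 → ∃ x : O, f.eval x = 0 ∧ ρ x = z
  unif : ∀ g : k[X], aeval a (derivative g) ≠ 0 → ∀ x y : O, ρ x = 0 → ρ y = 0 →
    algebraMap k[X] A g ≠ x * y
  irr : ∀ f : k[X][X], f.Monic → f.natDegree ≠ 0 → f.map (aeval a).toRingHom = X ^ f.natDegree →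
    aeval a (derivative (f.coeff 0)) ≠ 0 →
    Irreducible ((f.map (algebraMap k[X] K)).map (algebraMap K B))

variable {k K A kb}

theorem dd_exists_place [IsAlgClosed kb] [IsAlgClosed A] [Algebra.IsAlgebraic K A] (a : kb) :
    Nonempty (DDPlace k K A kb a) := by
  classical
  let Q := LaurentSeries kb
  let Ψ := AlgebraicClosure Q
  let j : k[X] →+* PowerSeries kb :=
    (Polynomial.coeToPowerSeries.ringHom).comp
      ((taylorAlgHom a).toRingHom.comp (mapRingHom (algebraMap k kb)))
  have hj : ∀ g : k[X], j g = ((taylor a (g.map (algebraMap k kb)) : kb[X]) : PowerSeries kb) :=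
    fun g => rfl
  have hjinj : Function.Injective j := by
    intro x y h
    rw [hj, hj] at h
    exact Polynomial.map_injective _ (algebraMap k kb).injective
      (taylor_injective a (Polynomial.coe_injective _ h))
  have hj0 : ∀ g : k[X], PowerSeries.constantCoeff (j g) = aeval a g := by
    intro g
    rw [hj, ← PowerSeries.coeff_zero_eq_constantCoeff_apply, Polynomial.coeff_coe,
      taylor_coeff_zero, eval_map_algebraMap]
  have hj1 : ∀ g : k[X], PowerSeries.coeff 1 (j g) = aeval a (derivative g) := by
    intro g
    rw [hj, Polynomial.coeff_coe, taylor_coeff_one, derivative_map, eval_map_algebraMap]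
  have hjC : ∀ c : k, j (C c) = PowerSeries.C (algebraMap k kb c) := by
    intro c
    rw [hj]; simp
  let ι : PowerSeries kb →+* Ψ := (algebraMap Q Ψ).comp (algebraMap (PowerSeries kb) Q)
  have hι : Function.Injective ι :=
    (algebraMap Q Ψ).injective.comp (IsFractionRing.injective (PowerSeries kb) Q)
  have hjQ : Function.Injective ((algebraMap (PowerSeries kb) Q).comp j) :=
    (IsFractionRing.injective (PowerSeries kb) Q).comp hjinj
  let KQ : K →+* Q := IsFractionRing.lift hjQ
  let _ : Algebra K Ψ := ((algebraMap Q Ψ).comp KQ).toAlgebra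
  let φ : A →ₐ[K] Ψ := IsAlgClosed.lift
  have hφK : ∀ x : K, φ (algebraMap K A x) = algebraMap Q Ψ (KQ x) := fun x => φ.commutes x
  have hφ : ∀ g : k[X], φ (algebraMap k[X] A g) = ι (j g) := by
    intro g
    rw [IsScalarTower.algebraMap_apply k[X] K A, hφK]
    simp only [KQ, IsFractionRing.lift_algebraMap]
    rfl
  have hφinj : Function.Injective φ := φ.toRingHom.injective
  let B0 : Subfield A := (algebraMap Q Ψ).fieldRange.comap φ.toRingHom
  have hB0 : ∀ x, x ∈ B0 ↔ ∃ q : Q, algebraMap Q Ψ q = φ x := fun x => Iff.rfl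
  let B : IntermediateField K A := Subfield.toIntermediateField B0 (fun x => (hB0 _).2 ⟨KQ x, (hφK x).symm⟩)
  have hB : ∀ x, x ∈ B ↔ ∃ q : Q, algebraMap Q Ψ q = φ x := fun x => Iff.rfl
  let O : Subring A := ι.range.comap φ.toRingHom
  have hO : ∀ x, x ∈ O ↔ ∃ q, ι q = φ x := fun x => Iff.rfl
  obtain ⟨ψ, hψ⟩ : ∃ ψ : O →+* PowerSeries kb, ∀ x, ι (ψ x) = φ x := by
    have h : ∀ x : O, ∃ q, ι q = φ x := fun x => x.2
    choose q hq using h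
    refine ⟨⟨⟨⟨q, hι ?_⟩, ?_⟩, hι ?_, ?_⟩, hq⟩
    · rw [hq]; simp
    · intro x y; apply hι; simp [hq]
    · simp [hq]
    · intro x y; apply hι; simp [hq]
  have hψpoly : ∀ (g : k[X]) (h : algebraMap k[X] A g ∈ O), ψ ⟨_, h⟩ = j g := by
    intro g h
    apply hι
    rw [hψ]; exact hφ g
  have hsub : (φ : A →+* Ψ).comp O.subtype = ι.comp ψ := by
    ext x; exact (hψ x).symm
  obtain ⟨ψB, hψB⟩ : ∃ ψ : B →+* Q, ∀ x, algebraMap Q Ψ (ψ x) = φ x := by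
    have hι := (algebraMap Q Ψ).injective
    have h : ∀ x : B, ∃ q, algebraMap Q Ψ q = φ x := fun x => x.2
    choose q hq using h
    refine ⟨⟨⟨⟨q, hι ?_⟩, ?_⟩, hι ?_, ?_⟩, hq⟩
    · rw [hq]; simp
    · intro x y; apply hι; simp [hq]
    · simp [hq]
    · intro x y; apply hι; simp [hq]
  refine ⟨⟨B, O, PowerSeries.constantCoeff.comp ψ, ?_, ?_, ?_, ?_, ?_, ?_, ?_, ?_⟩⟩
  · rintro x ⟨q, hq⟩
    exact ⟨algebraMap _ Q q, hq⟩
  · intro f hf x hx h0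
    obtain ⟨q, hq⟩ := hx
    have : (f.map ψ).eval₂ (algebraMap (PowerSeries kb) Q) q = 0 := by
      apply (algebraMap Q Ψ).injective
      rw [hom_eval₂, map_zero, hq, eval₂_map]
      have := congrArg φ h0
      rw [map_zero, ← AlgHom.coe_toRingHom, hom_eval₂] at this
      rw [← this]
      change eval₂ (ι.comp ψ) _ _ = _
      rw [← hsub]; rfl
    have hint : IsIntegral (PowerSeries kb) q := ⟨f.map ψ, hf.map _, this⟩
    obtain ⟨y, hy⟩ := IsIntegrallyClosed.isIntegral_iff.1 hint
    exact ⟨y, by rw [← hq, ← hy]; rfl⟩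
  · intro x hx
    obtain ⟨p, hp0, hp⟩ := hx
    have hs := IsAlgClosed.splits (p.map (algebraMap k kb))
    have h1 : p.eval₂ ((ι.comp PowerSeries.C).comp (algebraMap k kb)) (φ x) = 0 := by
      have := congrArg φ hp
      rw [map_zero, aeval_def, ← AlgHom.coe_toRingHom, hom_eval₂] at this
      rw [← this]
      congr 1
      ext c
      simp only [RingHom.comp_apply, ← hjC, ← hφ]
      rw [IsScalarTower.algebraMap_apply k k[X] A]; rfl
    rw [← eval₂_map] at h1
    have hp0' : p.map (algebraMap k kb) ≠ 0 := (Polynomial.map_ne_zero_iff (algebraMap k kb).injective).2 hp0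
    obtain ⟨z, hz⟩ : ∃ z, (ι.comp PowerSeries.C) z = φ x := by
      have h2 := (hs.map (ι.comp PowerSeries.C))
      have h3 : φ x ∈ ((p.map (algebraMap k kb)).map (ι.comp PowerSeries.C)).roots := by
        rw [mem_roots (Polynomial.map_ne_zero hp0'), IsRoot, eval_map]; exact h1
      rw [hs.roots_map] at h3
      obtain ⟨z, -, hz⟩ := Multiset.mem_map.1 h3
      exact ⟨z, hz⟩
    exact ⟨_, hz⟩
  · intro g
    exact ⟨j g, (hφ g).symm⟩
  · intro g
    rw [RingHom.comp_apply]
    exact (congrArg _ (hψpoly g _)).trans (hj0 g)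
  · intro f hf z hz hz'
    have hH : HenselianRing (PowerSeries kb) (Ideal.span {PowerSeries.X}) := inferInstance
    have hmem : ∀ p : PowerSeries kb, p ∈ Ideal.span {PowerSeries.X} ↔ PowerSeries.constantCoeff p = 0 := by
      intro p
      rw [Ideal.mem_span_singleton, PowerSeries.X_dvd_iff]
    have hcomp : ∀ q : O[X], PowerSeries.constantCoeff ((q.map ψ).eval (PowerSeries.C z)) =
        (q.map (PowerSeries.constantCoeff.comp ψ)).eval z := by
      intro q
      rw [eval_map, eval_map, hom_eval₂]; simp
    obtain ⟨y, hy, hyz⟩ := hH.is_henselian (f.map ψ) (hf.map _) (PowerSeries.C z) (by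
        rw [hmem, hcomp, hz]) (by
        apply IsUnit.map
        rw [PowerSeries.isUnit_iff_constantCoeff, derivative_map, hcomp, ← derivative_map]
        exact isUnit_iff_ne_zero.2 hz')
    have hs := IsAlgClosed.splits (f.map O.subtype)
    have h3 : ι y ∈ ((f.map O.subtype).map (φ : A →+* Ψ)).roots := by
      rw [mem_roots ((hf.map _).map _).ne_zero, IsRoot, Polynomial.map_map, hsub, eval_map,
        ← eval₂_map, eval₂_at_apply, hy.eq_zero, map_zero]
    rw [hs.roots_map] at h3
    obtain ⟨x, hx, hxy⟩ := Multiset.mem_map.1 h3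
    have hxO : x ∈ O := ⟨y, hxy.symm⟩
    have hψx : ψ ⟨x, hxO⟩ = y := hι (by rw [hψ]; exact hxy)
    refine ⟨⟨x, hxO⟩, ?_, ?_⟩
    · rw [mem_roots (hf.map _).ne_zero, IsRoot] at hx
      apply Subtype.val_injective
      have := eval₂_at_apply (p := f) O.subtype ⟨x, hxO⟩
      rw [eval_map] at hx
      exact this.symm.trans hx
    · rw [RingHom.comp_apply, hψx]
      rw [hmem, map_sub, sub_eq_zero] at hyz
      simpa using hyz
  · intro g hg x y hx hy h
    apply hg
    have : j g = ψ x * ψ y := by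
      apply hι
      rw [← hφ, map_mul, hψ, hψ, h, map_mul]
    rw [← hj1, this]
    obtain ⟨u, hu⟩ : PowerSeries.X ∣ ψ x := PowerSeries.X_dvd_iff.2 hx
    obtain ⟨v, hv⟩ : PowerSeries.X ∣ ψ y := PowerSeries.X_dvd_iff.2 hy
    rw [hu, hv]
    have : (PowerSeries.X * u * (PowerSeries.X * v) : PowerSeries kb) = PowerSeries.X ^ 2 * (u * v) := by ring
    rw [this, PowerSeries.coeff_X_pow_mul']
    simp
  · intro f hf hn hX hd
    have hmem : ∀ p : PowerSeries kb, p ∈ Ideal.span {PowerSeries.X} ↔ PowerSeries.constantCoeff p = 0 := by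
      intro p
      rw [Ideal.mem_span_singleton, PowerSeries.X_dvd_iff]
    have hdeg : (f.map j).natDegree = f.natDegree := hf.natDegree_map j
    have hE : (f.map j).IsEisensteinAt (Ideal.span {PowerSeries.X}) := by
      refine ⟨?_, ?_, ?_⟩
      · rw [(hf.map j).leadingCoeff, hmem]; simp
      · intro i hi
        rw [hdeg] at hi
        rw [hmem, coeff_map, hj0]
        have := congrArg (fun q => q.coeff i) hX
        simp only [coeff_map, coeff_X_pow, hi.ne, if_false] at this
        exact this
      · rw [Ideal.span_singleton_pow, Ideal.mem_span_singleton, coeff_map]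
        rintro ⟨u, hu⟩
        apply hd
        rw [← hj1, hu, PowerSeries.coeff_X_pow_mul']
        simp
    have hprime : (Ideal.span {(PowerSeries.X : PowerSeries kb)}).IsPrime :=
      PowerSeries.span_X_isPrime
    have h1 := hE.irreducible hprime (hf.map j).isPrimitive (by rw [hdeg]; omega)
    rw [(hf.map j).irreducible_iff_irreducible_map_fraction_map (K := Q)] at h1
    refine ((hf.map _).map _).irreducible_of_irreducible_map ψB _ ?_
    convert h1 using 1
    rw [Polynomial.map_map, Polynomial.map_map, Polynomial.map_map]
    congr 1
    refine RingHom.ext fun g => ?_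
    apply (algebraMap Q Ψ).injective
    simp only [RingHom.comp_apply]
    rw [hψB]
    refine Eq.trans ?_ (hφ g)
    rw [IsScalarTower.algebraMap_apply k[X] K A]; rfl
end place


section lem
variable {k K A kb : Type} [Field k] [Field K] [Field A] [Field kb]
  [Algebra k[X] K] [IsFractionRing k[X] K] [Algebra K A] [Algebra k[X] A]
  [IsScalarTower k[X] K A] [Algebra k A] [IsScalarTower k k[X] A] [Algebra k kb]

/-- roots of the trinomial in B -/
theorem DDPlace.root {a : kb} (P : DDPlace k K A kb a) {n : ℕ} (hn : 2 < n) (d : P.O) (g : k[X])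
    (hg : aeval a g = 0) (hg' : aeval a (derivative g) ≠ 0) (x : A) (hx : x ∈ P.B)
    (h : x ^ n - d * x ^ 2 + algebraMap k[X] A g = 0) :
    ∃ hx : x ∈ P.O, P.ρ ⟨x, hx⟩ ≠ 0 ∧ P.ρ ⟨x, hx⟩ ^ (n - 2) = P.ρ d := by
  let γ : P.O := ⟨_, P.poly_mem g⟩
  have hγ : P.ρ γ = 0 := (P.poly g).trans hg
  have hxO : x ∈ P.O := by
    refine P.int (X ^ n + (- C d * X ^ 2 + C γ)) ?_ x hx ?_
    · apply monic_X_pow_add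
      compute_degree!
    · simp only [eval₂_add, eval₂_pow, eval₂_X, eval₂_mul, eval₂_neg, eval₂_C]
      rw [← h]; simp [γ]; ring
  have hγ2 : γ = ⟨x, hxO⟩ ^ 2 * (d - ⟨x, hxO⟩ ^ (n - 2)) := by
    apply Subtype.val_injective
    simp only [γ, Subring.coe_mul, AddSubgroupClass.coe_sub, Subring.coe_pow]
    have : x ^ n = x ^ 2 * x ^ (n - 2) := by rw [← pow_add]; congr 1; omega
    rw [this] at h
    linear_combination h
  have h0 : P.ρ ⟨x, hxO⟩ ≠ 0 := by
    intro h0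
    apply P.unif g hg' ⟨x, hxO⟩ (⟨x, hxO⟩ * (d - ⟨x, hxO⟩ ^ (n - 2))) h0 (by rw [map_mul, h0, zero_mul])
    rw [← Subring.coe_mul, ← mul_assoc, ← sq, ← hγ2]
  refine ⟨hxO, h0, ?_⟩
  have := congrArg P.ρ hγ2
  rw [hγ, map_mul, map_pow, map_sub, map_pow] at this
  have h2 := (mul_eq_zero.1 this.symm).resolve_left (pow_ne_zero _ h0)
  exact (sub_eq_zero.1 h2).symm

theorem DDPlace.exists_root {a : kb} (P : DDPlace k K A kb a) {n : ℕ} (hn : 2 < n) (d : P.O) (g : k[X])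
    (hg : aeval a g = 0) (hn0 : (n : kb) - 2 ≠ 0) (z : kb) (hz : z ≠ 0) (hzd : z ^ (n - 2) = P.ρ d) :
    ∃ x : P.O, (x : A) ^ n - d * x ^ 2 + algebraMap k[X] A g = 0 ∧ P.ρ x = z := by
  let γ : P.O := ⟨_, P.poly_mem g⟩
  have hγ : P.ρ γ = 0 := (P.poly g).trans hg
  have e1 : z ^ n = z ^ 2 * z ^ (n - 2) := by rw [← pow_add]; congr 1; omega
  have e2 : z ^ (n - 1) = z * z ^ (n - 2) := by rw [← pow_succ']; congr 1; omega
  obtain ⟨x, hx, hxz⟩ := P.hensel (X ^ n + (- C d * X ^ 2 + C γ)) (by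
      apply monic_X_pow_add
      compute_degree!) z (by
      simp [hγ]; rw [← hzd, e1]; ring) (by
      simp [derivative_X_pow]
      rw [← hzd, e2]
      have : (n : kb) * (z * z ^ (n - 2)) + -(z ^ (n - 2) * ((1 + 1) * z)) = (n - 2) * (z * z ^ (n - 2)) := by ring
      rw [this]
      exact mul_ne_zero hn0 (mul_ne_zero hz (pow_ne_zero _ hz)))
  refine ⟨x, ?_, hxz⟩
  have := congrArg Subtype.val hx
  simp [γ] at this
  rw [← this]; ring

theorem DDPlace.cubic_unique {a : kb} (P : DDPlace k K A kb a) (d : P.O) (g : k[X])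
    (hg : aeval a g = 0) (hg' : aeval a (derivative g) ≠ 0) (hd : P.ρ d ≠ 0) (x y : A) (hx : x ∈ P.B)
    (hy : y ∈ P.B) (h : x ^ 3 - d * x ^ 2 + algebraMap k[X] A g = 0)
    (h' : y ^ 3 - d * y ^ 2 + algebraMap k[X] A g = 0) : x = y := by
  obtain ⟨hxO, hx0, hx1⟩ := P.root (by norm_num) d g hg hg' x hx h
  obtain ⟨hyO, hy0, hy1⟩ := P.root (by norm_num) d g hg hg' y hy h'
  norm_num at hx1 hy1
  have h1 : (x - y) * (x ^ 2 + x * y + y ^ 2 - d * (x + y)) = 0 := by linear_combination h - h'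
  rcases mul_eq_zero.1 h1 with h1 | h1
  · exact sub_eq_zero.1 h1
  exfalso
  have h2 : (⟨x, hxO⟩ ^ 2 + ⟨x, hxO⟩ * ⟨y, hyO⟩ + ⟨y, hyO⟩ ^ 2 - d * (⟨x, hxO⟩ + ⟨y, hyO⟩) : P.O) = 0 :=
    Subtype.val_injective h1
  have := congrArg P.ρ h2
  simp only [map_sub, map_add, map_mul, map_pow, map_zero, hx1, hy1] at this
  apply hd
  have : P.ρ d ^ 2 = 0 := by linear_combination this
  simpa using this

theorem DDPlace.mem_of_sep [IsAlgClosed kb] {a : kb} (P : DDPlace k K A kb a) (q : k[X][X]) (hq : q.Monic)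
    (u v : k[X][X]) (D : k[X]) (h : u * q + v * derivative q = C D) (hD : aeval a D ≠ 0) (x : A)
    (hx : eval₂ (algebraMap k[X] A) x q = 0) : x ∈ P.B := by
  classical
  let r : k[X] →+* P.O := (algebraMap k[X] A).codRestrict P.O P.poly_mem
  have hr : P.ρ.comp r = (aeval a).toRingHom := RingHom.ext fun g => P.poly g
  let qb := q.map (aeval a : k[X] →ₐ[k] kb).toRingHom
  have hqb : qb.Monic := hq.map _
  have hsep : qb.Separable := by
    refine ⟨C (aeval a D)⁻¹ * u.map (aeval a : k[X] →ₐ[k] kb).toRingHom,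
      C (aeval a D)⁻¹ * v.map (aeval a : k[X] →ₐ[k] kb).toRingHom, ?_⟩
    have := congrArg (Polynomial.map (aeval a : k[X] →ₐ[k] kb).toRingHom) h
    simp only [Polynomial.map_add, Polynomial.map_mul, map_C, ← derivative_map] at this
    rw [mul_assoc, mul_assoc, ← mul_add, this]
    rw [← C_mul, ← C_1]
    congr 1
    exact inv_mul_cancel₀ hD
  have hcard : qb.roots.toFinset.card = q.natDegree := by
    rw [Multiset.toFinset_card_of_nodup (nodup_roots hsep),
      ← (IsAlgClosed.splits qb).natDegree_eq_card_roots]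
    exact hq.natDegree_map _
  have hl : ∀ z : kb, ∃ y : P.O, qb.eval z = 0 → (q.map r).eval y = 0 ∧ P.ρ y = z := by
    intro z
    by_cases hz : qb.eval z = 0
    · obtain ⟨y, hy⟩ := P.hensel (q.map r) (hq.map _) z (by rw [Polynomial.map_map, hr]; exact hz)
        (by
          rw [Polynomial.map_map, hr]
          exact hsep.eval₂_derivative_ne_zero (RingHom.id kb) hz)
      exact ⟨y, fun _ => hy⟩
    · exact ⟨0, fun h => absurd h hz⟩
  choose l hl using hl
  let S := qb.roots.toFinset.image (fun z => (l z : A))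
  have hz : ∀ z ∈ qb.roots.toFinset, qb.eval z = 0 := fun z hz => by
    rw [Multiset.mem_toFinset, mem_roots hqb.ne_zero] at hz; exact hz
  have hS : S.card = q.natDegree := by
    rw [← hcard]
    apply Finset.card_image_of_injOn
    intro z hz1 w hw1 hzw
    have h1 := (hl z (hz z hz1)).2
    have h2 := (hl w (hz w hw1)).2
    rw [← h1, ← h2, Subtype.val_injective hzw]
  have hqA := hq.map (algebraMap k[X] A)
  have hsub : S ⊆ (q.map (algebraMap k[X] A)).roots.toFinset := by
    intro y hy
    obtain ⟨z, hz1, rfl⟩ := Finset.mem_image.1 hy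
    rw [Multiset.mem_toFinset, mem_roots hqA.ne_zero, IsRoot]
    have := congrArg P.O.subtype (hl z (hz z hz1)).1
    rw [map_zero, eval_map, hom_eval₂] at this
    rw [eval_map]
    exact this
  have heq := Finset.eq_of_subset_of_card_le hsub (by
    rw [hS]
    refine (Multiset.toFinset_card_le _).trans ((card_roots' _).trans ?_)
    rw [hq.natDegree_map])
  have hxm : x ∈ (q.map (algebraMap k[X] A)).roots.toFinset := by
    rw [Multiset.mem_toFinset, mem_roots hqA.ne_zero, IsRoot, eval_map]; exact hx
  rw [← heq] at hxm
  obtain ⟨z, -, rfl⟩ := Finset.mem_image.1 hxm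
  exact P.le _ (l z).2

theorem DDPlace.mem_O {a : kb} (P : DDPlace k K A kb a) (x : A) (hx : x ∈ P.B) (h : IsIntegral k[X] x) :
    x ∈ P.O := by
  obtain ⟨f, hf, h0⟩ := h
  refine P.int (f.map ((algebraMap k[X] A).codRestrict P.O P.poly_mem)) (hf.map _) x hx ?_
  rw [eval₂_map]; exact h0

theorem dd_int_multiple [Algebra.IsAlgebraic K A] (x : A) :
    ∃ b : k[X], b ≠ 0 ∧ IsIntegral k[X] (algebraMap k[X] A b * x) := by
  have : IsAlgebraic k[X] x := (IsFractionRing.isAlgebraic_iff k[X] K A).2 (Algebra.IsAlgebraic.isAlgebraic x)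
  obtain ⟨y, hy, h⟩ := this.exists_integral_multiple
  exact ⟨y, hy, by rwa [← Algebra.smul_def]⟩

variable (k kb) in
theorem dd_sep_place [Algebra.IsAlgebraic K A] [IsAlgClosed kb] (x : A) (hx : IsSeparable K x) :
    ∃ D : k[X], D ≠ 0 ∧ ∀ a : kb, aeval a D ≠ 0 → ∀ P : DDPlace k K A kb a, x ∈ P.B := by
  obtain ⟨b, hb, hint⟩ := dd_int_multiple (k := k) (K := K) x
  have hinjA : Function.Injective (algebraMap k[X] A) := by
    rw [IsScalarTower.algebraMap_eq k[X] K A]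
    exact (algebraMap K A).injective.comp (IsFractionRing.injective k[X] K)
  have hbA : algebraMap k[X] A b ≠ 0 := by
    rw [Ne, map_eq_zero_iff _ hinjA]; exact hb
  set y := algebraMap k[X] A b * x with hy
  have hysep : IsSeparable K y := by
    have : y = algebraMap K A (algebraMap k[X] K b) * x := by
      rw [hy, IsScalarTower.algebraMap_apply k[X] K A]
    rw [this]
    have hs := isSeparable_algebraMap (K := A) (algebraMap k[X] K b)
    exact Field.isSeparable_mul hs hx
  let q := minpoly k[X] y
  have hq : q.Monic := minpoly.monic hint
  have hqK : minpoly K y = q.map (algebraMap k[X] K) :=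
    minpoly.isIntegrallyClosed_eq_field_fractions K A hint
  have hs : (q.map (algebraMap k[X] K)).Separable := hqK ▸ hysep
  obtain ⟨u, v, huv⟩ := hs
  have hclear : ∀ p : K[X], ∃ b : k[X], b ≠ 0 ∧ ∃ p' : k[X][X], p'.map (algebraMap k[X] K) = C (algebraMap k[X] K b) * p := by
    intro p
    obtain ⟨b, hb0, hb⟩ := IsLocalization.integerNormalization_spec (nonZeroDivisors k[X]) p
    refine ⟨b, nonZeroDivisors.ne_zero hb0, IsLocalization.integerNormalization (nonZeroDivisors k[X]) p, ?_⟩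
    · rw [hb, ← smul_eq_C_mul]; rw [algebraMap_smul]
  obtain ⟨b1, hb1, u', hu'⟩ := hclear u
  obtain ⟨b2, hb2, v', hv'⟩ := hclear v
  refine ⟨b1 * b2, mul_ne_zero hb1 hb2, fun a ha P => ?_⟩
  have hyB : y ∈ P.B := by
    refine P.mem_of_sep q hq (C b2 * u') (C b1 * v') (b1 * b2) ?_ ha y (minpoly.aeval _ _)
    apply Polynomial.map_injective _ (IsFractionRing.injective k[X] K)
    simp only [Polynomial.map_add, Polynomial.map_mul, map_C, hu', hv', ← derivative_map, map_mul]
    linear_combination (C (algebraMap k[X] K b1) * C (algebraMap k[X] K b2)) * huv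
  have : x = (algebraMap k[X] A b)⁻¹ * y := by rw [hy, inv_mul_cancel_left₀ hbA]
  rw [this]
  exact mul_mem (inv_mem (P.le _ (P.poly_mem b))) hyB

variable (k K kb) in
theorem dd_res_ne [Algebra.IsAlgebraic K A] (x : A) (hx : x ≠ 0) :
    ∃ D : k[X], D ≠ 0 ∧ ∀ a : kb, aeval a D ≠ 0 → ∀ P : DDPlace k K A kb a, ∀ h : x ∈ P.O,
      P.ρ ⟨x, h⟩ ≠ 0 := by
  obtain ⟨b, hb, hint⟩ := dd_int_multiple (k := k) (K := K) x⁻¹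
  refine ⟨b, hb, fun a ha P h h0 => ha ?_⟩
  have hy := P.mem_O _ (mul_mem (P.le _ (P.poly_mem b)) (inv_mem (P.le _ h))) hint
  rw [← P.poly b]
  have : (⟨_, P.poly_mem b⟩ : P.O) = ⟨_, hy⟩ * ⟨x, h⟩ := by
    apply Subtype.val_injective
    simp [hx]
  rw [this, map_mul, h0, mul_zero]

variable (kb) in
theorem dd_prime [IsAlgClosed kb] (D N : k[X]) (hDN : IsCoprime D N) (hN : derivative N ≠ 0) :
    ∃ (g : k[X]) (a : kb), g ∣ N ∧ IsCoprime D g ∧ aeval a g = 0 ∧ aeval a (derivative g) ≠ 0 ∧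
      aeval a D ≠ 0 := by
  have key : ∀ N : k[X], derivative N ≠ 0 → ∃ g, g ∣ N ∧ Irreducible g ∧ derivative g ≠ 0 := by
    intro N
    induction N using UniqueFactorizationMonoid.induction_on_prime with
    | h₁ => simp
    | h₂ x hx =>
      intro h
      obtain ⟨c, -, rfl⟩ := Polynomial.isUnit_iff.1 hx
      simp at h
    | h₃ q p hq0 hp ih =>
      intro h
      by_cases h1 : derivative p = 0
      · have h2 : derivative q ≠ 0 := by
          intro h2
          apply h; simp [derivative_mul, h1, h2]
        obtain ⟨g, hg, h3⟩ := ih h2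
        exact ⟨g, hg.mul_left _, h3⟩
      · exact ⟨p, dvd_mul_right _ _, hp.irreducible, h1⟩
  obtain ⟨g, hgN, hg, hg'⟩ := key N hN
  have hDg : IsCoprime D g := hDN.of_isCoprime_of_dvd_right hgN
  obtain ⟨a, ha⟩ := IsAlgClosed.exists_aeval_eq_zero kb g (degree_pos_of_irreducible hg).ne'
  refine ⟨g, a, hgN, hDg, ha, ?_, ?_⟩
  · have hs : g.Separable := (separable_iff_derivative_ne_zero hg).2 hg'
    exact hs.aeval_derivative_ne_zero ha
  · obtain ⟨u, v, h⟩ := hDg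
    intro h0
    have := congrArg (aeval a) h
    simp [h0, ha] at this

variable (kb) in
theorem dd_prime' [IsAlgClosed kb] (D : k[X]) (hD : D ≠ 0) :
    ∃ (g : k[X]) (a : kb), IsCoprime D g ∧ aeval a g = 0 ∧ aeval a (derivative g) ≠ 0 ∧
      aeval a D ≠ 0 := by
  have : ∃ w : k[X], derivative (1 + D * w) ≠ 0 := by
    by_cases h : derivative D = 0
    · exact ⟨X, by simp [h, hD]⟩
    · exact ⟨1, by simpa using h⟩
  obtain ⟨w, hw⟩ := this
  obtain ⟨g, a, -, h⟩ := dd_prime kb D (1 + D * w) ⟨-w, 1, by ring⟩ hw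
  exact ⟨g, a, h⟩
end lem


section aut
variable {K A : Type} [Field K] [Field A] [Algebra K A] [IsAlgClosed A] [Algebra.IsAlgebraic K A]

theorem dd_normal (B : IntermediateField K A) : Normal B A :=
  normal_iff.2 fun x => ⟨(Algebra.IsAlgebraic.isAlgebraic (R := B) x).isIntegral, IsAlgClosed.splits _⟩

theorem dd_aut_irr (B : IntermediateField K A) (f : B[X]) (hf : f.Monic) (hi : Irreducible f) (x y : A)
    (hx : aeval x f = 0) (hy : aeval y f = 0) :
    ∃ τ : A ≃ₐ[K] A, (∀ b ∈ B, τ b = b) ∧ τ x = y := by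
  haveI := dd_normal B
  have h := minpoly.eq_of_irreducible_of_monic hi hx hf
  obtain ⟨τ, hτ⟩ := minpoly.exists_algEquiv_of_root' (K := B) (x := y) (y := x)
    (Algebra.IsAlgebraic.isAlgebraic (R := B) x) (by rw [← h]; exact hy)
  exact ⟨τ.restrictScalars K, fun b hb => τ.commutes ⟨b, hb⟩, hτ⟩

theorem dd_aut_move (B : IntermediateField K A) (x : A) (hx : IsSeparable K x) (hxB : x ∉ B) :
    ∃ τ : A ≃ₐ[K] A, (∀ b ∈ B, τ b = b) ∧ τ x ≠ x := by
  have hint : IsIntegral B x := (Algebra.IsAlgebraic.isAlgebraic (R := B) x).isIntegral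
  have hs : (minpoly B x).Separable := IsSeparable.tower_top B hx
  have hc := card_rootSet_eq_natDegree (K := A) hs (IsAlgClosed.splits _)
  have hd : 1 < (minpoly B x).natDegree := by
    by_contra hcon
    have h1 : (minpoly B x).natDegree = 1 := le_antisymm (not_lt.1 hcon) (minpoly.natDegree_pos hint)
    obtain ⟨b, hb⟩ := minpoly.natDegree_eq_one_iff.1 h1
    exact hxB (hb ▸ b.2)
  rw [← hc] at hd
  have hxr : x ∈ (minpoly B x).rootSet A := mem_rootSet.2 ⟨minpoly.ne_zero hint, minpoly.aeval _ _⟩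
  obtain ⟨y, hy⟩ := Fintype.exists_ne_of_one_lt_card hd ⟨x, hxr⟩
  obtain ⟨τ, h1, h2⟩ := dd_aut_irr B _ (minpoly.monic hint) (minpoly.irreducible hint) x y
    (minpoly.aeval _ _) (mem_rootSet.1 y.2).2
  exact ⟨τ, h1, fun h => hy (Subtype.ext (h2.symm.trans h))⟩
end aut

section tri
variable {k K A kb : Type} [Field k] [Field K] [Field A] [Field kb]
  [Algebra k[X] K] [IsFractionRing k[X] K] [Algebra K A] [Algebra k[X] A]
  [IsScalarTower k[X] K A] [Algebra k A] [IsScalarTower k k[X] A] [Algebra k kb]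

noncomputable def ddTri (n : ℕ) (e g : k[X]) : k[X][X] := X ^ n + (- C e * X ^ 2 + C g)

theorem ddTri_monic {n : ℕ} (hn : 2 < n) (e g : k[X]) : (ddTri n e g).Monic := by
  apply monic_X_pow_add
  compute_degree!

theorem ddTri_natDegree {n : ℕ} (hn : 2 < n) (e g : k[X]) : (ddTri n e g).natDegree = n := by
  unfold ddTri
  rw [natDegree_add_eq_left_of_natDegree_lt]
  · simp
  · refine lt_of_le_of_lt (b := 2) ?_ (by simpa using hn)
    compute_degree!

theorem ddTri_aeval (n : ℕ) (e g : k[X]) (x : A) :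
    aeval x ((ddTri n e g).map (algebraMap k[X] K)) =
      x ^ n - algebraMap k[X] A e * x ^ 2 + algebraMap k[X] A g := by
  rw [aeval_map_algebraMap]
  simp [ddTri]; ring

theorem dd_swap [IsAlgClosed kb] [IsAlgClosed A] [Algebra.IsAlgebraic K A] {a : kb} (P : DDPlace k K A kb a)
    {n : ℕ} (hn : 2 < n) (e g : k[X]) (he : aeval a e = 1) (hg : aeval a g = 0)
    (hg' : aeval a (derivative g) ≠ 0) (hn0 : (n : kb) - 2 ≠ 0)
    (hs : ((ddTri n e g).map (algebraMap k[X] K)).Separable) :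
    ∃ τ : A ≃ₐ[K] A, (∀ b ∈ P.B, τ b = b) ∧
      ∃ x y : ((ddTri n e g).map (algebraMap k[X] K)).rootSet A, x ≠ y ∧ τ x = y ∧ τ y = x ∧
      ∀ z : ((ddTri n e g).map (algebraMap k[X] K)).rootSet A, z ≠ x → z ≠ y → τ z = z := by
  classical
  set f := (ddTri n e g).map (algebraMap k[X] K) with hf
  have hfm : f.Monic := (ddTri_monic hn e g).map _
  have hfd : f.natDegree = n := by
    rw [hf, (ddTri_monic hn e g).natDegree_map, ddTri_natDegree hn]
  have hmem : ∀ x : A, x ∈ f.rootSet A ↔ x ^ n - algebraMap k[X] A e * x ^ 2 + algebraMap k[X] A g = 0 := by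
    intro x
    rw [mem_rootSet, ddTri_aeval]
    exact and_iff_right hfm.ne_zero
  let d : P.O := ⟨_, P.poly_mem e⟩
  have hd : P.ρ d = 1 := (P.poly e).trans he
  have hsp := IsAlgClosed.splits (f.map (algebraMap K A))
  have hcard := card_rootSet_eq_natDegree (K := A) hs hsp
  rw [hfd] at hcard
  have hn2 : ((n - 2 : ℕ) : kb) ≠ 0 := by
    rw [Nat.cast_sub hn.le]; exact_mod_cast hn0
  have hμ : Fintype.card ((X ^ (n - 2) - 1 : kb[X]).rootSet kb) = n - 2 := by
    rw [card_rootSet_eq_natDegree (X_pow_sub_one_separable_iff.2 hn2) (IsAlgClosed.splits _)]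
    exact natDegree_X_pow_sub_C (r := (1 : kb))
  have hζ : ∀ ζ : (X ^ (n - 2) - 1 : kb[X]).rootSet kb, (ζ : kb) ^ (n - 2) = 1 := by
    intro ζ
    have := (mem_rootSet.1 ζ.2).2
    simp at this
    exact sub_eq_zero.1 this
  have hex := fun ζ : (X ^ (n - 2) - 1 : kb[X]).rootSet kb =>
    P.exists_root hn d g hg hn0 ζ (by
      intro h
      have := hζ ζ
      rw [h, zero_pow (by omega)] at this
      exact zero_ne_one this) ((hζ ζ).trans hd.symm)
  choose r hr1 hr2 using hex
  let R := f.rootSet A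
  let T : Finset R := Finset.univ.filter fun x => (x : A) ∉ P.B
  have hT : T.card ≤ 2 := by
    have h1 := Finset.card_filter_add_card_filter_not (s := (Finset.univ : Finset R)) (fun x => (x : A) ∉ P.B)
    have h2 : n - 2 ≤ (Finset.univ.filter fun x : R => ¬ (x : A) ∉ P.B).card := by
      rw [← hμ, ← Finset.card_univ]
      refine Finset.card_le_card_of_injOn (fun ζ => ⟨r ζ, (hmem _).2 (hr1 ζ)⟩) ?_ ?_
      · intro ζ _
        simpa using P.le _ (r ζ).2
      · intro ζ _ ξ _ h
        have : r ζ = r ξ := Subtype.ext (congrArg (fun y : R => (y : A)) h)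
        exact Subtype.ext (by rw [← hr2 ζ, ← hr2 ξ, this])
    rw [Finset.card_univ, hcard] at h1
    have : (Finset.univ.filter fun x : R => (x : A) ∉ P.B).card = T.card := rfl
    omega
  have hz : ∃ z : R, (z : A) ∉ P.B := by
    by_contra! hall
    have hfA : (f.map (algebraMap K A)).Monic := hfm.map _
    have h0 := hsp.coeff_zero_eq_prod_roots_of_monic hfA
    have h1 : ∀ s : Multiset A, (∀ x ∈ s, x ∈ f.rootSet A) → ∃ h : s.prod ∈ P.O, P.ρ ⟨_, h⟩ ≠ 0 := by
      intro s
      induction s using Multiset.induction with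
      | empty => exact fun _ => ⟨by simp [one_mem], by
          have : (⟨(0 : Multiset A).prod, by simp [one_mem]⟩ : P.O) = 1 := Subtype.ext (by simp)
          rw [this]; simp⟩
      | cons x s ih =>
        intro hh
        obtain ⟨h2, h3⟩ := ih fun y hy => hh y (Multiset.mem_cons_of_mem hy)
        have hxR := hh x (Multiset.mem_cons_self _ _)
        obtain ⟨h4, h5, -⟩ := P.root hn d g hg hg' x (hall ⟨x, hxR⟩) ((hmem x).1 hxR)
        have h6 : (x ::ₘ s).prod ∈ P.O := by rw [Multiset.prod_cons]; exact mul_mem h4 h2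
        refine ⟨h6, ?_⟩
        have : (⟨_, h6⟩ : P.O) = ⟨x, h4⟩ * ⟨_, h2⟩ := Subtype.ext (by simp)
        rw [this, map_mul]
        exact mul_ne_zero h5 h3
    obtain ⟨h2, h3⟩ := h1 (f.map (algebraMap K A)).roots (by
      intro x hx
      rw [mem_roots hfA.ne_zero, IsRoot, eval_map_algebraMap] at hx
      exact mem_rootSet.2 ⟨hfm.ne_zero, hx⟩)
    have h4 : (f.map (algebraMap K A)).coeff 0 = algebraMap k[X] A g := by
      rw [coeff_zero_eq_eval_zero, eval_map_algebraMap, ddTri_aeval]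
      simp [show n ≠ 0 by omega]
    rw [h4] at h0
    have h5 : (⟨_, P.poly_mem g⟩ : P.O) = (-1) ^ (f.map (algebraMap K A)).natDegree * ⟨_, h2⟩ :=
      Subtype.ext (by simpa using h0)
    have h6 := (P.poly g).trans hg
    rw [h5] at h6
    simp at h6
    exact h3 h6
  obtain ⟨z, hz⟩ := hz
  have hzsep : IsSeparable K (z : A) := hs.of_dvd (minpoly.dvd K _ (mem_rootSet.1 z.2).2)
  obtain ⟨τ, hτB, hτz⟩ := dd_aut_move P.B (z : A) hzsep hz
  have hτR : ∀ x ∈ f.rootSet A, τ x ∈ f.rootSet A := by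
    intro x hx
    rw [mem_rootSet] at hx ⊢
    refine ⟨hx.1, ?_⟩
    have h := aeval_algHom_apply (τ : A →ₐ[K] A) x f
    rw [hx.2, map_zero] at h
    exact h
  have hτn : ∀ x, x ∉ P.B → τ x ∉ P.B := by
    intro x hx h
    have := hτB _ h
    rw [τ.injective this] at h
    exact hx h
  let z' : R := ⟨τ z, hτR z z.2⟩
  have hzz' : z ≠ z' := fun h => hτz (congrArg Subtype.val h).symm
  have h2 : ∀ w : R, (w : A) ∉ P.B → w = z ∨ w = z' := by
    intro w hw
    by_contra! hc
    have : ({z, z', w} : Finset R) ⊆ T := by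
      intro y hy
      simp only [Finset.mem_insert, Finset.mem_singleton] at hy
      simp only [T, Finset.mem_filter, Finset.mem_univ, true_and]
      rcases hy with rfl | rfl | rfl
      · exact hz
      · exact hτn _ hz
      · exact hw
    have := (Finset.card_le_card this).trans hT
    rw [Finset.card_eq_three.2 ⟨z, z', w, hzz', hc.1.symm, hc.2.symm, rfl⟩] at this
    omega
  refine ⟨τ, hτB, z, z', hzz', rfl, ?_, ?_⟩
  · rcases h2 ⟨τ z', hτR _ z'.2⟩ (hτn _ (hτn _ hz)) with h | h
    · exact congrArg Subtype.val h
    · exact absurd (τ.injective (congrArg Subtype.val h)).symm hτz.symm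
  · intro w h3 h4
    by_contra h5
    rcases h2 w (fun h => h5 (hτB _ h)) with h | h
    · exact h3 h
    · exact h4 h
end tri


theorem dd_n (k : Type) [Field k] (m : ℕ) : ∃ n : ℕ, n.Prime ∧ m < n ∧ (n : k) ≠ 0 ∧ (n : k) - 2 ≠ 0 := by
  obtain ⟨p, hp⟩ := CharP.exists k
  rcases CharP.char_is_prime_or_zero k p with h | h
  · obtain ⟨n, h1, h2, h3⟩ := Nat.exists_prime_gt_modEq_one (k := p) m h.ne_zero
    have h4 : (n : k) = 1 := by
      have := (CharP.natCast_eq_natCast k p).2 h3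
      simpa using this
    refine ⟨n, h1, h2, by rw [h4]; exact one_ne_zero, ?_⟩
    rw [h4]
    norm_num
  · subst h
    haveI := CharP.charP_to_charZero k
    obtain ⟨n, h1, h2⟩ := Nat.exists_infinite_primes (max (m + 1) 3)
    have h3 : m + 1 ≤ n := (le_max_left _ _).trans h1
    have h4 : 3 ≤ n := (le_max_right _ _).trans h1
    refine ⟨n, h2, h3, by simp [h2.ne_zero], ?_⟩
    rw [sub_ne_zero]
    intro h
    have : n = 2 := by exact_mod_cast h
    omega

section J
variable {k K A kb : Type} [Field k] [Field K] [Field A] [Field kb]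
  [Algebra k[X] K] [IsFractionRing k[X] K] [Algebra K A] [Algebra k[X] A]
  [IsScalarTower k[X] K A] [Algebra k A] [IsScalarTower k k[X] A] [Algebra k kb]

variable (k kb) in
theorem dd_field_place [Algebra.IsAlgebraic K A] [IsAlgClosed kb] (L : IntermediateField K A)
    [FiniteDimensional K L] [Algebra.IsSeparable K L] :
    ∃ D : k[X], D ≠ 0 ∧ ∀ a : kb, aeval a D ≠ 0 → ∀ P : DDPlace k K A kb a, L ≤ P.B := by
  obtain ⟨x, hx⟩ := Field.exists_primitive_element K L
  have hxs : IsSeparable K (x : A) := by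
    have := Algebra.IsSeparable.isSeparable K x
    rw [IsSeparable] at this ⊢
    rwa [show minpoly K (x : A) = minpoly K x from minpoly.algHom_eq L.val L.val.injective x]
  have hL : L = IntermediateField.adjoin K {(x : A)} := by
    have := congrArg IntermediateField.lift hx
    rw [IntermediateField.lift_adjoin_simple, IntermediateField.lift_top] at this
    exact this.symm
  obtain ⟨D, h1, h2⟩ := dd_sep_place k kb (x : A) hxs
  refine ⟨D, h1, fun a ha P => ?_⟩
  rw [hL, IntermediateField.adjoin_simple_le_iff]
  exact h2 a ha P

theorem dd_map_root (τ : A ≃ₐ[K] A) (f : K[X]) (x : A) (hx : x ∈ f.rootSet A) : τ x ∈ f.rootSet A := by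
  rw [mem_rootSet] at hx ⊢
  refine ⟨hx.1, ?_⟩
  have h := aeval_algHom_apply (τ : A →ₐ[K] A) x f
  rw [hx.2, map_zero] at h
  exact h

theorem dd_map_root_iff (τ : A ≃ₐ[K] A) (f : K[X]) (x : A) : x ∈ f.rootSet A ↔ τ x ∈ f.rootSet A := by
  refine ⟨dd_map_root τ f x, fun h => ?_⟩
  have := dd_map_root τ.symm f _ h
  simpa using this

variable (k kb) in
theorem dd_J [IsAlgClosed kb] [IsAlgClosed A] [Algebra.IsAlgebraic K A] (L : IntermediateField K A)
    [FiniteDimensional K L] [Algebra.IsSeparable K L] (m : ℕ) :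
    ∃ f : K[X], f.Monic ∧ f.Separable ∧ m < Fintype.card (f.rootSet A) ∧
      ∀ π : Equiv.Perm (f.rootSet A), ∃ τ : A ≃ₐ[K] A, (∀ x ∈ L, τ x = x) ∧
        (∀ x, IsAlgebraic k x → τ x = x) ∧ ∀ x : f.rootSet A, τ x = π x := by
  classical
  obtain ⟨n, hn, hmn, hn0, hn2⟩ := dd_n k (max m 2)
  have hm : m < n := (le_max_left _ _).trans_lt hmn
  have h2n : 2 < n := (le_max_right _ _).trans_lt hmn
  obtain ⟨D, hD0, hD⟩ := dd_field_place k kb L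
  obtain ⟨g1, a1, hc1, hg1, hg1', ha1⟩ := dd_prime' kb D hD0
  have hg10 : g1 ≠ 0 := by rintro rfl; simp at hg1'
  obtain ⟨g2, a2, hc2, hg2, hg2', ha2⟩ := dd_prime' kb (D * g1) (mul_ne_zero hD0 hg10)
  obtain ⟨u, w, huw⟩ := hc2.of_mul_left_right
  rw [map_mul] at ha2
  have ha2D := left_ne_zero_of_mul ha2
  have ha2g := right_ne_zero_of_mul ha2
  obtain ⟨P1⟩ := dd_exists_place (k := k) (K := K) (A := A) a1
  obtain ⟨P2⟩ := dd_exists_place (k := k) (K := K) (A := A) a2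
  have hP1 := hD a1 ha1 P1
  have hP2 := hD a2 ha2D P2
  have h12 : aeval a1 g2 ≠ 0 := by
    intro h
    have := congrArg (aeval a1) huw
    simp [hg1, h] at this
  have he2 : aeval a2 (u * g1) = 1 := by
    have := congrArg (aeval a2) huw
    simpa [hg2] using this
  set F := ddTri n (u * g1) (g1 * g2) with hF
  have hFm : F.Monic := ddTri_monic h2n _ _
  have hFd : F.natDegree = n := ddTri_natDegree h2n _ _
  have hirr := P1.irr F hFm (by omega) (by
    rw [hFd, hF, ddTri]
    simp [hg1]) (by
    have : F.coeff 0 = g1 * g2 := by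
      rw [hF, ddTri, coeff_zero_eq_eval_zero]; simp; omega
    rw [this, derivative_mul, map_add, map_mul, map_mul, hg1, zero_mul, add_zero]
    exact mul_ne_zero hg1' h12)
  set f := F.map (algebraMap k[X] K) with hf
  have hfm : f.Monic := hFm.map _
  have hfd : f.natDegree = n := by rw [hf, hFm.natDegree_map, hFd]
  have hfi : Irreducible f := hfm.irreducible_of_irreducible_map _ _ hirr
  have hnK : (n : K) ≠ 0 := by
    have hinj : Function.Injective ((algebraMap k[X] K).comp C) :=
      (IsFractionRing.injective k[X] K).comp C_injective
    have := (map_ne_zero_iff _ hinj).2 hn0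
    simpa using this
  have hfs : f.Separable := by
    rw [separable_iff_derivative_ne_zero hfi]
    intro h
    have h1 := congrArg (fun q => coeff q (n - 1)) h
    simp only [coeff_derivative, coeff_zero] at h1
    have h2 : f.coeff (n - 1 + 1) = 1 := by
      rw [show n - 1 + 1 = n by omega, ← hfd]; exact hfm
    rw [h2, one_mul] at h1
    apply hnK
    rw [← h1, ← Nat.cast_succ, Nat.succ_eq_add_one, show n - 1 + 1 = n by omega]
  have hcard : Fintype.card (f.rootSet A) = n := by
    rw [card_rootSet_eq_natDegree hfs (IsAlgClosed.splits _), hfd]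
  refine ⟨f, hfm, hfs, by rw [hcard]; exact hm, ?_⟩
  let H : Subgroup (Equiv.Perm (f.rootSet A)) :=
    { carrier := {π | ∃ τ : A ≃ₐ[K] A, (∀ x ∈ L, τ x = x) ∧
        (∀ x, IsAlgebraic k x → τ x = x) ∧ ∀ x : f.rootSet A, τ x = π x}
      one_mem' := ⟨1, fun _ _ => rfl, fun _ _ => rfl, fun _ => rfl⟩
      mul_mem' := by
        rintro π π' ⟨τ, h1, h2, h3⟩ ⟨τ', h1', h2', h3'⟩
        refine ⟨τ * τ', fun x hx => ?_, fun x hx => ?_, fun x => ?_⟩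
        · rw [AlgEquiv.mul_apply, h1' x hx, h1 x hx]
        · rw [AlgEquiv.mul_apply, h2' x hx, h2 x hx]
        · rw [AlgEquiv.mul_apply, h3', h3]; rfl
      inv_mem' := by
        rintro π ⟨τ, h1, h2, h3⟩
        refine ⟨τ⁻¹, fun x hx => ?_, fun x hx => ?_, fun x => ?_⟩
        · apply τ.injective; rw [h1 x hx]; exact τ.apply_symm_apply x
        · apply τ.injective; rw [h2 x hx]; exact τ.apply_symm_apply x
        · apply τ.injective; rw [h3]
          refine (τ.apply_symm_apply _).trans ?_
          simp }
  have hperm : ∀ τ : A ≃ₐ[K] A, ∃ π : Equiv.Perm (f.rootSet A), ∀ x : f.rootSet A, τ x = (π x : A) := fun τ =>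
    ⟨τ.toEquiv.subtypeEquiv (fun x => dd_map_root_iff τ f x), fun x => rfl⟩
  have hfix : ∀ (a : kb) (P : DDPlace k K A kb a), L ≤ P.B → ∀ τ : A ≃ₐ[K] A, (∀ b ∈ P.B, τ b = b) →
      ∀ π : Equiv.Perm (f.rootSet A), (∀ x : f.rootSet A, τ x = (π x : A)) → π ∈ H := fun a P hP τ hτ π hπ =>
    ⟨τ, fun x hx => hτ x (hP hx), fun x hx => hτ x (P.alg x hx), hπ⟩
  have htrans : MulAction.IsPretransitive H (f.rootSet A) := by
    constructor
    intro x y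
    obtain ⟨τ, h1, h2⟩ := dd_aut_irr P1.B _ (hfm.map _) hirr x y
      (by rw [aeval_map_algebraMap]; exact (mem_rootSet.1 x.2).2)
      (by rw [aeval_map_algebraMap]; exact (mem_rootSet.1 y.2).2)
    obtain ⟨π, hπ⟩ := hperm τ
    refine ⟨⟨π, hfix _ P1 hP1 τ h1 π hπ⟩, Subtype.ext ?_⟩
    exact (hπ x).symm.trans h2
  have hn2' : (n : kb) - 2 ≠ 0 := by
    have := (map_ne_zero_iff _ (algebraMap k kb).injective).2 hn2
    rwa [map_sub, map_natCast, map_ofNat] at this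
  obtain ⟨τ, hτ, x, y, hxy, hτx, hτy, hτz⟩ := dd_swap P2 h2n (u * g1) (g1 * g2) he2 (by simp [hg2])
    (by
      rw [derivative_mul, map_add, map_mul, map_mul, hg2, mul_zero, zero_add]
      exact mul_ne_zero ha2g hg2') hn2' hfs
  have hsw : Equiv.swap x y ∈ H := by
    refine hfix _ P2 hP2 τ hτ _ fun z => ?_
    by_cases h1 : z = x
    · rw [h1, hτx, Equiv.swap_apply_left]
    by_cases h2 : z = y
    · rw [h2, hτy, Equiv.swap_apply_right]
    rw [hτz z h1 h2, Equiv.swap_apply_of_ne_of_ne h1 h2]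
  have htop : H = ⊤ := by
    refine Equiv.Perm.subgroup_eq_top_of_swap_mem (by rw [hcard]; exact hn) ?_ hsw ⟨x, y, hxy, rfl⟩
    rw [← Nat.card_eq_fintype_card, ← Nat.card_eq_fintype_card, ← MulAction.index_stabilizer_of_transitive H x]
    exact Subgroup.index_dvd_card _
  intro π
  have : π ∈ H := htop ▸ Subgroup.mem_top π
  exact this
end J


section nm
variable {k : Type} [Field k]

theorem dd_const_infinite : Set.Infinite {w : k[X] | derivative w = 0} := by
  obtain ⟨p, hp⟩ := CharP.exists k
  rcases CharP.char_is_prime_or_zero k p with h | h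
  · refine Set.infinite_of_injective_forall_mem (f := fun m : ℕ => (X ^ (p * m) : k[X])) ?_ ?_
    · intro m m' hm
      have := congrArg natDegree hm
      simpa [h.ne_zero] using this
    · intro m
      simp [derivative_X_pow]
  · subst h
    haveI := CharP.charP_to_charZero k
    refine Set.infinite_of_injective_forall_mem (f := fun m : ℕ => (C (m : k) : k[X])) ?_ ?_
    · intro m m' hm
      have := C_injective hm
      exact_mod_cast this
    · intro m
      simp

theorem dd_chain (P : k[X][X]) : ∃ Q : k[X][X], ∀ w : k[X],
    derivative (P.eval w) = Q.eval w + (derivative P).eval w * derivative w := by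
  induction P using Polynomial.induction_on' with
  | add p q hp hq =>
    obtain ⟨Q, hQ⟩ := hp
    obtain ⟨R, hR⟩ := hq
    refine ⟨Q + R, fun w => ?_⟩
    simp only [eval_add, derivative_add, hQ, hR]
    ring
  | monomial n a =>
    refine ⟨monomial n (derivative a), fun w => ?_⟩
    simp only [eval_monomial, derivative_mul, derivative_monomial, derivative_pow]
    push_cast
    ring_nf
    simp; ring

theorem dd_w (P : k[X][X]) (hP : derivative P ≠ 0) : ∃ w : k[X], derivative (P.eval w) ≠ 0 := by
  by_contra! h
  obtain ⟨Q, hQ⟩ := dd_chain P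
  have hQ0 : Q = 0 := by
    refine eq_zero_of_infinite_isRoot Q (dd_const_infinite.mono ?_)
    intro w hw
    replace hw : derivative w = 0 := hw
    have := hQ w
    rw [h w, hw] at this
    simpa using this.symm
  apply hP
  refine eq_zero_of_infinite_isRoot _ ((dd_const_infinite.image
    (f := fun w : k[X] => w + X) (fun x _ y _ h => add_right_cancel h)).mono ?_)
  rintro _ ⟨w, hw, rfl⟩
  replace hw : derivative w = 0 := hw
  have := hQ (w + X)
  rw [h, hQ0, derivative_add, hw] at this
  simpa using this.symm

theorem dd_norm (q : k[X][X]) (hq : q.Monic) (hq' : derivative q ≠ 0) (D : k[X]) (hD : D ≠ 0) :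
    ∃ w : k[X], derivative ((q.scaleRoots D).eval (1 + D * w)) ≠ 0 ∧
      IsCoprime D ((q.scaleRoots D).eval (1 + D * w)) := by
  have h1 : derivative (q.scaleRoots D) ≠ 0 := by
    intro h
    apply hq'
    ext1 i
    have h2 := congrArg (fun r => coeff r i) h
    simp only [coeff_derivative, coeff_scaleRoots, coeff_zero] at h2 ⊢
    have : (q.coeff (i + 1) * (i + 1)) * D ^ (q.natDegree - (i + 1)) = 0 := by linear_combination h2
    exact (mul_eq_zero.1 this).resolve_right (pow_ne_zero _ hD)
  obtain ⟨w, hw⟩ := dd_w ((q.scaleRoots D).comp (1 + C D * X)) (by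
    rw [derivative_comp]
    refine mul_ne_zero (by simpa using hD) ?_
    rw [Ne, comp_eq_zero_iff]
    rintro (h | ⟨-, h⟩)
    · exact h1 h
    · have := congrArg (fun r => coeff r 1) h
      simp [coeff_one] at this
      exact hD this)
  refine ⟨w, ?_, ?_⟩
  · simpa [eval_comp] using hw
  · have : D ∣ (q.scaleRoots D).eval (1 + D * w) - 1 := by
      rw [eval_eq_sum_range, natDegree_scaleRoots, Finset.sum_range_succ, coeff_scaleRoots_natDegree,
        hq.leadingCoeff, one_mul, add_sub_assoc]
      refine dvd_add (Finset.dvd_sum fun i hi => ?_) ?_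
      · rw [coeff_scaleRoots]
        have : q.natDegree - i ≠ 0 := by have := Finset.mem_range.1 hi; omega
        exact Dvd.dvd.mul_right (Dvd.dvd.mul_left (dvd_pow_self D this) _) _
      · have := sub_one_dvd_pow_sub_one (1 + D * w) q.natDegree
        exact dvd_trans ⟨w, by ring⟩ this
    obtain ⟨v, hv⟩ := this
    exact ⟨-v, 1, by linear_combination hv⟩
end nm


section cub
variable {k K A kb : Type} [Field k] [Field K] [Field A] [Field kb]
  [Algebra k[X] K] [IsFractionRing k[X] K] [Algebra K A] [Algebra k[X] A]
  [IsScalarTower k[X] K A] [Algebra k A] [IsScalarTower k k[X] A] [Algebra k kb]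

theorem dd_prod_mem {a : kb} (P : DDPlace k K A kb a) (S : Finset A) (c : A → A)
    (hc : ∀ s ∈ S, c s ∈ P.O) : ∃ h : ∏ s ∈ S, c s ∈ P.O,
      (P.ρ ⟨_, h⟩ = 0 ↔ ∃ s, ∃ hs : s ∈ S, P.ρ ⟨c s, hc s hs⟩ = 0) := by
  classical
  induction S using Finset.induction_on with
  | empty =>
    refine ⟨by simp [one_mem], ?_⟩
    have : (⟨∏ s ∈ (∅ : Finset A), c s, by simp [one_mem]⟩ : P.O) = 1 := Subtype.ext (by simp)
    rw [this]; simp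
  | insert x S hx ih =>
    obtain ⟨h1, h2⟩ := ih fun s hs => hc s (Finset.mem_insert_of_mem hs)
    have hcx := hc x (Finset.mem_insert_self _ _)
    have h3 : ∏ s ∈ insert x S, c s ∈ P.O := by rw [Finset.prod_insert hx]; exact mul_mem hcx h1
    refine ⟨h3, ?_⟩
    have : (⟨_, h3⟩ : P.O) = ⟨c x, hcx⟩ * ⟨_, h1⟩ := Subtype.ext (by simp [Finset.prod_insert hx])
    rw [this, map_mul, mul_eq_zero, h2]
    constructor
    · rintro (h | ⟨s, hs, h⟩)
      · exact ⟨x, Finset.mem_insert_self _ _, h⟩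
      · exact ⟨s, Finset.mem_insert_of_mem hs, h⟩
    · rintro ⟨s, hs, h⟩
      rcases Finset.mem_insert.1 hs with rfl | hs'
      · exact Or.inl h
      · exact Or.inr ⟨s, hs', h⟩

variable (k kb) in
theorem dd_cubic [IsAlgClosed kb] [IsAlgClosed A] [Algebra.IsAlgebraic K A] (Ω : IntermediateField K A)
    [FiniteDimensional K Ω] [IsGalois K Ω] (c0 : A) (hc0 : c0 ∈ Ω) :
    ∃ B : IntermediateField K A, Ω ≤ B ∧ (∀ x, IsAlgebraic k x → x ∈ B) ∧
      ∃ (d : A) (γ : K) (θ : A), d ∈ Ω ∧ d ≠ 0 ∧ θ ∈ B ∧ θ ^ 3 - d * θ ^ 2 + algebraMap K A γ = 0 ∧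
      (∀ τ : A ≃ₐ[K] A, τ c0 = c0 → τ d = d) ∧
      (∀ (τ : A ≃ₐ[K] A) (x : A), x ∈ B → x ^ 3 - τ d * x ^ 2 + algebraMap K A γ = 0 → τ c0 = c0 ∧ x = θ) := by
  classical
  have hinjA : Function.Injective (algebraMap k[X] A) := by
    rw [IsScalarTower.algebraMap_eq k[X] K A]
    exact (algebraMap K A).injective.comp (IsFractionRing.injective k[X] K)
  obtain ⟨b, hb, hint⟩ := dd_int_multiple (k := k) (K := K) c0
  have hτX : ∀ (τ : A ≃ₐ[K] A) (g : k[X]), τ (algebraMap k[X] A g) = algebraMap k[X] A g := by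
    intro τ g
    rw [IsScalarTower.algebraMap_apply k[X] K A, τ.commutes]
  have hΩX : ∀ g : k[X], algebraMap k[X] A g ∈ Ω := by
    intro g
    rw [IsScalarTower.algebraMap_apply k[X] K A]
    exact Ω.algebraMap_mem _
  have hΩτ : ∀ (τ : A ≃ₐ[K] A) (x : A), x ∈ Ω → τ x ∈ Ω := by
    intro τ x hx
    have := AlgHom.restrictNormal_commutes (τ : A →ₐ[K] A) Ω ⟨x, hx⟩
    have h2 : τ x = algebraMap Ω A ((τ : A →ₐ[K] A).restrictNormal Ω ⟨x, hx⟩) := this.symm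
    rw [h2]
    exact Subtype.mem _
  set c1 := algebraMap k[X] A b * c0 with hc1
  have hbA : algebraMap k[X] A b ≠ 0 := by
    rw [Ne, map_eq_zero_iff _ hinjA]; exact hb
  have hc1Ω : c1 ∈ Ω := mul_mem (hΩX b) hc0
  have hstab : ∀ τ : A ≃ₐ[K] A, τ c1 = c1 ↔ τ c0 = c0 := by
    intro τ
    rw [hc1, map_mul, hτX]
    exact mul_right_inj' hbA
  let q := minpoly k[X] c1
  have hq : q.Monic := minpoly.monic hint
  have hqK : minpoly K c1 = q.map (algebraMap k[X] K) :=
    minpoly.isIntegrallyClosed_eq_field_fractions K A hint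
  have hsepΩ : ∀ x ∈ Ω, IsSeparable K x := by
    intro x hx
    have := Algebra.IsSeparable.isSeparable K (⟨x, hx⟩ : Ω)
    rw [IsSeparable] at this ⊢
    rwa [show minpoly K x = minpoly K (⟨x, hx⟩ : Ω) from minpoly.algHom_eq Ω.val Ω.val.injective ⟨x, hx⟩]
  have hsep := hsepΩ c1 hc1Ω
  rw [IsSeparable, hqK] at hsep
  have hqAe : (q.map (algebraMap k[X] K)).map (algebraMap K A) = q.map (algebraMap k[X] A) := by
    rw [Polynomial.map_map, ← IsScalarTower.algebraMap_eq]
  have hsepA : (q.map (algebraMap k[X] A)).Separable := hqAe ▸ hsep.map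
  have hqA : (q.map (algebraMap k[X] A)).Monic := hq.map _
  let S := (q.map (algebraMap k[X] A)).roots.toFinset
  have hS : ∀ s, s ∈ S ↔ aeval s (minpoly K c1) = 0 := by
    intro s
    rw [Multiset.mem_toFinset, mem_roots hqA.ne_zero, IsRoot, ← hqAe, ← hqK, eval_map_algebraMap]
  have hSX : ∀ s, s ∈ S → aeval s q = 0 := by
    intro s hs
    rw [Multiset.mem_toFinset, mem_roots hqA.ne_zero, IsRoot, eval_map_algebraMap] at hs
    exact hs
  have hSprod : q.map (algebraMap k[X] A) = ∏ s ∈ S, (X - C s) := by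
    have h1 : S.val = (q.map (algebraMap k[X] A)).roots := by
      rw [Multiset.toFinset_val, (nodup_roots hsepA).dedup]
    rw [Finset.prod_eq_multiset_prod, h1]
    exact (IsAlgClosed.splits (q.map (algebraMap k[X] A))).eq_prod_roots_of_monic hqA
  have : Normal K A := normal_iff.2 fun x =>
    ⟨(Algebra.IsAlgebraic.isAlgebraic (R := K) x).isIntegral, IsAlgClosed.splits _⟩
  have hSconj : ∀ s ∈ S, ∃ h : A ≃ₐ[K] A, h c1 = s := by
    intro s hs
    exact minpoly.exists_algEquiv_of_root' (Algebra.IsAlgebraic.isAlgebraic c1) ((hS s).1 hs)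
  have hSτ : ∀ (τ : A ≃ₐ[K] A) s, s ∈ S → τ s ∈ S := by
    intro τ s hs
    rw [hS] at hs ⊢
    have h := aeval_algHom_apply (τ : A →ₐ[K] A) s (minpoly K c1)
    rw [hs, map_zero] at h
    exact h
  have hc1S : c1 ∈ S := (hS c1).2 (minpoly.aeval _ _)
  have hSΩ : ∀ s ∈ S, s ∈ Ω := by
    intro s hs
    obtain ⟨h, rfl⟩ := hSconj s hs
    exact hΩτ h _ hc1Ω
  have hSint : ∀ s ∈ S, IsIntegral k[X] s := fun s hs => ⟨q, hq, hSX s hs⟩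
  obtain ⟨D1, hD10, hD1⟩ := dd_field_place k kb Ω
  have hres : ∀ x : A, ∃ D : k[X], D ≠ 0 ∧ (x ≠ 0 → ∀ a : kb, aeval a D ≠ 0 →
      ∀ P : DDPlace k K A kb a, ∀ h : x ∈ P.O, P.ρ ⟨x, h⟩ ≠ 0) := by
    intro x
    by_cases hx : x = 0
    · exact ⟨1, one_ne_zero, fun h => absurd hx h⟩
    · obtain ⟨D, h1, h2⟩ := dd_res_ne k K kb x hx
      exact ⟨D, h1, fun _ => h2⟩
  choose δ hδ0 hδ using hres
  let D := D1 * ∏ s ∈ S, ∏ t ∈ S, δ (s - t)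
  have hD0 : D ≠ 0 := mul_ne_zero hD10
    (Finset.prod_ne_zero_iff.2 fun s _ => Finset.prod_ne_zero_iff.2 fun t _ => hδ0 _)
  have hDA : algebraMap k[X] A D ≠ 0 := by
    rw [Ne, map_eq_zero_iff _ hinjA]; exact hD0
  obtain ⟨w, hw', hwc⟩ := dd_norm q hq (by
    intro h
    have h1 : derivative (q.map (algebraMap k[X] K)) = 0 := by rw [derivative_map, h, Polynomial.map_zero]
    obtain ⟨u, v, huv⟩ := hsep
    rw [h1, mul_zero, add_zero] at huv
    have h2 := IsUnit.of_mul_eq_one _ ((mul_comm _ _).trans huv)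
    rw [← hqK] at h2
    exact minpoly.not_isUnit K c1 h2) D hD0
  set N := (q.scaleRoots D).eval (1 + D * w) with hN
  obtain ⟨g, a, hgN, -, hga, hga', haD⟩ := dd_prime kb D N hwc hw'
  have haD1 : aeval a D1 ≠ 0 := by
    intro h; apply haD; simp only [D, map_mul, h, zero_mul]
  have haδ : ∀ s ∈ S, ∀ t ∈ S, aeval a (δ (s - t)) ≠ 0 := by
    intro s hs t ht h
    apply haD
    simp only [D, map_mul, map_prod]
    rw [Finset.prod_eq_zero hs (Finset.prod_eq_zero ht h), mul_zero]
  obtain ⟨P⟩ := dd_exists_place (k := k) (K := K) (A := A) a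
  have hPΩ := hD1 a haD1 P
  have hSO : ∀ s ∈ S, s ∈ P.O := fun s hs => P.mem_O s (hPΩ (hSΩ s hs)) (hSint s hs)
  let c : A → A := fun s => algebraMap k[X] A (1 + D * w) - algebraMap k[X] A D * s
  have hcO : ∀ s ∈ S, c s ∈ P.O := fun s hs => sub_mem (P.poly_mem _) (mul_mem (P.poly_mem _) (hSO s hs))
  have hcτ : ∀ (τ : A ≃ₐ[K] A) s, τ (c s) = c (τ s) := by
    intro τ s
    simp only [c, map_sub τ, map_mul τ, hτX]
  have hNprod : algebraMap k[X] A N = ∏ s ∈ S, c s := by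
    have h1 : algebraMap k[X] A (1 + D * w) =
      algebraMap k[X] A D * ((algebraMap k[X] A D)⁻¹ * algebraMap k[X] A (1 + D * w)) := by
      rw [mul_inv_cancel_left₀ hDA]
    have hdeg : q.natDegree = S.card := by
      have := congrArg natDegree hSprod
      rwa [hq.natDegree_map, natDegree_finset_prod_X_sub_C_eq_card] at this
    rw [hN, ← eval₂_at_apply, h1, scaleRoots_eval₂_mul, ← eval_map, hSprod, eval_prod, hdeg,
      ← Finset.prod_const, ← Finset.prod_mul_distrib]
    refine Finset.prod_congr rfl fun s _ => ?_
    simp only [eval_sub, eval_X, eval_C, c]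
    rw [mul_sub, mul_inv_cancel_left₀ hDA]
  obtain ⟨hNO, hN0⟩ := dd_prod_mem P S c hcO
  have hNz : P.ρ ⟨_, hNO⟩ = 0 := by
    have h1 : (⟨_, hNO⟩ : P.O) = ⟨_, P.poly_mem N⟩ := Subtype.ext hNprod.symm
    rw [h1, P.poly]
    obtain ⟨v, hv⟩ := hgN
    rw [hv, map_mul, hga, zero_mul]
  obtain ⟨s0, hs0, hs0z⟩ := hN0.1 hNz
  have hne : ∀ s (hs : s ∈ S), s ≠ s0 → P.ρ ⟨c s, hcO s hs⟩ ≠ 0 := by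
    intro s hs hss h
    have h1 : s0 - s ∈ P.O := sub_mem (hSO s0 hs0) (hSO s hs)
    have h2 : (⟨c s, hcO s hs⟩ : P.O) - ⟨c s0, hcO s0 hs0⟩ = ⟨_, P.poly_mem D⟩ * ⟨_, h1⟩ := by
      apply Subtype.ext
      simp only [c, AddSubgroupClass.coe_sub, Subring.coe_mul]
      ring
    have h3 := congrArg P.ρ h2
    rw [map_sub, h, hs0z, sub_zero, map_mul, P.poly] at h3
    exact mul_ne_zero haD (hδ _ (sub_ne_zero.2 hss.symm) a (haδ s0 hs0 s hs) P h1) h3.symm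
  let dd : A → A := fun s => ∏ t ∈ S.erase s, c t
  have hddO : ∀ s, ∃ h : dd s ∈ P.O, P.ρ ⟨_, h⟩ = 0 ↔ ∃ t, ∃ ht : t ∈ S.erase s,
      P.ρ ⟨c t, hcO t (Finset.mem_of_mem_erase ht)⟩ = 0 := fun s =>
    dd_prod_mem P (S.erase s) c fun t ht => hcO t (Finset.mem_of_mem_erase ht)
  choose hddm hddz using hddO
  have hdd0 : P.ρ ⟨_, hddm s0⟩ ≠ 0 := by
    rw [Ne, hddz]
    rintro ⟨t, ht, h⟩
    exact hne t (Finset.mem_of_mem_erase ht) (Finset.ne_of_mem_erase ht) h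
  have hdds : ∀ s, s ≠ s0 → P.ρ ⟨_, hddm s⟩ = 0 := by
    intro s hs
    rw [hddz]
    exact ⟨s0, Finset.mem_erase.2 ⟨hs.symm, hs0⟩, hs0z⟩
  have hddτ : ∀ (τ : A ≃ₐ[K] A) s, τ (dd s) = dd (τ s) := by
    intro τ s
    simp only [dd, map_prod, hcτ]
    refine Finset.prod_bij (fun t _ => τ t) ?_ ?_ ?_ ?_
    · intro t ht
      rw [Finset.mem_erase] at ht ⊢
      exact ⟨fun h => ht.1 (τ.injective h), hSτ τ t ht.2⟩
    · intro t _ t' _ h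
      exact τ.injective h
    · intro t ht
      rw [Finset.mem_erase] at ht
      refine ⟨τ.symm t, Finset.mem_erase.2 ⟨fun h => ht.1 ?_, hSτ τ.symm t ht.2⟩, τ.apply_symm_apply t⟩
      rw [← h, τ.apply_symm_apply]
    · intro t _
      rfl
  obtain ⟨h, hh⟩ := hSconj s0 hs0
  obtain ⟨θ', hθ1, hθ2⟩ := P.exists_root (n := 3) (by norm_num) ⟨_, hddm s0⟩ g hga (by norm_num)
    (P.ρ ⟨_, hddm s0⟩) hdd0 (by norm_num)
  refine ⟨P.B.comap (h : A →ₐ[K] A), ?_, ?_, dd c1, algebraMap k[X] K g, h.symm θ', ?_, ?_, ?_, ?_, ?_, ?_⟩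
  · intro x hx
    exact hPΩ (hΩτ h x hx)
  · intro x hx
    refine P.alg (h x) ?_
    obtain ⟨p, hp, hpx⟩ := hx
    refine ⟨p, hp, ?_⟩
    have e1 : ∀ y : A, aeval y p = aeval y (p.map (C : k →+* k[X])) := by
      intro y
      rw [show (C : k →+* k[X]) = algebraMap k k[X] from rfl, aeval_map_algebraMap]
    have e2 : ∀ y : A, aeval y p = aeval y ((p.map (C : k →+* k[X])).map (algebraMap k[X] K)) := by
      intro y
      rw [aeval_map_algebraMap, e1]
    rw [e2] at hpx ⊢
    have h := aeval_algHom_apply (h : A →ₐ[K] A) x ((p.map (C : k →+* k[X])).map (algebraMap k[X] K))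
    rw [hpx, map_zero] at h
    exact h
  · refine prod_mem fun t ht => ?_
    exact sub_mem (hΩX _) (mul_mem (hΩX _) (hSΩ t (Finset.mem_of_mem_erase ht)))
  · intro h0
    have h1 := hddτ h c1
    rw [h0, map_zero, hh] at h1
    apply hdd0
    have h2 : (⟨_, hddm s0⟩ : P.O) = 0 := Subtype.ext h1.symm
    rw [h2, map_zero]
  · change h (h.symm θ') ∈ P.B
    rw [h.apply_symm_apply]
    exact P.le _ θ'.2
  · apply h.injective
    rw [map_zero, ← hθ1, ← IsScalarTower.algebraMap_apply]
    simp only [map_add, map_sub, map_mul, map_pow, h.apply_symm_apply, hτX, hddτ, hh]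
  · intro τ hτ
    rw [hddτ, (hstab τ).2 hτ]
  · intro τ x hx hroot
    replace hx : h x ∈ P.B := hx
    have h1 := congrArg h hroot
    rw [map_zero, ← IsScalarTower.algebraMap_apply] at h1
    simp only [map_add, map_sub, map_mul, map_pow, hτX, hddτ] at h1
    by_cases hs : h (τ c1) = s0
    · rw [← hh] at hs
      refine ⟨(hstab τ).1 (h.injective hs), ?_⟩
      rw [hs, hh] at h1
      have := P.cubic_unique ⟨_, hddm s0⟩ g hga hga' hdd0 (h x) θ' hx (P.le _ θ'.2) h1 hθ1
      rw [← this, h.symm_apply_apply]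
    · exfalso
      obtain ⟨hxO, h2, h3⟩ := P.root (n := 3) (by norm_num) ⟨_, hddm _⟩ g hga hga' (h x) hx h1
      rw [hdds _ hs] at h3
      norm_num at h3
      exact h2 h3
end cub


section ext
variable {K A : Type} [Field K] [Field A] [Algebra K A]

def ddEq (τ τ' : A ≃ₐ[K] A) : IntermediateField K A where
  carrier := {x | τ x = τ' x}
  mul_mem' := by
    intro a b ha hb
    change τ (a * b) = τ' (a * b)
    rw [map_mul, map_mul, show τ a = τ' a from ha, show τ b = τ' b from hb]
  add_mem' := by
    intro a b ha hb
    change τ (a + b) = τ' (a + b)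
    rw [map_add, map_add, show τ a = τ' a from ha, show τ b = τ' b from hb]
  algebraMap_mem' := by
    intro x
    change τ (algebraMap K A x) = τ' (algebraMap K A x)
    rw [τ.commutes, τ'.commutes]
  inv_mem' := by
    intro a ha
    change τ a⁻¹ = τ' a⁻¹
    rw [map_inv₀, map_inv₀, show τ a = τ' a from ha]

theorem mem_ddEq {τ τ' : A ≃ₐ[K] A} {x : A} : x ∈ ddEq τ τ' ↔ τ x = τ' x := Iff.rfl

theorem dd_galois_map (Ω : IntermediateField K A) [Normal K Ω] (τ : A ≃ₐ[K] A) (x : A) (hx : x ∈ Ω) :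
    τ x ∈ Ω := by
  have := AlgHom.restrictNormal_commutes (τ : A →ₐ[K] A) Ω ⟨x, hx⟩
  have h2 : τ x = algebraMap Ω A ((τ : A →ₐ[K] A).restrictNormal Ω ⟨x, hx⟩) := this.symm
  rw [h2]
  exact Subtype.mem _

theorem dd_lift [Normal K A] (E : IntermediateField K A) (σ : E ≃ₐ[K] E) :
    ∃ τ : A ≃ₐ[K] A, ∀ x : E, τ x = σ x :=
  ⟨σ.liftNormal A, fun x => σ.liftNormal_commutes A x⟩

theorem dd_restrict (E : IntermediateField K A) [FiniteDimensional K E] (τ : A ≃ₐ[K] A)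
    (h : ∀ x ∈ E, τ x ∈ E) : ∃ σ : E ≃ₐ[K] E, ∀ x : E, (σ x : A) = τ x := by
  let φ : E →ₐ[K] E := ((τ : A →ₐ[K] A).comp E.val).codRestrict E.toSubalgebra (fun x => h x x.2)
  have hφ : ∀ x : E, (φ x : A) = τ x := fun x => rfl
  have hinj : Function.Injective φ := φ.toRingHom.injective
  exact ⟨AlgEquiv.ofBijective φ ⟨hinj, (LinearMap.injective_iff_surjective (f := φ.toLinearMap)).1 hinj⟩,
    fun x => hφ x⟩

theorem dd_stab [Normal K A] (Ω : IntermediateField K A) [FiniteDimensional K Ω] [IsGalois K Ω]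
    (H : Subgroup (A ≃ₐ[K] A)) (h : ∀ τ ∈ H, ∀ τ', (∀ x ∈ Ω, τ x = τ' x) → τ' ∈ H) :
    ∃ c ∈ Ω, ∀ τ : A ≃ₐ[K] A, τ c = c ↔ τ ∈ H := by
  let r := AlgEquiv.restrictNormalHom (F := K) (K₁ := A) Ω
  have hr : ∀ (τ : A ≃ₐ[K] A) (x : Ω), (r τ x : A) = τ x := fun τ x =>
    AlgEquiv.restrictNormal_commutes τ Ω x
  let H' := H.map r
  let F := IntermediateField.fixedField H'
  obtain ⟨x, hx⟩ := Field.exists_primitive_element K F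
  have hF : IntermediateField.adjoin K {(x : Ω)} = F := by
    have := congrArg IntermediateField.lift hx
    rwa [IntermediateField.lift_adjoin_simple, IntermediateField.lift_top] at this
  refine ⟨((x : Ω) : A), (x : Ω).2, fun τ => ⟨fun hτ => ?_, fun hτ => ?_⟩⟩
  · have h1 : r τ ∈ F.fixingSubgroup := by
      rw [← hF, IntermediateField.mem_fixingSubgroup_iff]
      have h2 : IntermediateField.adjoin K {(x : Ω)} ≤ ddEq (r τ) 1 := by
        rw [IntermediateField.adjoin_simple_le_iff, mem_ddEq]
        exact Subtype.ext ((hr τ x).trans hτ)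
      intro y hy
      exact h2 hy
    rw [IntermediateField.fixingSubgroup_fixedField] at h1
    obtain ⟨τ', h2, h3⟩ := h1
    refine h τ' h2 τ fun y hy => ?_
    rw [← hr τ' ⟨y, hy⟩, h3, hr]
  · have := x.2 ⟨r τ, ⟨τ, hτ, rfl⟩⟩
    exact (hr τ x).symm.trans (congrArg Subtype.val this)
end ext

section ext2
variable {k K A kb : Type} [Field k] [Field K] [Field A] [Field kb]
  [Algebra k[X] K] [IsFractionRing k[X] K] [Algebra K A] [Algebra k[X] A]
  [IsScalarTower k[X] K A] [Algebra k A] [IsScalarTower k k[X] A] [Algebra k kb]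

theorem dd_alg_map (τ : A ≃ₐ[K] A) (x : A) (hx : IsAlgebraic k x) : IsAlgebraic k (τ x) := by
  obtain ⟨p, hp, hpx⟩ := hx
  refine ⟨p, hp, ?_⟩
  have e1 : ∀ y : A, aeval y p = aeval y (p.map (C : k →+* k[X])) := by
    intro y
    rw [show (C : k →+* k[X]) = algebraMap k k[X] from rfl, aeval_map_algebraMap]
  have e2 : ∀ y : A, aeval y p = aeval y ((p.map (C : k →+* k[X])).map (algebraMap k[X] K)) := by
    intro y
    rw [aeval_map_algebraMap, e1]
  rw [e2] at hpx ⊢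
  have h := aeval_algHom_apply (τ : A →ₐ[K] A) x ((p.map (C : k →+* k[X])).map (algebraMap k[X] K))
  rw [hpx, map_zero] at h
  exact h

variable (k kb) in
theorem dd_ext [IsAlgClosed kb] [IsAlgClosed A] [Algebra.IsAlgebraic K A] (Ω : IntermediateField K A)
    [FiniteDimensional K Ω] [IsGalois K Ω] (c0 : A) (hc0 : c0 ∈ Ω) (hmove : ∃ τ : A ≃ₐ[K] A, τ c0 ≠ c0) :
    ∃ E : IntermediateField K A, Ω ≤ E ∧ FiniteDimensional K E ∧ Algebra.IsSeparable K E ∧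
      (∀ x ∈ E, IsAlgebraic k x → x ∈ Ω) ∧ ∃ θ ∈ E, (∀ F : IntermediateField K A, Ω ≤ F → θ ∈ F → E ≤ F) ∧
      (∀ τ : A ≃ₐ[K] A, (∀ x ∈ E, τ x ∈ E) → τ c0 = c0 ∧ τ θ = θ) ∧
      (∀ τ : A ≃ₐ[K] A, τ c0 = c0 → ∃ τ' : A ≃ₐ[K] A, (∀ x ∈ Ω, τ' x = τ x) ∧ τ' θ = θ) := by
  classical
  obtain ⟨B, hΩB, halg, d, γ, θ, hdΩ, hd0, hθB, hθ, hd, hB⟩ := dd_cubic k kb Ω c0 hc0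
  obtain ⟨τ0, hτ0⟩ := hmove
  let p : Polynomial Ω := X ^ 3 + (- C ⟨d, hdΩ⟩ * X ^ 2 + C (algebraMap K Ω γ))
  have hpm : p.Monic := by
    apply monic_X_pow_add
    compute_degree!
  have hpd : p.natDegree = 3 := by
    simp only [p]
    compute_degree!
  have hpe : ∀ x : A, aeval x p = x ^ 3 - d * x ^ 2 + algebraMap K A γ := by
    intro x
    simp only [p, map_add, map_mul, map_neg, map_pow, aeval_X, aeval_C]
    rw [← IsScalarTower.algebraMap_apply]
    change x ^ 3 + (-d * x ^ 2 + _) = _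
    ring
  have hτeq : ∀ (τ : A ≃ₐ[K] A) (x : A), x ^ 3 - d * x ^ 2 + algebraMap K A γ = 0 →
      (τ x) ^ 3 - τ d * (τ x) ^ 2 + algebraMap K A γ = 0 := by
    intro τ x h
    have := congrArg τ h
    simpa only [map_add, map_sub, map_mul, map_pow, τ.commutes, map_zero] using this
  have hpi : Irreducible p := by
    rw [hpm.irreducible_iff_roots_eq_zero_of_degree_le_three (by omega) (by omega)]
    rw [Multiset.eq_zero_iff_forall_notMem]
    intro x hx
    rw [mem_roots hpm.ne_zero, IsRoot] at hx
    have h1 : aeval (x : A) p = 0 := by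
      have := aeval_algebraMap_apply_eq_algebraMap_eval (A := A) x p
      rw [hx, map_zero] at this
      exact this
    rw [hpe] at h1
    exact hτ0 (hB τ0 (τ0 x) (hΩB (dd_galois_map Ω τ0 x x.2)) (hτeq τ0 x h1)).1
  have hpθ : aeval θ p = 0 := (hpe θ).trans hθ
  have hmin : p = minpoly Ω θ := minpoly.eq_of_irreducible_of_monic hpi hpθ hpm
  have hθint : IsIntegral Ω θ := ⟨p, hpm, hpθ⟩
  have hθintK : IsIntegral K θ := (Algebra.IsAlgebraic.isAlgebraic θ).isIntegral
  have hps : p.Separable := by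
    rw [separable_iff_derivative_ne_zero hpi]
    intro h
    have h1 := congrArg (fun r => coeff r 2) h
    have h2 := congrArg (fun r => coeff r 1) h
    simp only [p, coeff_derivative, coeff_add, coeff_neg, coeff_X_pow, coeff_zero, neg_mul, coeff_C_mul, coeff_C] at h1 h2
    norm_num at h1 h2
    rcases h2 with h2 | h2
    · exact hd0 (congrArg Subtype.val h2)
    · have : (1 : Ω) = 0 := by linear_combination h1 - h2
      exact one_ne_zero this
  have hθsep : IsSeparable K θ := by
    apply IsSeparable.of_algebra_isSeparable_of_isSeparable K (E := Ω)
    rw [IsSeparable, ← hmin]; exact hps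
  let Kθ := IntermediateField.adjoin K {θ}
  have : FiniteDimensional K Kθ := IntermediateField.adjoin.finiteDimensional hθintK
  have : Algebra.IsSeparable K Kθ :=
    (IntermediateField.isSeparable_adjoin_simple_iff_isSeparable K A).2 hθsep
  have hθE : θ ∈ Ω ⊔ Kθ :=
    (le_sup_right : Kθ ≤ Ω ⊔ Kθ) (IntermediateField.mem_adjoin_simple_self K θ)
  have hle : ∀ F : IntermediateField K A, Ω ≤ F → θ ∈ F → Ω ⊔ Kθ ≤ F := fun F h1 h2 =>
    sup_le h1 (IntermediateField.adjoin_simple_le_iff.2 h2)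
  have hEB : Ω ⊔ Kθ ≤ B := hle B hΩB hθB
  refine ⟨Ω ⊔ Kθ, le_sup_left, inferInstance, inferInstance, ?_, θ, hθE, hle, ?_, ?_⟩
  · intro x hx hxalg
    by_contra hxΩ
    have h1 : x ∈ IntermediateField.adjoin Ω {θ} := by
      rw [← IntermediateField.restrictScalars_adjoin_eq_sup] at hx
      exact hx
    have h2 : IntermediateField.adjoin Ω {x} ≤ IntermediateField.adjoin Ω {θ} :=
      IntermediateField.adjoin_simple_le_iff.2 h1
    have h3 : Module.finrank Ω (IntermediateField.adjoin Ω {θ}) = 3 := by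
      rw [IntermediateField.adjoin.finrank hθint, ← hmin, hpd]
    have h4 := IntermediateField.finrank_dvd_of_le_right h2
    rw [h3, Nat.dvd_prime Nat.prime_three] at h4
    have h5 : Module.finrank Ω (IntermediateField.adjoin Ω {x}) ≠ 1 := by
      rw [Ne, IntermediateField.finrank_adjoin_simple_eq_one_iff, IntermediateField.mem_bot]
      rintro ⟨y, hy⟩
      exact hxΩ (hy ▸ y.2)
    have : FiniteDimensional Ω (IntermediateField.adjoin Ω {θ}) :=
      IntermediateField.adjoin.finiteDimensional hθint
    have h6 := IntermediateField.eq_of_le_of_finrank_eq h2 ((h4.resolve_left h5).trans h3.symm)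
    have h7 : θ ∈ Ω ⊔ IntermediateField.adjoin K {x} := by
      rw [← IntermediateField.restrictScalars_adjoin_eq_sup]
      change θ ∈ IntermediateField.adjoin Ω {x}
      rw [h6]
      exact IntermediateField.mem_adjoin_simple_self Ω θ
    have h8 : Ω ⊔ IntermediateField.adjoin K {x} ≤ B.comap (τ0 : A →ₐ[K] A) :=
      sup_le (fun y hy => hΩB (dd_galois_map Ω τ0 y hy))
        (IntermediateField.adjoin_simple_le_iff.2 (halg _ (dd_alg_map τ0 x hxalg)))
    exact hτ0 (hB τ0 (τ0 θ) (h8 h7) (hτeq τ0 θ hθ)).1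
  · intro τ hτ
    exact hB τ (τ θ) (hEB (hτ θ hθE)) (hτeq τ θ hθ)
  · intro τ hτ
    have h1 := hτeq τ θ hθ
    rw [hd τ hτ, ← hpe] at h1
    obtain ⟨υ, h2, h3⟩ := dd_aut_irr Ω p hpm hpi (τ θ) θ h1 hpθ
    exact ⟨υ * τ, fun x hx => h2 _ (dd_galois_map Ω τ x hx), h3⟩
end ext2


section main
variable {k K A kb : Type} [Field k] [Field K] [Field A] [Field kb]
  [Algebra k[X] K] [IsFractionRing k[X] K] [Algebra K A] [Algebra k[X] A]
  [IsScalarTower k[X] K A] [Algebra k A] [IsScalarTower k k[X] A] [Algebra k kb]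

variable (k kb) in
theorem dd_main [IsAlgClosed kb] [IsAlgClosed A] [Algebra.IsAlgebraic K A] (G : Type) [Group G] [Finite G]
    (L : IntermediateField K A) [FiniteDimensional K L] [IsGalois K L] (α : G →* (L ≃ₐ[K] L)) :
    ∃ (E : IntermediateField K A) (hLE : L ≤ E),
      FiniteDimensional K E ∧ Algebra.IsSeparable K E ∧
      (∀ x : A, x ∈ E → IsAlgebraic k x → x ∈ L) ∧
      ∃ β : (E ≃ₐ[K] E) ≃* G,
        ∀ (σ : E ≃ₐ[K] E) (x : A) (hx : x ∈ L),
          ((σ ⟨x, hLE hx⟩ : E) : A) = ((α (β σ) ⟨x, hx⟩ : L) : A) := by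
  classical
  have : Fintype G := Fintype.ofFinite G
  have hnorm : Normal K A := normal_iff.2 fun x =>
    ⟨(Algebra.IsAlgebraic.isAlgebraic (R := K) x).isIntegral, IsAlgClosed.splits _⟩
  obtain ⟨f, hfm, hfs, hcard, hJ⟩ := dd_J k kb L (Fintype.card G)
  have hR : ∀ (τ : A ≃ₐ[K] A), ∃ π : Equiv.Perm (f.rootSet A), ∀ x : f.rootSet A, τ x = (π x : A) := fun τ =>
    ⟨τ.toEquiv.subtypeEquiv (fun x => dd_map_root_iff τ f x), fun x => rfl⟩
  obtain ⟨emb⟩ : Nonempty (G ↪ f.rootSet A) :=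
    Function.Embedding.nonempty_of_card_le hcard.le
  let ε : G →* Equiv.Perm (f.rootSet A) :=
    (Equiv.Perm.viaEmbeddingHom emb).comp (MulAction.toPermHom G G)
  have hε : Function.Injective ε :=
    (Equiv.Perm.viaEmbeddingHom_injective emb).comp MulAction.toPerm_injective
  let M := IntermediateField.adjoin K (f.rootSet A)
  have hsplit : IsSplittingField K M f :=
    IntermediateField.adjoin_rootSet_isSplittingField (IsAlgClosed.splits _)
  have : IsGalois K M := IsGalois.of_separable_splitting_field hfs
  have : FiniteDimensional K M := IsSplittingField.finiteDimensional M f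
  let Ω := L ⊔ M
  have hLΩ : L ≤ Ω := le_sup_left
  have hRΩ : ∀ r : f.rootSet A, (r : A) ∈ Ω := fun r =>
    (le_sup_right : M ≤ Ω) (IntermediateField.subset_adjoin K _ r.2)
  have hΩle : ∀ F : IntermediateField K A, L ≤ F → (∀ r : f.rootSet A, (r : A) ∈ F) → Ω ≤ F := fun F h1 h2 =>
    sup_le h1 (IntermediateField.adjoin_le_iff.2 fun r hr => h2 ⟨r, hr⟩)
  have : FiniteDimensional K Ω := IntermediateField.finiteDimensional_sup L M
  have : IsGalois K Ω := inferInstanceAs (IsGalois K (L ⊔ M : IntermediateField K A))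
  let Acts : (A ≃ₐ[K] A) → G → Prop := fun τ g =>
    (∀ x : L, τ x = α g x) ∧ ∀ r : f.rootSet A, τ r = ε g r
  have hact1 : Acts 1 1 := ⟨fun x => by simp, fun r => by simp⟩
  have hactm : ∀ τ τ' g g', Acts τ g → Acts τ' g' → Acts (τ * τ') (g * g') := by
    intro τ τ' g g' h h'
    refine ⟨fun x => ?_, fun r => ?_⟩
    · rw [AlgEquiv.mul_apply, h'.1, h.1, map_mul]; rfl
    · rw [AlgEquiv.mul_apply, h'.2, h.2, map_mul]; rfl
  have hacti : ∀ τ g, Acts τ g → Acts τ⁻¹ g⁻¹ := by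
    intro τ g h
    refine ⟨fun x => ?_, fun r => ?_⟩
    · apply τ.injective
      rw [h.1, ← AlgEquiv.mul_apply, mul_inv_cancel, ← AlgEquiv.mul_apply, ← map_mul, mul_inv_cancel, map_one]; rfl
    · apply τ.injective
      rw [h.2, ← AlgEquiv.mul_apply, mul_inv_cancel, ← Equiv.Perm.mul_apply, ← map_mul, mul_inv_cancel, map_one]; rfl
  have hactu : ∀ τ g g', Acts τ g → Acts τ g' → g = g' := by
    intro τ g g' h h'
    apply hε
    ext r
    rw [← h.2, ← h'.2]
  have hacte : ∀ g, ∃ τ, Acts τ g := by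
    intro g
    obtain ⟨τ1, h1⟩ := dd_lift L (α g)
    obtain ⟨π, hπ⟩ := hR τ1
    obtain ⟨τ2, h2, -, h3⟩ := hJ (π⁻¹ * ε g)
    refine ⟨τ1 * τ2, fun x => ?_, fun r => ?_⟩
    · rw [AlgEquiv.mul_apply, h2 _ x.2, h1]
    · rw [AlgEquiv.mul_apply, h3, hπ, ← Equiv.Perm.mul_apply, mul_inv_cancel_left]
  have hactΩ : ∀ τ τ' g, Acts τ g → (∀ x ∈ Ω, τ x = τ' x) → Acts τ' g := by
    intro τ τ' g h h'
    exact ⟨fun x => by rw [← h' _ (hLΩ x.2), h.1], fun r => by rw [← h' _ (hRΩ r), h.2]⟩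
  have hacteq : ∀ τ τ' g, Acts τ g → Acts τ' g → Ω ≤ ddEq τ τ' := by
    intro τ τ' g h h'
    refine hΩle _ (fun x hx => ?_) fun r => ?_
    · exact (h.1 ⟨x, hx⟩).trans (h'.1 ⟨x, hx⟩).symm
    · exact (h.2 r).trans (h'.2 r).symm
  let H : Subgroup (A ≃ₐ[K] A) :=
    { carrier := {τ | ∃ g, Acts τ g}
      one_mem' := ⟨1, hact1⟩
      mul_mem' := by
        rintro τ τ' ⟨g, h⟩ ⟨g', h'⟩
        exact ⟨g * g', hactm _ _ _ _ h h'⟩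
      inv_mem' := by
        rintro τ ⟨g, h⟩
        exact ⟨g⁻¹, hacti _ _ h⟩ }
  obtain ⟨c0, hc0, hstab⟩ := dd_stab Ω H (by
    rintro τ ⟨g, h⟩ τ' h'
    exact ⟨g, hactΩ _ _ _ h h'⟩)
  have hmove : ∃ τ : A ≃ₐ[K] A, τ c0 ≠ c0 := by
    by_contra! hall
    have h1 : ∀ π : Equiv.Perm (f.rootSet A), ∃ g, ε g = π := by
      intro π
      obtain ⟨τ, -, -, h3⟩ := hJ π
      obtain ⟨g, hg⟩ := (hstab τ).1 (hall τ)
      refine ⟨g, ?_⟩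
      ext r
      rw [← hg.2, h3]
    have h2 := Fintype.card_le_of_surjective ε h1
    rw [Fintype.card_perm] at h2
    have h3 := Nat.self_le_factorial (Fintype.card (f.rootSet A))
    omega
  obtain ⟨E, hΩE, hfd, hsep, hreg, θ, hθE, hEle, hE1, hE2⟩ := dd_ext k kb Ω c0 hc0 hmove
  have hLE : L ≤ E := hLΩ.trans hΩE
  refine ⟨E, hLE, hfd, hsep, ?_, ?_⟩
  · intro x hxE hxalg
    have hxΩ := hreg x hxE hxalg
    by_contra hxL
    have hxs : IsSeparable K x := by
      have := Algebra.IsSeparable.isSeparable K (⟨x, hxΩ⟩ : Ω)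
      rw [IsSeparable] at this ⊢
      rwa [show minpoly K x = minpoly K (⟨x, hxΩ⟩ : Ω) from minpoly.algHom_eq Ω.val Ω.val.injective ⟨x, hxΩ⟩]
    obtain ⟨τ, h1, h2⟩ := dd_aut_move L x hxs hxL
    obtain ⟨π, hπ⟩ := hR τ
    obtain ⟨τ', h3, h4, h5⟩ := hJ π
    have h6 : Ω ≤ ddEq τ τ' := hΩle _ (fun y hy => (h1 y hy).trans (h3 y hy).symm)
      fun r => (hπ r).trans (h5 r).symm
    exact h2 ((h6 hxΩ).trans (h4 x hxalg))
  · have hex : ∀ σ : E ≃ₐ[K] E, ∃ g : G, ∃ τ : A ≃ₐ[K] A, (∀ x : E, τ x = σ x) ∧ Acts τ g ∧ τ θ = θ := by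
      intro σ
      obtain ⟨τ, hτ⟩ := dd_lift E σ
      obtain ⟨h1, h2⟩ := hE1 τ (fun x hx => by rw [hτ ⟨x, hx⟩]; exact (σ ⟨x, hx⟩).2)
      obtain ⟨g, hg⟩ := (hstab τ).1 h1
      exact ⟨g, τ, hτ, hg, h2⟩
    choose b t ht1 ht2 ht3 using hex
    have hbu : ∀ σ g τ, (∀ x : E, τ x = (σ x : A)) → Acts τ g → b σ = g := by
      intro σ g τ h1 h2
      refine hactu τ _ _ (hactΩ (t σ) τ _ (ht2 σ) fun x hx => ?_) h2
      rw [ht1 σ ⟨x, hΩE hx⟩, h1 ⟨x, hΩE hx⟩]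
    let β0 : (E ≃ₐ[K] E) →* G := MonoidHom.mk' b (by
      intro σ σ'
      refine hbu _ _ (t σ * t σ') (fun x => ?_) (hactm _ _ _ _ (ht2 σ) (ht2 σ'))
      rw [AlgEquiv.mul_apply, ht1 σ', ht1 σ]; rfl)
    have hβ0 : Function.Bijective β0 := by
      constructor
      · rw [injective_iff_map_eq_one]
        intro σ hσ
        replace hσ : b σ = 1 := hσ
        have h1 : Acts (t σ) 1 := hσ ▸ ht2 σ
        have h2 : E ≤ ddEq (t σ) 1 := hEle _ (hacteq _ _ _ h1 hact1) (ht3 σ)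
        ext x
        rw [← ht1 σ x]
        exact h2 x.2
      · intro g
        obtain ⟨τ, hτ⟩ := hacte g
        obtain ⟨τ', h1, h2⟩ := hE2 τ ((hstab τ).2 ⟨g, hτ⟩)
        have h3 : Acts τ' g := hactΩ _ _ _ hτ fun x hx => (h1 x hx).symm
        have h4 : E ≤ E.comap (τ' : A →ₐ[K] A) := by
          refine hEle _ (fun x hx => hΩE (dd_galois_map Ω τ' x hx)) ?_
          change τ' θ ∈ E
          rw [h2]; exact hθE
        obtain ⟨σ, hσ⟩ := dd_restrict E τ' (fun x hx => h4 hx)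
        exact ⟨σ, hbu σ g τ' (fun x => (hσ x).symm) h3⟩
    refine ⟨MulEquiv.ofBijective β0 hβ0, fun σ x hx => ?_⟩
    rw [← ht1 σ]
    exact (ht2 σ).1 ⟨x, hx⟩
end main



end helpers

/-- **The Dèbes–Deschamps conjecture with normality of the solution field waived.**
`L/k(T)` is a finite Galois extension inside a fixed algebraic closure of `RatFunc k`,
`α : G → Gal(L/k(T))` is a surjective homomorphism admitting a group-theoretic section
`α'`.  Then there are a finite separable extension `E/k(T)` with `L ⊆ E` such that every
element of `E` algebraic over `k` lies in `L` (i.e. `E ∩ k̄ = L ∩ k̄`), and an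
isomorphism `β : Aut(E/k(T)) ≃ G` such that every `σ ∈ Aut(E/k(T))` maps `L` onto itself
and `σ|_L = α (β σ)`. -/
theorem statement_1 (k : Type) [Field k] (G : Type) [Group G] [Finite G]
    (L : IntermediateField (RatFunc k) (AlgebraicClosure (RatFunc k)))
    [FiniteDimensional (RatFunc k) L] [IsGalois (RatFunc k) L]
    (α : G →* (L ≃ₐ[RatFunc k] L)) (hα : Function.Surjective α)
    (α' : (L ≃ₐ[RatFunc k] L) →* G) (hα' : Function.Injective α')
    (hsec : ∀ s : L ≃ₐ[RatFunc k] L, α (α' s) = s) :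
    ∃ (E : IntermediateField (RatFunc k) (AlgebraicClosure (RatFunc k)))
      (hLE : L ≤ E),
      FiniteDimensional (RatFunc k) E ∧ Algebra.IsSeparable (RatFunc k) E ∧
      (∀ x : AlgebraicClosure (RatFunc k), x ∈ E → IsAlgebraic k x → x ∈ L) ∧
      ∃ β : (E ≃ₐ[RatFunc k] E) ≃* G,
        ∀ (σ : E ≃ₐ[RatFunc k] E) (x : AlgebraicClosure (RatFunc k)) (hx : x ∈ L),
          ((σ ⟨x, hLE hx⟩ : E) : AlgebraicClosure (RatFunc k)) =
            ((α (β σ) ⟨x, hx⟩ : L) : AlgebraicClosure (RatFunc k)) := by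
  exact dd_main k (AlgebraicClosure k) G L α
end

section
/- Let k be a Hilbertian field. Then every finite embedding problem over k has a solution. Explicitly: for every finite group G, finite separable extension L/k, and surjective group homomorphism α : G → Aut(L/k), there exist a finite separable extension E/k with L ⊆ E and an isomorphism β : Aut(E/k) → G such that every σ ∈ Aut(E/k) maps L onto itself and σ|_L = α(β(σ)). -/
set_option synthInstance.maxHeartbeats 1000000
set_option maxHeartbeats 1000000

/-- A field `k` is *Hilbertian* if for every `n ≥ 1`, every finite collection of
polynomials `f i ∈ k[T₁,…,Tₙ][X]`, each irreducible and separable as a polynomial in `X`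
over the rational function field `k(T₁,…,Tₙ)`, and every nonzero `g ∈ k[T₁,…,Tₙ]`,
there is `t ∈ kⁿ` with `g t ≠ 0` such that each specialized polynomial `f i (t, X)` is
irreducible over `k` and separable. -/
def IsHilbertianField (k : Type) [Field k] : Prop :=
  ∀ (n : ℕ), 0 < n → ∀ (m : ℕ)
    (f : Fin m → Polynomial (MvPolynomial (Fin n) k))
    (g : MvPolynomial (Fin n) k), g ≠ 0 →
    (∀ i, Irreducible ((f i).map (algebraMap (MvPolynomial (Fin n) k)
          (FractionRing (MvPolynomial (Fin n) k)))) ∧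
        ((f i).map (algebraMap (MvPolynomial (Fin n) k)
          (FractionRing (MvPolynomial (Fin n) k)))).Separable) →
    ∃ t : Fin n → k, MvPolynomial.eval t g ≠ 0 ∧
      ∀ i, Irreducible ((f i).map (MvPolynomial.eval t)) ∧
        ((f i).map (MvPolynomial.eval t)).Separable

section
open Polynomial

theorem C1_ext {k A C Kb : Type} [Field k] [CommRing A] [CommRing C] [Field Kb] [Algebra k Kb]
    [Algebra A C] (ev : A →+* k) (b : C) (d : A) (hd : ev d ≠ 0)
    (hdC : ∀ c : C, d • c ∈ Algebra.adjoin A {b})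
    (ψ₁ ψ₂ : C →+* Kb) (h₁ : ∀ a, ψ₁ (algebraMap A C a) = algebraMap k Kb (ev a))
    (h₂ : ∀ a, ψ₂ (algebraMap A C a) = algebraMap k Kb (ev a)) (hb : ψ₁ b = ψ₂ b) :
    ψ₁ = ψ₂ := by
  ext c
  have key : ∀ x ∈ Algebra.adjoin A {b}, ψ₁ x = ψ₂ x := by
    intro x hx
    induction hx using Algebra.adjoin_induction with
    | mem x hx => rw [Set.mem_singleton_iff.1 hx]; exact hb
    | algebraMap r => rw [h₁, h₂]
    | add x y _ _ hx hy => rw [map_add, map_add, hx, hy]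
    | mul x y _ _ hx hy => rw [map_mul, map_mul, hx, hy]
  have := key _ (hdC c)
  rw [Algebra.smul_def, map_mul, map_mul, h₁, h₂] at this
  exact mul_left_cancel₀ (by simpa using hd) this

theorem C1_fin {k A C Kb : Type} [Field k] [CommRing A] [CommRing C] [Field Kb] [Algebra k Kb]
    [Algebra A C] (ev : A →+* k) (b : C) (d : A) (hd : ev d ≠ 0)
    (hdC : ∀ c : C, d • c ∈ Algebra.adjoin A {b})
    (φ : C →+* Kb) (h₁ : ∀ a, φ (algebraMap A C a) = algebraMap k Kb (ev a)) (c : C) :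
    φ c ∈ IntermediateField.adjoin k {φ b} := by
  have key : ∀ x ∈ Algebra.adjoin A {b}, φ x ∈ IntermediateField.adjoin k {φ b} := by
    intro x hx
    induction hx using Algebra.adjoin_induction with
    | mem x hx =>
      rw [Set.mem_singleton_iff.1 hx]; exact IntermediateField.mem_adjoin_simple_self k _
    | algebraMap r => rw [h₁]; exact algebraMap_mem _ _
    | add x y _ _ hx hy => rw [map_add]; exact add_mem hx hy
    | mul x y _ _ hx hy => rw [map_mul]; exact mul_mem hx hy
  have := key _ (hdC c)
  rw [Algebra.smul_def, map_mul, h₁] at this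
  have h0 : algebraMap k Kb (ev d) ≠ 0 := by simpa using hd
  have h2 := mul_mem (inv_mem (algebraMap_mem (IntermediateField.adjoin k {φ b}) (ev d))) this
  rwa [inv_mul_cancel_left₀ h0] at h2

theorem root_of_aeval {k A C Kb : Type} [Field k] [CommRing A] [CommRing C] [Field Kb]
    [Algebra k Kb] [Algebra A C] (ev : A →+* k)
    (φ : C →+* Kb) (h₁ : ∀ a, φ (algebraMap A C a) = algebraMap k Kb (ev a)) (c : C) (p : A[X]) :
    aeval (φ c) (p.map ev) = φ (aeval c p) := by
  have h : (algebraMap k Kb).comp ev = φ.comp (algebraMap A C) := by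
    ext a; simp [h₁]
  rw [aeval_def, eval₂_map, h, aeval_def, hom_eval₂]

theorem C1_core {k A C Kb Γ : Type} [Field k] [CommRing A] [IsDomain A] [IsIntegrallyClosed A]
    [CommRing C] [IsDomain C] [Algebra A C] [FaithfulSMul A C]
    [Field Kb] [Algebra k Kb] [Normal k Kb]
    [Group Γ] [Finite Γ] [MulSemiringAction Γ C] [SMulCommClass Γ A C] [Algebra.IsInvariant A C Γ]
    (ev : A →+* k) (b b0 : C) (d : A) (hd : ev d ≠ 0)
    (hdC : ∀ c : C, d • c ∈ Algebra.adjoin A {b})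
    (hirr : Irreducible ((minpoly A b).map ev))
    (hsep0 : ((minpoly A b0).map ev).Separable)
    (φ : C →+* Kb) (h₁ : ∀ a, φ (algebraMap A C a) = algebraMap k Kb (ev a)) :
    (∀ γ : Γ, ∃ τ : Kb ≃ₐ[k] Kb, ∀ c, τ (φ c) = φ (γ • c)) ∧
    (∀ τ : Kb ≃ₐ[k] Kb, ∃ γ : Γ, ∀ c, τ (φ c) = φ (γ • c)) ∧
    (∀ γ₁ γ₂ : Γ, φ (γ₁ • b0) = φ (γ₂ • b0) → γ₁ • b0 = γ₂ • b0) := by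
  have hint : Algebra.IsIntegral A C := Algebra.IsInvariant.isIntegral A C Γ
  have hγalg : ∀ (γ : Γ) (a : A), γ • algebraMap A C a = algebraMap A C a := by
    intro γ a; rw [smul_algebraMap]
  have hγroot : ∀ (γ : Γ) (c : C), aeval (γ • c) (minpoly A c) = 0 := by
    intro γ c
    have := aeval_algHom_apply (MulSemiringAction.toAlgHom A C γ) c (minpoly A c)
    simpa using this
  have ext : ∀ (γ : Γ) (τ : Kb ≃ₐ[k] Kb), τ (φ b) = φ (γ • b) → ∀ c, τ (φ c) = φ (γ • c) := by
    intro γ τ h c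
    have := C1_ext ev b d hd hdC ((τ : Kb →+* Kb).comp φ)
      (φ.comp (MulSemiringAction.toRingHom Γ C γ)) (by intro a; simp [h₁])
      (by intro a; simp [h₁, hγalg]) (by simpa using h)
    simpa using congrArg (fun f => f c) this
  refine ⟨?_, ?_, ?_⟩
  · intro γ
    have e1 : minpoly k (φ (γ • b)) = minpoly k (φ b) := by
      have hm : ((minpoly A b).map ev).Monic := (minpoly.monic (hint.isIntegral b)).map ev
      rw [← minpoly.eq_of_irreducible_of_monic hirr (x := φ b) _ hm,
        ← minpoly.eq_of_irreducible_of_monic hirr (x := φ (γ • b)) _ hm]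
      · rw [root_of_aeval ev φ h₁, hγroot, map_zero]
      · rw [root_of_aeval ev φ h₁, minpoly.aeval, map_zero]
    obtain ⟨τ, hτ⟩ := (Normal.minpoly_eq_iff_mem_orbit Kb).1 e1
    exact ⟨τ, ext γ τ hτ⟩
  · intro τ
    cases nonempty_fintype Γ
    obtain ⟨q, hq⟩ := (Polynomial.mem_lifts _).1 (Algebra.IsInvariant.charpoly_mem_lifts A C Γ b)
    have hqb : aeval b q = 0 := by
      rw [aeval_def, ← eval_map, hq]; exact MulSemiringAction.eval_charpoly Γ b
    obtain ⟨r, hr⟩ := minpoly.isIntegrallyClosed_dvd (hint.isIntegral b) hqb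
    have h2 : aeval (τ (φ b)) (q.map ev) = 0 := by
      have : aeval (τ (φ b)) (q.map ev) = τ (aeval (φ b) (q.map ev)) := by
        exact aeval_algHom_apply (τ : Kb →ₐ[k] Kb) (φ b) (q.map ev)
      rw [this, root_of_aeval ev φ h₁, hqb, map_zero, map_zero]
    have h3 : (q.map ev).map (algebraMap k Kb) = (MulSemiringAction.charpoly Γ b).map φ := by
      rw [← hq, map_map, map_map]
      congr 1; ext a; simp [h₁]
    rw [aeval_def, ← eval_map, h3, MulSemiringAction.charpoly_eq, Polynomial.map_prod, eval_prod,
      Finset.prod_eq_zero_iff] at h2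
    obtain ⟨γ, -, hγ⟩ := h2
    refine ⟨γ, ext γ τ ?_⟩
    simpa [sub_eq_zero] using hγ
  · intro γ₁ γ₂ h
    by_contra hne
    set P := (minpoly A b0).map (algebraMap A C) with hP
    have r1 : P.IsRoot (γ₁ • b0) := by
      rw [IsRoot, hP, eval_map, ← aeval_def]; exact hγroot _ _
    have r2 : P.IsRoot (γ₂ • b0) := by
      rw [IsRoot, hP, eval_map, ← aeval_def]; exact hγroot _ _
    obtain ⟨Q, hQ⟩ := dvd_iff_isRoot.2 r1
    have r3 : Q.IsRoot (γ₂ • b0) := by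
      rw [hQ, IsRoot, eval_mul] at r2
      refine (mul_eq_zero.1 r2).resolve_left ?_
      simpa [sub_eq_zero] using fun h => hne h.symm
    obtain ⟨S, hS⟩ := dvd_iff_isRoot.2 r3
    have h3 : ((minpoly A b0).map ev).map (algebraMap k Kb) = P.map φ := by
      rw [hP, map_map, map_map]
      congr 1; ext a; simp [h₁]
    have hsq := (hsep0.map (f := algebraMap k Kb)).squarefree
    rw [h3, hQ, hS] at hsq
    have := hsq (X - Polynomial.C (φ (γ₂ • b0))) ⟨S.map φ, by
      simp only [Polynomial.map_mul, Polynomial.map_sub, map_X, map_C, h]; ring⟩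
    exact Polynomial.not_isUnit_X_sub_C _ this


theorem exists_phi {k A C Kb : Type} [Field k] [CommRing A] [CommRing C]
    [Algebra A C] [FaithfulSMul A C] [Algebra.IsIntegral A C] [Field Kb] [Algebra k Kb]
    [IsAlgClosed Kb] (ev : A →+* k) (hev : Function.Surjective ev) :
    ∃ φ : C →+* Kb, ∀ a, φ (algebraMap A C a) = algebraMap k Kb (ev a) := by
  have hm : (RingHom.ker ev).IsMaximal := RingHom.ker_isMaximal_of_surjective ev hev
  obtain ⟨Q, hQ, hQ2⟩ := Ideal.exists_ideal_over_maximal_of_isIntegral (S := C) (RingHom.ker ev)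
    (by rw [(RingHom.injective_iff_ker_eq_bot _).1 (FaithfulSMul.algebraMap_injective A C)]
        exact bot_le)
  let : Field (C ⧸ Q) := Ideal.Quotient.field Q
  let f : A →+* C ⧸ Q := (Ideal.Quotient.mk Q).comp (algebraMap A C)
  have hf : RingHom.ker ev ≤ RingHom.ker f := by
    intro a ha
    rw [← hQ2, Ideal.mem_comap] at ha
    rw [RingHom.mem_ker]
    exact Ideal.Quotient.eq_zero_iff_mem.2 ha
  let g : k →+* C ⧸ Q := RingHom.liftOfSurjective ev hev ⟨f, hf⟩
  have hg : ∀ a, g (ev a) = f a := fun a =>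
    RingHom.liftOfRightInverse_comp_apply ev _ (Function.rightInverse_surjInv hev) ⟨f, hf⟩ a
  let : Algebra k (C ⧸ Q) := g.toAlgebra
  have : Algebra.IsAlgebraic k (C ⧸ Q) := by
    refine ⟨fun x => ?_⟩
    obtain ⟨c, rfl⟩ := Ideal.Quotient.mk_surjective x
    obtain ⟨p, hp, hpc⟩ := Algebra.IsIntegral.isIntegral (R := A) c
    refine IsIntegral.isAlgebraic ⟨p.map ev, hp.map ev, ?_⟩
    have : (algebraMap k (C ⧸ Q)).comp ev = (Ideal.Quotient.mk Q).comp (algebraMap A C) := by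
      ext a; exact hg a
    rw [eval₂_map, this, ← hom_eval₂, hpc, map_zero]
  refine ⟨((IsAlgClosed.lift : (C ⧸ Q) →ₐ[k] Kb) : (C ⧸ Q) →+* Kb).comp (Ideal.Quotient.mk Q), ?_⟩
  intro a
  have : (Ideal.Quotient.mk Q) (algebraMap A C a) = algebraMap k (C ⧸ Q) (ev a) := (hg a).symm
  simp [this]

theorem exists_int_prim {A F Ω : Type} [CommRing A] [IsDomain A] [Field F] [Field Ω]
    [Algebra A F] [IsFractionRing A F] [Algebra F Ω] [Algebra A Ω] [IsScalarTower A F Ω]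
    [FiniteDimensional F Ω] [Algebra.IsSeparable F Ω] :
    ∃ b : Ω, IsIntegral A b ∧ IntermediateField.adjoin F {b} = ⊤ := by
  obtain ⟨θ, hθ⟩ := Field.exists_primitive_element F Ω
  have h1 : IsAlgebraic A θ := (IsFractionRing.isAlgebraic_iff A F Ω).2
    (Algebra.IsAlgebraic.isAlgebraic θ)
  obtain ⟨a, ha, hi⟩ := h1.exists_integral_multiple
  refine ⟨a • θ, hi, ?_⟩
  rw [eq_top_iff, ← hθ, IntermediateField.adjoin_simple_le_iff]
  have ha' : algebraMap A F a ≠ 0 := by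
    simpa using ha
  have h2 : (algebraMap A F a)⁻¹ • (a • θ) ∈ IntermediateField.adjoin F {a • θ} :=
    (IntermediateField.adjoin F {a • θ}).smul_mem (IntermediateField.mem_adjoin_simple_self F _)
  have : (algebraMap A F a)⁻¹ • (a • θ) = θ := by
    rw [← IsScalarTower.algebraMap_smul F a θ, inv_smul_smul₀ ha']
  rwa [this] at h2

theorem exists_disc {A F Ω : Type} [CommRing A] [IsDomain A] [IsIntegrallyClosed A]
    [Field F] [Field Ω]
    [Algebra A F] [IsFractionRing A F] [Algebra F Ω] [Algebra A Ω] [IsScalarTower A F Ω]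
    [FiniteDimensional F Ω] [Algebra.IsSeparable F Ω] (b : integralClosure A Ω)
    (hb : IntermediateField.adjoin F {(b : Ω)} = ⊤) :
    ∃ d : A, d ≠ 0 ∧ ∀ c : integralClosure A Ω, d • c ∈ Algebra.adjoin A {b} := by
  let pb : PowerBasis F Ω := (IntermediateField.adjoin.powerBasis
    (Algebra.IsIntegral.isIntegral (R := F) (b : Ω))).map
      ((IntermediateField.equivOfEq hb).trans IntermediateField.topEquiv)
  have hgen : pb.gen = (b : Ω) := by
    simp [pb]
  have hint : IsIntegral A pb.gen := by rw [hgen]; exact b.2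
  have h1 : IsIntegral A (Algebra.discr F pb.basis) := by
    apply Algebra.discr_isIntegral
    intro i
    rw [pb.basis_eq_pow]
    exact hint.pow _
  obtain ⟨d, hd⟩ := IsIntegrallyClosed.isIntegral_iff.1 h1
  refine ⟨d, ?_, ?_⟩
  · rintro rfl
    rw [map_zero] at hd
    exact Algebra.discr_not_zero_of_basis F pb.basis hd.symm
  · intro c
    have := Algebra.discr_mul_isIntegral_mem_adjoin F hint (z := (c : Ω)) c.2
    rw [← hd, IsScalarTower.algebraMap_smul, hgen] at this
    have h3 : Algebra.adjoin A {(b : Ω)} =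
        (Algebra.adjoin A {b}).map (integralClosure A Ω).val := by
      rw [AlgHom.map_adjoin]; simp
    rw [h3] at this
    obtain ⟨y, hy, hy2⟩ := this
    have : y = d • c := Subtype.ext hy2
    rwa [← this]

theorem frac_minpoly {A F Ω : Type} [CommRing A] [IsDomain A] [IsIntegrallyClosed A]
    [Field F] [Field Ω]
    [Algebra A F] [IsFractionRing A F] [Algebra F Ω] [Algebra A Ω] [IsScalarTower A F Ω]
    [FiniteDimensional F Ω] [Algebra.IsSeparable F Ω] (c : integralClosure A Ω) :
      Irreducible ((minpoly A c).map (algebraMap A (FractionRing A))) ∧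
      ((minpoly A c).map (algebraMap A (FractionRing A))).Separable := by
  have hc : IsIntegral A c := Algebra.IsIntegral.isIntegral c
  have hm := minpoly.isIntegrallyClosed_eq_field_fractions F Ω hc
  have hi : Irreducible (minpoly F (algebraMap (integralClosure A Ω) Ω c)) :=
    minpoly.irreducible (Algebra.IsIntegral.isIntegral _)
  have hs : (minpoly F (algebraMap (integralClosure A Ω) Ω c)).Separable := Algebra.IsSeparable.isSeparable F _
  rw [hm] at hi hs
  rw [← (minpoly.monic hc).irreducible_iff_irreducible_map_fraction_map] at hi
  refine ⟨((minpoly.monic hc).irreducible_iff_irreducible_map_fraction_map).1 hi, ?_⟩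
  have h2 := hs.map (f := ((FractionRing.algEquiv A F).symm : F →+* FractionRing A))
  have h3 : ((FractionRing.algEquiv A F).symm : F →+* FractionRing A).comp (algebraMap A F) =
      algebraMap A (FractionRing A) :=
    RingHom.ext fun a => (FractionRing.algEquiv A F).symm.commutes a
  rw [Polynomial.map_map, h3] at h2
  exact h2

theorem spec_abs {k A T : Type} [Field k] [CommRing A] [IsDomain A] [IsIntegrallyClosed A]
    (ev : T → A →+* k) (hk : ∀ (f : Fin 2 → A[X]) (g : A), g ≠ 0 →
      (∀ i, Irreducible ((f i).map (algebraMap A (FractionRing A))) ∧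
        ((f i).map (algebraMap A (FractionRing A))).Separable) →
      ∃ t, ev t g ≠ 0 ∧ ∀ i, Irreducible ((f i).map (ev t)) ∧ ((f i).map (ev t)).Separable)
    {F Ω : Type} [Field F] [Field Ω] [Algebra A F]
    [IsFractionRing A F] [Algebra F Ω] [Algebra A Ω]
    [IsScalarTower A F Ω] [FiniteDimensional F Ω] [IsGalois F Ω]
    (b0 : integralClosure A Ω) :
    ∃ t : T, ∀ φ : integralClosure A Ω →+* AlgebraicClosure k,
      (∀ a, φ (algebraMap _ _ a) = algebraMap k _ (ev t a)) →
      (∀ γ : Ω ≃ₐ[F] Ω, ∃ τ : AlgebraicClosure k ≃ₐ[k] AlgebraicClosure k,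
        ∀ c c' : integralClosure A Ω, (c' : Ω) = γ c → τ (φ c) = φ c') ∧
      (∀ τ : AlgebraicClosure k ≃ₐ[k] AlgebraicClosure k, ∃ γ : Ω ≃ₐ[F] Ω,
        ∀ c c' : integralClosure A Ω, (c' : Ω) = γ c → τ (φ c) = φ c') ∧
      (∀ γ₁ γ₂ : Ω ≃ₐ[F] Ω, ∀ c₁ c₂ : integralClosure A Ω,
        (c₁ : Ω) = γ₁ b0 → (c₂ : Ω) = γ₂ b0 → φ c₁ = φ c₂ → c₁ = c₂) ∧
      ∃ K : IntermediateField k (AlgebraicClosure k), FiniteDimensional k K ∧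
        Algebra.IsSeparable k K ∧ ∀ c, φ c ∈ K := by
  obtain ⟨b', hb', hbtop⟩ := exists_int_prim (A := A) (F := F) (Ω := Ω)
  let b : integralClosure A Ω := ⟨b', hb'⟩
  obtain ⟨d, hd, hdC⟩ := exists_disc (A := A) (F := F) (Ω := Ω) b hbtop
  have hfs : FaithfulSMul A (integralClosure A Ω) := by
    rw [faithfulSMul_iff_algebraMap_injective]
    have h1 : Function.Injective (algebraMap A Ω) := by
      rw [IsScalarTower.algebraMap_eq A F Ω]
      exact (algebraMap F Ω).injective.comp (IsFractionRing.injective A F)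
    intro x y h
    exact h1 (congrArg (Subtype.val) h)
  have hfr : IsFractionRing (integralClosure A Ω) Ω :=
    integralClosure.isFractionRing_of_finite_extension F Ω
  obtain ⟨t, hdt, ht⟩ := hk ![minpoly A b, minpoly A b0] d hd (by
    intro i
    fin_cases i
    · exact frac_minpoly (F := F) b
    · exact frac_minpoly (F := F) b0)
  refine ⟨t, fun φ hφ => ?_⟩
  let : MulSemiringAction (Ω ≃ₐ[F] Ω) (integralClosure A Ω) := IsIntegralClosure.MulSemiringAction A F Ω (integralClosure A Ω)
  have : Algebra.IsInvariant A (integralClosure A Ω) (Ω ≃ₐ[F] Ω) := Algebra.isInvariant_of_isGalois A F Ω (integralClosure A Ω)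
  have hsm : ∀ (γ : Ω ≃ₐ[F] Ω) (c : (integralClosure A Ω)), ((γ • c : (integralClosure A Ω)) : Ω) = γ c := fun γ c =>
    algebraMap_galRestrict_apply A γ c
  have hsm' : ∀ (γ : Ω ≃ₐ[F] Ω) (c c' : (integralClosure A Ω)), (c' : Ω) = γ c → γ • c = c' := fun γ c c' h =>
    Subtype.ext ((hsm γ c).trans h.symm)
  have : SMulCommClass (Ω ≃ₐ[F] Ω) A (integralClosure A Ω) := ⟨fun γ a c => by
    apply Subtype.ext
    rw [hsm]
    simp only [Subalgebra.coe_smul, hsm]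
    rw [← IsScalarTower.algebraMap_smul F a (c : Ω), map_smul, IsScalarTower.algebraMap_smul]⟩
  obtain ⟨p1, p2, p3⟩ := C1_core (Γ := Ω ≃ₐ[F] Ω) (ev t) b b0 d hdt hdC
    (ht 0).1 (ht 1).2 φ hφ
  refine ⟨?_, ?_, ?_, ?_⟩
  · intro γ
    obtain ⟨τ, hτ⟩ := p1 γ
    exact ⟨τ, fun c c' h => by rw [hτ, hsm' _ _ _ h]⟩
  · intro τ
    obtain ⟨γ, hγ⟩ := p2 τ
    exact ⟨γ, fun c c' h => by rw [hγ, hsm' _ _ _ h]⟩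
  · intro γ₁ γ₂ c₁ c₂ h1 h2 h
    rw [← hsm' _ _ _ h1, ← hsm' _ _ _ h2] at h ⊢
    exact p3 _ _ h
  · have hr : aeval (φ b) ((minpoly A b).map (ev t)) = 0 := by
      rw [root_of_aeval _ φ hφ, minpoly.aeval, map_zero]
    have hs : IsSeparable k (φ b) := by
      exact (ht 0).2.of_dvd (minpoly.dvd _ _ hr)
    refine ⟨IntermediateField.adjoin k {φ b}, ?_, ?_, ?_⟩
    · exact IntermediateField.adjoin.finiteDimensional hs.isIntegral
    · exact (IntermediateField.isSeparable_adjoin_simple_iff_isSeparable _ _).2 hs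
    · exact fun c => C1_fin _ b d hdt hdC φ hφ c

theorem spec_core {k : Type} [Field k] (hk : IsHilbertianField k) {n : ℕ} (hn : 0 < n)
    {F Ω : Type} [Field F] [Field Ω] [Algebra (MvPolynomial (Fin n) k) F]
    [IsFractionRing (MvPolynomial (Fin n) k) F] [Algebra F Ω] [Algebra (MvPolynomial (Fin n) k) Ω]
    [IsScalarTower (MvPolynomial (Fin n) k) F Ω] [FiniteDimensional F Ω] [IsGalois F Ω]
    (b0 : integralClosure (MvPolynomial (Fin n) k) Ω) :
    ∃ t : Fin n → k, ∀ φ : integralClosure (MvPolynomial (Fin n) k) Ω →+* AlgebraicClosure k,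
      (∀ a, φ (algebraMap _ _ a) = algebraMap k _ (MvPolynomial.eval t a)) →
      (∀ γ : Ω ≃ₐ[F] Ω, ∃ τ : AlgebraicClosure k ≃ₐ[k] AlgebraicClosure k,
        ∀ c c' : integralClosure (MvPolynomial (Fin n) k) Ω, (c' : Ω) = γ c → τ (φ c) = φ c') ∧
      (∀ τ : AlgebraicClosure k ≃ₐ[k] AlgebraicClosure k, ∃ γ : Ω ≃ₐ[F] Ω,
        ∀ c c' : integralClosure (MvPolynomial (Fin n) k) Ω, (c' : Ω) = γ c → τ (φ c) = φ c') ∧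
      (∀ γ₁ γ₂ : Ω ≃ₐ[F] Ω, ∀ c₁ c₂ : integralClosure (MvPolynomial (Fin n) k) Ω,
        (c₁ : Ω) = γ₁ b0 → (c₂ : Ω) = γ₂ b0 → φ c₁ = φ c₂ → c₁ = c₂) ∧
      ∃ K : IntermediateField k (AlgebraicClosure k), FiniteDimensional k K ∧
        Algebra.IsSeparable k K ∧ ∀ c, φ c ∈ K :=
  spec_abs MvPolynomial.eval (fun f g hg h => hk n hn 2 f g hg h) b0


theorem descent {k A F Ω0 Ω Kb : Type} [Field k] [CommRing A] [Field F] [Field Ω0] [Field Ω]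
    [Algebra A F] [Algebra F Ω0] [Algebra A Ω0] [IsScalarTower A F Ω0]
    [Algebra F Ω] [Algebra A Ω] [IsScalarTower A F Ω] [Algebra Ω0 Ω] [IsScalarTower F Ω0 Ω]
    [IsScalarTower A Ω0 Ω] [FiniteDimensional F Ω0] [FiniteDimensional F Ω] [IsGalois F Ω]
    [Field Kb] [Algebra k Kb]
    (b0 : integralClosure A Ω0) (hb0 : IntermediateField.adjoin F {(b0 : Ω0)} = ⊤)
    (j : integralClosure A Ω0 →+* integralClosure A Ω)
    (hj : ∀ c, (j c : Ω) = algebraMap Ω0 Ω c)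
    (φ : integralClosure A Ω →+* Kb)
    (p1 : ∀ γ : Ω ≃ₐ[F] Ω, ∃ τ : Kb ≃ₐ[k] Kb,
        ∀ c c' : integralClosure A Ω, (c' : Ω) = γ c → τ (φ c) = φ c')
    (p2 : ∀ τ : Kb ≃ₐ[k] Kb, ∃ γ : Ω ≃ₐ[F] Ω,
        ∀ c c' : integralClosure A Ω, (c' : Ω) = γ c → τ (φ c) = φ c')
    (p3 : ∀ γ₁ γ₂ : Ω ≃ₐ[F] Ω, ∀ c₁ c₂ : integralClosure A Ω,
        (c₁ : Ω) = γ₁ (j b0) → (c₂ : Ω) = γ₂ (j b0) → φ c₁ = φ c₂ → c₁ = c₂) :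
    (∀ g : Ω0 ≃ₐ[F] Ω0, ∃ τ : Kb ≃ₐ[k] Kb,
        ∀ c c' : integralClosure A Ω0, (c' : Ω0) = g c → τ (φ (j c)) = φ (j c')) ∧
    (∀ τ : Kb ≃ₐ[k] Kb, (∀ c, ∃ c', τ (φ (j c)) = φ (j c')) → ∃ g : Ω0 ≃ₐ[F] Ω0,
        ∀ c c' : integralClosure A Ω0, (c' : Ω0) = g c → τ (φ (j c)) = φ (j c')) ∧
    (∀ g₁ g₂ : Ω0 ≃ₐ[F] Ω0, (∀ c c₁ c₂ : integralClosure A Ω0,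
        (c₁ : Ω0) = g₁ c → (c₂ : Ω0) = g₂ c → φ (j c₁) = φ (j c₂)) → g₁ = g₂) := by
  have int0 : ∀ (g : Ω0 ≃ₐ[F] Ω0) (c : integralClosure A Ω0), IsIntegral A (g (c : Ω0)) :=
    fun g c => IsIntegral.map (g.toAlgHom.restrictScalars A) c.2
  have int1 : ∀ (g : Ω ≃ₐ[F] Ω) (c : integralClosure A Ω), IsIntegral A (g (c : Ω)) :=
    fun g c => IsIntegral.map (g.toAlgHom.restrictScalars A) c.2
  have hext : ∀ f₁ f₂ : Ω0 →ₐ[F] Ω, f₁ (b0 : Ω0) = f₂ (b0 : Ω0) → f₁ = f₂ := by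
    intro f₁ f₂ h
    have htop : Algebra.adjoin F {(b0 : Ω0)} = ⊤ := by
      rw [← IntermediateField.adjoin_simple_toSubalgebra_of_isAlgebraic
        (Algebra.IsAlgebraic.isAlgebraic (b0 : Ω0)), hb0, IntermediateField.top_toSubalgebra]
    exact AlgHom.ext_of_adjoin_eq_top htop (by rintro _ rfl; exact h)
  have hlift : ∀ g : Ω0 ≃ₐ[F] Ω0, ∀ c c' : integralClosure A Ω0, (c' : Ω0) = g c →
      (j c' : Ω) = g.liftNormal Ω (j c) := by
    intro g c c' h
    rw [hj, hj, AlgEquiv.liftNormal_commutes, h]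
  refine ⟨?_, ?_, ?_⟩
  · intro g
    obtain ⟨τ, hτ⟩ := p1 (g.liftNormal Ω)
    exact ⟨τ, fun c c' h => hτ _ _ (hlift g c c' h)⟩
  · intro τ hτ
    obtain ⟨γ, hγ⟩ := p2 τ
    have hgal : IsGalois Ω0 Ω := IsGalois.tower_top_of_isGalois F Ω0 Ω
    have hfin : FiniteDimensional Ω0 Ω := FiniteDimensional.right F Ω0 Ω
    have hmem : γ (j b0) ∈ Set.range (algebraMap Ω0 Ω) := by
      rw [IsGalois.mem_range_algebraMap_iff_fixed]
      intro h
      obtain ⟨τh, hτh⟩ := p1 (h.restrictScalars F)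
      have hfix : ∀ c, τh (φ (j c)) = φ (j c) := fun c => hτh _ _ (by
        rw [hj]; exact (h.commutes _).symm)
      let c1 : integralClosure A Ω := ⟨γ (j b0), int1 _ _⟩
      let c2 : integralClosure A Ω := ⟨(h.restrictScalars F) c1, int1 _ _⟩
      obtain ⟨c', hc'⟩ := hτ b0
      have e1 : φ c1 = φ (j c') := by rw [← hc']; exact (hγ _ _ rfl).symm
      have e2 : φ c2 = φ c1 := by
        rw [← hτh c1 c2 rfl, e1, hfix]
      exact congrArg Subtype.val (p3 (γ.trans (h.restrictScalars F)) γ c2 c1 rfl rfl e2)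
    let f : Ω0 →ₐ[F] Ω := (γ : Ω →ₐ[F] Ω).comp (IsScalarTower.toAlgHom F Ω0 Ω)
    have hrange : ∀ x, f x ∈ (IsScalarTower.toAlgHom F Ω0 Ω).range := by
      have hle : IntermediateField.adjoin F {(b0 : Ω0)} ≤
          (IsScalarTower.toAlgHom F Ω0 Ω).fieldRange.comap f := by
        rw [IntermediateField.adjoin_simple_le_iff]
        obtain ⟨y, hy⟩ := hmem
        refine ⟨y, ?_⟩
        change algebraMap Ω0 Ω y = γ (algebraMap Ω0 Ω b0)
        rw [hy, hj]
      rw [hb0] at hle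
      intro x
      exact hle (IntermediateField.mem_top (x := x))
    let e := AlgEquiv.ofInjective (IsScalarTower.toAlgHom F Ω0 Ω) (algebraMap Ω0 Ω).injective
    let g0 : Ω0 →ₐ[F] Ω0 := (e.symm : _ →ₐ[F] Ω0).comp (f.codRestrict _ hrange)
    have hg0 : ∀ x, algebraMap Ω0 Ω (g0 x) = γ (algebraMap Ω0 Ω x) := by
      intro x
      have : e (g0 x) = f.codRestrict _ hrange x := e.apply_symm_apply _
      exact congrArg Subtype.val this
    let g : Ω0 ≃ₐ[F] Ω0 := AlgEquiv.ofBijective g0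
      (Algebra.IsAlgebraic.algHom_bijective g0)
    refine ⟨g, fun c c' h => hγ _ _ ?_⟩
    rw [hj, hj, h]
    exact hg0 _
  · intro g₁ g₂ h
    have := p3 (g₁.liftNormal Ω) (g₂.liftNormal Ω) (j ⟨_, int0 g₁ b0⟩) (j ⟨_, int0 g₂ b0⟩)
      (hlift _ _ _ rfl) (hlift _ _ _ rfl) (h b0 _ _ rfl rfl)
    have h2 := congrArg Subtype.val this
    rw [hj, hj] at h2
    have h3 := hext ((IsScalarTower.toAlgHom F Ω0 Ω).comp g₁.toAlgHom)
      ((IsScalarTower.toAlgHom F Ω0 Ω).comp g₂.toAlgHom) h2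
    ext x
    exact (algebraMap Ω0 Ω).injective (DFunLike.congr_fun h3 x)


theorem finish_core {k B Kb G : Type} [Field k] [CommRing B] [Field Kb] [Algebra k Kb]
    [Normal k Kb] [Group G] (φ : B →+* Kb) (act : G → B → B)
    (hmul : ∀ g h c, act (g * h) c = act g (act h c))
    (hk : ∀ x : k, ∃ c, φ c = algebraMap k Kb x)
    (q1 : ∀ g, ∃ τ : Kb ≃ₐ[k] Kb, ∀ c, τ (φ c) = φ (act g c))
    (q2 : ∀ τ : Kb ≃ₐ[k] Kb, (∀ c, ∃ c', τ (φ c) = φ c') → ∃ g, ∀ c, τ (φ c) = φ (act g c))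
    (q3 : ∀ g₁ g₂, (∀ c, φ (act g₁ c) = φ (act g₂ c)) → g₁ = g₂)
    (K : IntermediateField k Kb) (hK1 : FiniteDimensional k K) (hK2 : Algebra.IsSeparable k K)
    (hK : ∀ c, φ c ∈ K)
    (L : IntermediateField k Kb) (α : G →* (L ≃ₐ[k] L)) (ι : L → B) (hι : ∀ l, φ (ι l) = l)
    (hact : ∀ g l, act g (ι l) = ι (α g l)) :
    ∃ (E : IntermediateField k Kb) (hLE : L ≤ E),
      FiniteDimensional k E ∧ Algebra.IsSeparable k E ∧
      ∃ β : (E ≃ₐ[k] E) ≃* G,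
        ∀ (σ : E ≃ₐ[k] E) (x : Kb) (hx : x ∈ L),
          ((σ ⟨x, hLE hx⟩ : E) : Kb) = ((α (β σ) ⟨x, hx⟩ : L) : Kb) := by
  let S : Subalgebra k Kb :=
    { φ.range with
      algebraMap_mem' := fun x => hk x }
  have hSalg : Algebra.IsAlgebraic k S :=
    Algebra.IsAlgebraic.of_injective S.val Subtype.val_injective
  let E : IntermediateField k Kb := Algebra.IsAlgebraic.toIntermediateField S
  have hLE : L ≤ E := fun x hx => ⟨ι ⟨x, hx⟩, hι _⟩
  have hEK : E ≤ K := by rintro x ⟨c, rfl⟩; exact hK c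
  have hfin : FiniteDimensional k E :=
    FiniteDimensional.of_injective (IntermediateField.inclusion hEK).toLinearMap
      (IntermediateField.inclusion hEK).injective
  have hsep : Algebra.IsSeparable k E :=
    Algebra.IsSeparable.of_algHom k K (IntermediateField.inclusion hEK)
  choose τ hτ using q1
  have hmem : ∀ g (x : E), τ g x ∈ E := by
    rintro g ⟨_, c, rfl⟩
    exact ⟨act g c, (hτ g c).symm⟩
  let ψ0 : G → (E →ₐ[k] E) := fun g =>
    (((τ g : Kb ≃ₐ[k] Kb) : Kb →ₐ[k] Kb).comp E.val).codRestrict E.toSubalgebra (hmem g)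
  let ψ1 : G → (E ≃ₐ[k] E) := fun g =>
    AlgEquiv.ofBijective (ψ0 g) (Algebra.IsAlgebraic.algHom_bijective _)
  have hψ : ∀ g (x : E), ((ψ1 g x : E) : Kb) = τ g x := fun g x => rfl
  let ψ : G →* (E ≃ₐ[k] E) := MonoidHom.mk' ψ1 (by
    intro g h
    ext ⟨x, c, rfl⟩
    rw [AlgEquiv.mul_apply, hψ, hψ, hψ]
    change τ _ (φ c) = τ _ (τ _ (φ c))
    rw [hτ, hτ, hτ, hmul])
  have hb : Function.Bijective ψ := by
    constructor
    · intro g h hgh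
      refine q3 _ _ fun c => ?_
      rw [← hτ, ← hτ]
      have := DFunLike.congr_fun hgh (⟨φ c, c, rfl⟩ : E)
      exact congrArg Subtype.val this
    · intro σ
      have hc : ∀ x : E, σ.liftNormal Kb (x : Kb) = (σ x : Kb) := fun x =>
        AlgEquiv.liftNormal_commutes σ Kb x
      obtain ⟨g, hg⟩ := q2 (σ.liftNormal Kb) (by
        intro c
        obtain ⟨c', hc'⟩ := (σ (⟨φ c, c, rfl⟩ : E)).2
        exact ⟨c', (hc ⟨φ c, c, rfl⟩).trans hc'.symm⟩)
      refine ⟨g, ?_⟩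
      ext ⟨x, c, rfl⟩
      refine Eq.trans ?_ (hc _)
      change τ g (φ c) = _
      rw [hτ]
      exact (hg c).symm
  refine ⟨E, hLE, hfin, hsep, (MulEquiv.ofBijective ψ hb).symm, ?_⟩
  intro σ x hx
  obtain ⟨g, rfl⟩ := (MulEquiv.ofBijective ψ hb).surjective σ
  rw [MulEquiv.symm_apply_apply]
  change τ g x = _
  have h1 := hι ⟨x, hx⟩
  have h2 := hτ g (ι ⟨x, hx⟩)
  rw [h1, hact, hι] at h2
  exact h2


theorem exists_galois {F Ω0 : Type} [Field F] [Field Ω0] [Algebra F Ω0] [FiniteDimensional F Ω0]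
    [Algebra.IsSeparable F Ω0] : ∃ (Ω : Type) (_ : Field Ω) (_ : Algebra F Ω) (_ : Algebra Ω0 Ω),
      IsScalarTower F Ω0 Ω ∧ FiniteDimensional F Ω ∧ IsGalois F Ω := by
  let f : Ω0 →ₐ[F] SeparableClosure F := IsSepClosed.lift
  let _ : Algebra Ω0 (SeparableClosure F) := f.toRingHom.toAlgebra
  have : IsScalarTower F Ω0 (SeparableClosure F) :=
    IsScalarTower.of_algebraMap_eq fun x => (f.commutes x).symm
  exact ⟨IntermediateField.normalClosure F Ω0 (SeparableClosure F), inferInstance, inferInstance, inferInstance,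
    inferInstance, inferInstance, inferInstance⟩

theorem spec_emb {k A F Ω0 Ω Kb G : Type} [Field k] [CommRing A] [Algebra k A] [Field F] [Field Ω0]
    [Field Ω]
    [Algebra A F] [Algebra F Ω0] [Algebra A Ω0] [IsScalarTower A F Ω0]
    [Algebra F Ω] [Algebra A Ω] [IsScalarTower A F Ω] [Algebra Ω0 Ω] [IsScalarTower F Ω0 Ω]
    [IsScalarTower A Ω0 Ω] [FiniteDimensional F Ω0] [FiniteDimensional F Ω] [IsGalois F Ω]
    [Field Kb] [Algebra k Kb] [Normal k Kb] [IsAlgClosed Kb] [FaithfulSMul A (integralClosure A Ω)]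
    [Group G]
    (b0 : integralClosure A Ω0) (hb0 : IntermediateField.adjoin F {(b0 : Ω0)} = ⊤)
    (j : integralClosure A Ω0 →+* integralClosure A Ω)
    (hj : ∀ c, (j c : Ω) = algebraMap Ω0 Ω c)
    (ev : A →ₐ[k] k)
    (H : ∀ φ : integralClosure A Ω →+* Kb,
     (∀ a, φ (algebraMap _ _ a) = algebraMap k _ (ev a)) →
     (∀ γ : Ω ≃ₐ[F] Ω, ∃ τ : Kb ≃ₐ[k] Kb,
        ∀ c c' : integralClosure A Ω, (c' : Ω) = γ c → τ (φ c) = φ c') ∧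
     (∀ τ : Kb ≃ₐ[k] Kb, ∃ γ : Ω ≃ₐ[F] Ω,
        ∀ c c' : integralClosure A Ω, (c' : Ω) = γ c → τ (φ c) = φ c') ∧
     (∀ γ₁ γ₂ : Ω ≃ₐ[F] Ω, ∀ c₁ c₂ : integralClosure A Ω,
        (c₁ : Ω) = γ₁ (j b0) → (c₂ : Ω) = γ₂ (j b0) → φ c₁ = φ c₂ → c₁ = c₂) ∧
     ∃ K : IntermediateField k Kb, FiniteDimensional k K ∧
        Algebra.IsSeparable k K ∧ ∀ c, φ c ∈ K)
    (L : IntermediateField k Kb) (α : G →* (L ≃ₐ[k] L)) (γ : G ≃* (Ω0 ≃ₐ[F] Ω0))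
    (ι : L →+* Ω0) (hι : ∀ x : k, ι (algebraMap k L x) = algebraMap A Ω0 (algebraMap k A x))
    (hγ : ∀ g l, γ g (ι l) = ι (α g l)) :
    ∃ (E : IntermediateField k Kb) (hLE : L ≤ E),
      FiniteDimensional k E ∧ Algebra.IsSeparable k E ∧
      ∃ β : (E ≃ₐ[k] E) ≃* G,
        ∀ (σ : E ≃ₐ[k] E) (x : Kb) (hx : x ∈ L),
          ((σ ⟨x, hLE hx⟩ : E) : Kb) = ((α (β σ) ⟨x, hx⟩ : L) : Kb) := by
  have hLint : ∀ l : L, IsIntegral A (ι l) := by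
    intro l
    obtain ⟨p, hp, hpl⟩ := (Algebra.IsIntegral.isIntegral (R := k) l)
    refine ⟨p.map (algebraMap k A), hp.map _, ?_⟩
    have : (algebraMap A Ω0).comp (algebraMap k A) = ι.comp (algebraMap k L) := by
      ext x; exact (hι x).symm
    rw [eval₂_map, this, ← hom_eval₂, hpl, map_zero]
  let ι' : L →+* integralClosure A Ω0 := ι.codRestrict (integralClosure A Ω0) hLint
  have hι' : ∀ x : k, ι' (algebraMap k L x) = algebraMap A _ (algebraMap k A x) :=
    fun x => Subtype.ext (hι x)
  have hjA : ∀ a, j (algebraMap A _ a) = algebraMap A _ a := by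
    intro a
    apply Subtype.ext
    rw [hj]
    exact (IsScalarTower.algebraMap_apply A Ω0 Ω a).symm
  have hevs : Function.Surjective (ev : A →+* k) := fun x => ⟨algebraMap k A x, ev.commutes x⟩
  obtain ⟨φ1, hφ1⟩ := exists_phi (Kb := Kb) (C := integralClosure A Ω) (ev : A →+* k) hevs
  let f : L →ₐ[k] Kb := { (φ1.comp (j.comp ι')) with
    commutes' := fun x => by
      change φ1 (j (ι' (algebraMap k L x))) = _
      rw [hι', hjA, hφ1]
      exact congrArg _ (ev.commutes x) }
  let e : L ≃ₐ[k] f.fieldRange := AlgEquiv.ofInjectiveField f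
  let τ := e.symm.liftNormal Kb
  have hτ : ∀ l, τ (f l) = l := by
    intro l
    have := AlgEquiv.liftNormal_commutes e.symm Kb (e l)
    rw [AlgEquiv.symm_apply_apply] at this
    exact this
  let φ : integralClosure A Ω →+* Kb := (τ : Kb →+* Kb).comp φ1
  have hφ : ∀ a, φ (algebraMap _ _ a) = algebraMap k _ (ev a) := by
    intro a
    change τ (φ1 _) = _
    rw [hφ1]; exact τ.commutes _
  obtain ⟨p1, p2, p3, K, hK1, hK2, hK⟩ := H φ hφ
  obtain ⟨q1, q2, q3⟩ := descent b0 hb0 j hj φ p1 p2 p3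
  have int0 : ∀ (g : Ω0 ≃ₐ[F] Ω0) (c : integralClosure A Ω0), IsIntegral A (g (c : Ω0)) :=
    fun g c => IsIntegral.map (g.toAlgHom.restrictScalars A) c.2
  refine finish_core (φ.comp j) (fun g c => ⟨γ g c, int0 _ c⟩) ?_ ?_ ?_ ?_ ?_ K hK1 hK2
    (fun c => hK _) L α ι' ?_ ?_
  · intro g h c
    apply Subtype.ext
    simp
  · intro x
    refine ⟨algebraMap A _ (algebraMap k A x), ?_⟩
    change φ (j _) = _
    rw [hjA, hφ]; exact congrArg _ (ev.commutes x)
  · intro g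
    obtain ⟨τ, hτ⟩ := q1 (γ g)
    exact ⟨τ, fun c => hτ _ _ rfl⟩
  · intro τ h
    obtain ⟨g, hg⟩ := q2 τ h
    obtain ⟨g, rfl⟩ := γ.surjective g
    exact ⟨g, fun c => hg _ _ rfl⟩
  · intro g₁ g₂ h
    apply γ.injective
    apply q3
    intro c c₁ c₂ h1 h2
    have e1 : c₁ = ⟨γ g₁ c, int0 _ c⟩ := Subtype.ext h1
    have e2 : c₂ = ⟨γ g₂ c, int0 _ c⟩ := Subtype.ext h2
    rw [e1, e2]
    exact h c
  · intro l
    exact hτ l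
  · intro g l
    exact Subtype.ext (hγ g l)

theorem spec_final {k F Ω0 G : Type} [Field k] (hk : IsHilbertianField k) {n : ℕ} (hn : 0 < n)
    [Field F] [Field Ω0] [Algebra (MvPolynomial (Fin n) k) F]
    [IsFractionRing (MvPolynomial (Fin n) k) F] [Algebra F Ω0] [Algebra (MvPolynomial (Fin n) k) Ω0]
    [IsScalarTower (MvPolynomial (Fin n) k) F Ω0] [FiniteDimensional F Ω0]
    [Algebra.IsSeparable F Ω0] [Group G]
    (L : IntermediateField k (AlgebraicClosure k)) (α : G →* (L ≃ₐ[k] L))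
    (γ : G ≃* (Ω0 ≃ₐ[F] Ω0)) (ι : L →+* Ω0)
    (hι : ∀ x : k, ι (algebraMap k L x) = algebraMap (MvPolynomial (Fin n) k) Ω0 (MvPolynomial.C x))
    (hγ : ∀ g l, γ g (ι l) = ι (α g l)) :
    ∃ (E : IntermediateField k (AlgebraicClosure k)) (hLE : L ≤ E),
      FiniteDimensional k E ∧ Algebra.IsSeparable k E ∧
      ∃ β : (E ≃ₐ[k] E) ≃* G,
        ∀ (σ : E ≃ₐ[k] E) (x : AlgebraicClosure k) (hx : x ∈ L),
          ((σ ⟨x, hLE hx⟩ : E) : AlgebraicClosure k) =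
            ((α (β σ) ⟨x, hx⟩ : L) : AlgebraicClosure k) := by
  obtain ⟨Ω, i1, i2, i3, i4, i5, i6⟩ := exists_galois (F := F) (Ω0 := Ω0)
  let i7 : Algebra (MvPolynomial (Fin n) k) Ω :=
    ((algebraMap Ω0 Ω).comp (algebraMap (MvPolynomial (Fin n) k) Ω0)).toAlgebra
  have i8 : IsScalarTower (MvPolynomial (Fin n) k) Ω0 Ω :=
    IsScalarTower.of_algebraMap_eq fun x => rfl
  have i9 : IsScalarTower (MvPolynomial (Fin n) k) F Ω :=
    IsScalarTower.of_algebraMap_eq fun x => by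
      rw [IsScalarTower.algebraMap_apply F Ω0 Ω, ← IsScalarTower.algebraMap_apply _ F Ω0]
      rfl
  obtain ⟨b0, hb0, htop⟩ := exists_int_prim (A := MvPolynomial (Fin n) k) (F := F) (Ω := Ω0)
  let j : integralClosure (MvPolynomial (Fin n) k) Ω0 →+*
      integralClosure (MvPolynomial (Fin n) k) Ω :=
    ((algebraMap Ω0 Ω).comp (integralClosure (MvPolynomial (Fin n) k) Ω0).val.toRingHom).codRestrict
      (integralClosure (MvPolynomial (Fin n) k) Ω)
      (fun c => IsIntegral.map (IsScalarTower.toAlgHom (MvPolynomial (Fin n) k) Ω0 Ω) c.2)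
  have i10 : FaithfulSMul (MvPolynomial (Fin n) k)
      (integralClosure (MvPolynomial (Fin n) k) Ω) := by
    rw [faithfulSMul_iff_algebraMap_injective]
    have h1 : Function.Injective (algebraMap (MvPolynomial (Fin n) k) Ω) := by
      rw [IsScalarTower.algebraMap_eq _ F Ω]
      exact (algebraMap F Ω).injective.comp (IsFractionRing.injective _ F)
    intro x y h
    exact h1 (congrArg (Subtype.val) h)
  obtain ⟨t, ht⟩ := spec_core hk hn (F := F) (Ω := Ω) (j ⟨b0, hb0⟩)
  exact spec_emb (F := F) ⟨b0, hb0⟩ htop j (fun c => rfl) (MvPolynomial.aeval t : _ →ₐ[k] k)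
    (fun φ hφ => ht φ hφ) L α γ ι hι hγ


theorem lin_rigid {E : Type} [Field E] (ω ω' : E) (h0 : ω ≠ 0) (h1 : ω ≠ 1)
    (p : E[X])
    (h : p * (p - 1) ^ 2 * (p - C ω') ^ 3 = X * (X - 1) ^ 2 * (X - C ω) ^ 3) :
    p = X ∧ ω' = ω := by
  classical
  have hdeg : p.natDegree = 1 := by
    have e1 : (p - 1).natDegree = p.natDegree := natDegree_sub_C (a := (1 : E))
    have e2 : (p - C ω').natDegree = p.natDegree := natDegree_sub_C
    have hr : (X * (X - 1) ^ 2 * (X - C ω) ^ 3 : E[X]) ≠ 0 := by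
      have : (X - 1 : E[X]) ≠ 0 := X_sub_C_ne_zero (1 : E)
      exact mul_ne_zero (mul_ne_zero X_ne_zero (pow_ne_zero _ this))
        (pow_ne_zero _ (X_sub_C_ne_zero _))
    have hl : p * (p - 1) ^ 2 * (p - C ω') ^ 3 ≠ 0 := by rw [h]; exact hr
    have n1 : (X - 1 : E[X]).natDegree = 1 := natDegree_X_sub_C (1 : E)
    have h2 := congrArg natDegree h
    have a1 := left_ne_zero_of_mul hl
    have b1 := left_ne_zero_of_mul hr
    rw [natDegree_mul a1 (right_ne_zero_of_mul hl), natDegree_mul (left_ne_zero_of_mul a1)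
      (right_ne_zero_of_mul a1), natDegree_pow, natDegree_pow, e1, e2,
      natDegree_mul b1 (right_ne_zero_of_mul hr), natDegree_mul (left_ne_zero_of_mul b1)
      (right_ne_zero_of_mul b1), natDegree_pow, natDegree_pow, n1, natDegree_X,
      natDegree_X_sub_C] at h2
    omega
  obtain ⟨a, ha, b, rfl⟩ := natDegree_eq_one.1 hdeg
  have hf : ∀ z : E, C a * X + C b - C z = C a * (X - C ((z - b) / a)) := by
    intro z
    rw [mul_sub, ← C_mul, mul_div_cancel₀ _ ha, C_sub]; ring
  have hz0 : C a * X + C b = C a * (X - C ((0 - b) / a)) := by rw [← hf]; simp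
  have hz1 : C a * X + C b - 1 = C a * (X - C ((1 - b) / a)) := by rw [← hf]; simp
  rw [hz1, hf ω', hz0] at h
  have hL : C a * (X - C ((0 - b) / a)) * (C a * (X - C ((1 - b) / a))) ^ 2 *
      (C a * (X - C ((ω' - b) / a))) ^ 3 = C (a ^ 6) *
      (({(0 - b) / a} + 2 • {(1 - b) / a} + 3 • {(ω' - b) / a} : Multiset E).map
        (fun r => X - C r)).prod := by
    simp [Multiset.map_nsmul, Multiset.prod_nsmul]; ring
  have hR : (X * (X - 1) ^ 2 * (X - C ω) ^ 3 : E[X]) =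
      (({0} + 2 • {1} + 3 • {ω} : Multiset E).map (fun r => X - C r)).prod := by
    simp [Multiset.map_nsmul, Multiset.prod_nsmul]; ring
  rw [hL, hR] at h
  have h3 := congrArg roots h
  rw [roots_C_mul _ (pow_ne_zero _ ha), roots_multiset_prod_X_sub_C,
    roots_multiset_prod_X_sub_C] at h3
  have d1 : (0 - b) / a ≠ (1 - b) / a := by
    intro h; rw [div_left_inj' ha] at h; exact zero_ne_one (sub_left_injective h)
  have c0 := congrArg (Multiset.count 0) h3
  have c1 := congrArg (Multiset.count 1) h3
  have c2 := congrArg (Multiset.count ω) h3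
  simp only [Multiset.count_add, Multiset.count_nsmul, Multiset.count_singleton] at c0 c1 c2
  have r0 : 0 = (0 - b) / a := by grind
  have r1 : 1 = (1 - b) / a := by grind
  have r2 : ω = (ω' - b) / a := by grind
  have hb : b = 0 := by field_simp at r0; simpa using r0
  subst hb
  have ha1 : a = 1 := by field_simp at r1; simpa using r1
  subst ha1
  refine ⟨by simp, by simpa using r2.symm⟩


theorem sep_of_deriv {M Ω : Type} [Field M] [Field Ω] [Algebra M Ω] (x : Ω) (q : M[X])
    (h0 : aeval x q = 0) (h1 : aeval x (derivative q) ≠ 0) : IsSeparable M x := by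
  have hq : q ≠ 0 := by rintro rfl; simp at h1
  have hi : IsIntegral M x := IsAlgebraic.isIntegral ⟨q, hq, h0⟩
  rw [IsSeparable, separable_iff_derivative_ne_zero (minpoly.irreducible hi)]
  intro hd
  obtain ⟨r, rfl⟩ := minpoly.dvd M x h0
  apply h1
  simp [derivative_mul, hd]

theorem ratfunc_sep {k1 E : Type} [Field k1] [Field E] [Algebra k1 E] [FiniteDimensional k1 E]
    [Algebra.IsSeparable k1 E] (u : E[X]) (hu : derivative u ≠ 0) :
    FiniteDimensional (IntermediateField.adjoin k1 {algebraMap E[X] (RatFunc E) u}) (RatFunc E) ∧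
    Algebra.IsSeparable (IntermediateField.adjoin k1 {algebraMap E[X] (RatFunc E) u})
      (RatFunc E) := by
  set t := algebraMap E[X] (RatFunc E) u with ht
  set F1 := IntermediateField.adjoin k1 {t} with hF1
  obtain ⟨θ, hθ⟩ := Field.exists_primitive_element k1 E
  set M := IntermediateField.adjoin F1 {algebraMap E (RatFunc E) θ} with hM
  have hsθ : IsSeparable F1 (algebraMap E (RatFunc E) θ) := by
    have h1 : IsSeparable k1 (algebraMap E (RatFunc E) θ) :=
      IsSeparable.map (IsScalarTower.toAlgHom k1 E (RatFunc E)) (algebraMap E (RatFunc E)).injective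
        (Algebra.IsSeparable.isSeparable k1 θ)
    exact h1.tower_top F1
  have f1 : FiniteDimensional F1 M := IntermediateField.adjoin.finiteDimensional hsθ.isIntegral
  have s1 : Algebra.IsSeparable F1 M :=
    (IntermediateField.isSeparable_adjoin_simple_iff_isSeparable _ _).2 hsθ
  have hEM : ∀ e : E, algebraMap E (RatFunc E) e ∈ M := by
    have hle : IntermediateField.adjoin k1 {θ} ≤
        (M.restrictScalars k1).comap (IsScalarTower.toAlgHom k1 E (RatFunc E)) := by
      rw [IntermediateField.adjoin_simple_le_iff]
      exact IntermediateField.mem_adjoin_simple_self F1 _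
    rw [hθ] at hle
    intro e
    exact hle (IntermediateField.mem_top (x := e))
  let jj : E →+* M := (algebraMap E (RatFunc E)).codRestrict M hEM
  have htF : t ∈ F1 := IntermediateField.mem_adjoin_simple_self k1 _
  let tM : M := algebraMap F1 M ⟨t, htF⟩
  have hae : ∀ p : E[X], aeval (RatFunc.X : RatFunc E) (p.map jj) = algebraMap E[X] (RatFunc E) p := by
    intro p
    rw [← RatFunc.aeval_X_left_eq_algebraMap, aeval_def, aeval_def, eval₂_map]
    rfl
  have hsx : IsSeparable M (RatFunc.X : RatFunc E) := by
    apply sep_of_deriv _ (u.map jj - Polynomial.C tM)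
    · rw [map_sub, hae, aeval_C]
      exact sub_self _
    · rw [derivative_sub, derivative_C, sub_zero, derivative_map, hae]
      simpa using hu
  have htop : IntermediateField.adjoin M {(RatFunc.X : RatFunc E)} = ⊤ := by
    rw [eq_top_iff]
    intro z _
    have h1 : z ∈ IntermediateField.adjoin E {(RatFunc.X : RatFunc E)} := by
      rw [RatFunc.adjoin_X]; exact IntermediateField.mem_top
    induction h1 using IntermediateField.adjoin_induction with
    | mem x hx => exact IntermediateField.subset_adjoin _ _ hx
    | algebraMap r =>
      exact algebraMap_mem (IntermediateField.adjoin M {(RatFunc.X : RatFunc E)}) (jj r)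
    | add x y _ _ hx hy => exact add_mem (hx trivial) (hy trivial)
    | inv x _ hx => exact inv_mem (hx trivial)
    | mul x y _ _ hx hy => exact mul_mem (hx trivial) (hy trivial)
  have f2 : FiniteDimensional M (IntermediateField.adjoin M {(RatFunc.X : RatFunc E)}) :=
    IntermediateField.adjoin.finiteDimensional hsx.isIntegral
  have s2 : Algebra.IsSeparable M (IntermediateField.adjoin M {(RatFunc.X : RatFunc E)}) :=
    (IntermediateField.isSeparable_adjoin_simple_iff_isSeparable _ _).2 hsx
  rw [htop] at f2 s2
  have f3 : FiniteDimensional M (RatFunc E) :=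
    Module.Finite.equiv (IntermediateField.topEquiv (F := M) (E := RatFunc E)).toLinearEquiv
  have s3 : Algebra.IsSeparable M (RatFunc E) :=
    Algebra.IsSeparable.of_algHom M _
      (IntermediateField.topEquiv (F := M) (E := RatFunc E)).symm.toAlgHom
  exact ⟨FiniteDimensional.trans F1 M (RatFunc E), Algebra.IsSeparable.trans F1 M (RatFunc E)⟩


theorem ratfunc_rigid {k1 E : Type} [Field k1] [Field E] [Algebra k1 E] [FiniteDimensional k1 E]
    (ω : E) (h0 : ω ≠ 0) (h1 : ω ≠ 1) (σ : RatFunc E →ₐ[k1] RatFunc E)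
    (hσ : σ (algebraMap E[X] (RatFunc E) (X * (X - 1) ^ 2 * (X - C ω) ^ 3)) =
      algebraMap E[X] (RatFunc E) (X * (X - 1) ^ 2 * (X - C ω) ^ 3)) :
    σ (algebraMap E[X] (RatFunc E) X) = algebraMap E[X] (RatFunc E) X ∧
      ∃ s : E ≃ₐ[k1] E, s ω = ω ∧ ∀ e, σ (algebraMap E (RatFunc E) e) = algebraMap E _ (s e) := by
  have hconst : ∀ e : E, ∃ e' : E, σ (algebraMap E (RatFunc E) e) = algebraMap E (RatFunc E) e' := by
    intro e
    have h1 : IsAlgebraic k1 (σ (algebraMap E (RatFunc E) e)) := by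
      have : IsAlgebraic k1 e := Algebra.IsAlgebraic.isAlgebraic e
      exact (this.algHom (IsScalarTower.toAlgHom k1 E (RatFunc E))).algHom σ
    have h2 : IsAlgebraic E (σ (algebraMap E (RatFunc E) e)) := h1.tower_top E
    by_contra hne
    exact RatFunc.transcendental_of_ne_C _ hne h2
  have hinj : Function.Injective (algebraMap E (RatFunc E)) := (algebraMap E (RatFunc E)).injective
  choose s hs using hconst
  let s0 : E →ₐ[k1] E :=
    { toFun := s
      map_one' := hinj (by rw [← hs, map_one, map_one])
      map_mul' := fun x y => hinj (by rw [← hs, map_mul, map_mul, map_mul, hs, hs])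
      map_zero' := hinj (by rw [← hs, map_zero, map_zero])
      map_add' := fun x y => hinj (by rw [← hs, map_add, map_add, map_add, hs, hs])
      commutes' := fun x => hinj (by
        rw [← hs, ← IsScalarTower.algebraMap_apply, σ.commutes]) }
  let s1 : E ≃ₐ[k1] E := AlgEquiv.ofBijective s0 (Algebra.IsAlgebraic.algHom_bijective _)
  set x := algebraMap E[X] (RatFunc E) X with hx
  have hC : ∀ e, algebraMap E[X] (RatFunc E) (C e) = algebraMap E (RatFunc E) e := fun e =>
    (IsScalarTower.algebraMap_apply E E[X] (RatFunc E) e).symm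
  have hσ2 : σ x * (σ x - 1) ^ 2 * (σ x - algebraMap E _ (s ω)) ^ 3 =
      algebraMap E[X] (RatFunc E) (X * (X - 1) ^ 2 * (X - C ω) ^ 3) := by
    rw [← hσ]
    simp only [map_mul, map_pow, map_sub, map_one, hC, hs, ← hx]
  have hint : IsIntegral E[X] (σ x) := by
    refine ⟨X * (X - 1) ^ 2 * (X - C (C (s ω))) ^ 3 - C (X * (X - 1) ^ 2 * (X - C ω) ^ 3), ?_, ?_⟩
    · have m : (X * (X - 1) ^ 2 * (X - C (C (s ω))) ^ 3 : E[X][X]).Monic := by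
        have : (X - 1 : E[X][X]).Monic := monic_X_sub_C (1 : E[X])
        exact (monic_X.mul (this.pow 2)).mul ((monic_X_sub_C _).pow 3)
      refine m.sub_of_left ?_
      refine lt_of_le_of_lt degree_C_le ?_
      have : (X - 1 : E[X][X]).degree = 1 := degree_X_sub_C (1 : E[X])
      rw [degree_mul, degree_mul, degree_pow, degree_pow, this, degree_X, degree_X_sub_C]
      norm_num
    · rw [← aeval_def]
      simp only [map_sub, map_mul, map_pow, aeval_X, aeval_C, map_one, hC]
      rw [hσ2]
      simp only [map_sub, map_mul, map_pow, map_one, hC, sub_self]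
  obtain ⟨p, hp⟩ := IsIntegrallyClosed.isIntegral_iff.1 hint
  have hpe : p * (p - 1) ^ 2 * (p - C (s ω)) ^ 3 = X * (X - 1) ^ 2 * (X - C ω) ^ 3 := by
    apply IsFractionRing.injective E[X] (RatFunc E)
    rw [← hσ2, ← hp]
    simp only [map_mul, map_pow, map_sub, map_one, hC]
  obtain ⟨rfl, hω⟩ := lin_rigid ω (s ω) h0 h1 p hpe
  exact ⟨hp.symm, s1, hω, hs⟩

theorem exists_omega {k1 E G : Type} [Field k1] [Field E] [Algebra k1 E] [FiniteDimensional k1 E]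
    [Algebra.IsSeparable k1 E] [Infinite k1] [Group G] (γ : G →* (E ≃ₐ[k1] E)) :
    ∃ ω : E, ω ≠ 0 ∧ ω ≠ 1 ∧ (∀ g, γ g ω = ω) ∧ ∀ s : E ≃ₐ[k1] E, s ω = ω → ∃ g, γ g = s := by
  set M := IntermediateField.fixedField γ.range with hM
  obtain ⟨θ, hθ⟩ := Field.exists_primitive_element k1 M
  have hc : ∃ c : k1, algebraMap k1 M c + θ ∉ ({0, 1} : Set M) := by
    have hinf : (Set.range fun c : k1 => algebraMap k1 M c + θ).Infinite := by
      apply Set.infinite_range_of_injective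
      intro a b h
      exact (algebraMap k1 M).injective (add_right_cancel h)
    obtain ⟨_, ⟨c, rfl⟩, hc⟩ := (hinf.sdiff (Set.toFinite ({0, 1} : Set M))).nonempty
    exact ⟨c, hc⟩
  obtain ⟨c, hc⟩ := hc
  simp only [Set.mem_insert_iff, Set.mem_singleton_iff, not_or] at hc
  refine ⟨(algebraMap k1 M c + θ : M), ?_, ?_, ?_, ?_⟩
  · intro h; exact hc.1 (Subtype.ext h)
  · intro h; exact hc.2 (Subtype.ext h)
  · intro g
    exact (IntermediateField.mem_fixedField_iff _ _).1 (algebraMap k1 M c + θ).2 _ ⟨g, rfl⟩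
  · intro s hs
    have hsθ : s (θ : E) = θ := by
      have : s (algebraMap k1 E c + θ) = algebraMap k1 E c + θ := hs
      rw [map_add, s.commutes] at this
      exact add_left_cancel this
    have hsM : ∀ m : M, s m = m := by
      intro m
      have hm : m ∈ IntermediateField.adjoin k1 {θ} := by rw [hθ]; exact IntermediateField.mem_top
      induction hm using IntermediateField.adjoin_induction with
      | mem x hx => rw [Set.mem_singleton_iff.1 hx]; exact hsθ
      | algebraMap r => exact s.commutes r
      | add x y _ _ hx hy =>
        change s ((x : E) + y) = (x : E) + y
        rw [map_add, hx, hy]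
      | inv x _ hx =>
        change s ((x : E)⁻¹) = (x : E)⁻¹
        rw [map_inv₀, hx]
      | mul x y _ _ hx hy =>
        change s ((x : E) * y) = (x : E) * y
        rw [map_mul, hx, hy]
    have : s ∈ IntermediateField.fixingSubgroup M := by
      rw [IntermediateField.mem_fixingSubgroup_iff]
      intro m hm
      exact hsM ⟨m, hm⟩
    rw [hM, IntermediateField.fixingSubgroup_fixedField] at this
    exact this


theorem lemmaX {k1 E G : Type} [Field k1] [Field E] [Algebra k1 E] [FiniteDimensional k1 E]
    [Algebra.IsSeparable k1 E] [Infinite k1] [Group G] (γ : G →* (E ≃ₐ[k1] E))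
    (hγ : Function.Injective γ) :
    ∃ t : RatFunc E, Transcendental E t ∧
      FiniteDimensional (IntermediateField.adjoin k1 {t}) (RatFunc E) ∧
      Algebra.IsSeparable (IntermediateField.adjoin k1 {t}) (RatFunc E) ∧
      ∃ γ' : G ≃* (RatFunc E ≃ₐ[IntermediateField.adjoin k1 {t}] RatFunc E),
        ∀ g e, γ' g (algebraMap E (RatFunc E) e) = algebraMap E (RatFunc E) (γ g e) := by
  obtain ⟨ω, h0, h1, hγω, hω⟩ := exists_omega γ
  set u : E[X] := X * (X - 1) ^ 2 * (X - C ω) ^ 3 with hu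
  have hu' : derivative u ≠ 0 := by
    intro h
    have := congrArg (eval 0) h
    simp [hu, derivative_mul, derivative_pow] at this
    exact h0 this
  obtain ⟨hfin, hsep⟩ := ratfunc_sep (k1 := k1) u hu'
  have hC : ∀ e, algebraMap E[X] (RatFunc E) (C e) = algebraMap E (RatFunc E) e := fun e =>
    (IsScalarTower.algebraMap_apply E E[X] (RatFunc E) e).symm
  set t := algebraMap E[X] (RatFunc E) u with ht
  refine ⟨t, ?_, hfin, hsep, ?_⟩
  · apply RatFunc.transcendental_of_ne_C
    rintro ⟨c, hc⟩
    have : u = C c := by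
      apply IsFractionRing.injective E[X] (RatFunc E)
      rw [hC]; exact hc
    rw [this] at hu'
    simp at hu'
  have hext : ∀ f₁ f₂ : RatFunc E →+* RatFunc E,
      f₁ (algebraMap E[X] (RatFunc E) X) = f₂ (algebraMap E[X] (RatFunc E) X) →
      (∀ e, f₁ (algebraMap E (RatFunc E) e) = f₂ (algebraMap E (RatFunc E) e)) → f₁ = f₂ := by
    intro f₁ f₂ h1 h2
    apply IsLocalization.ringHom_ext (nonZeroDivisors E[X])
    apply Polynomial.ringHom_ext
    · intro e
      simpa [hC] using h2 e
    · exact h1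
  have hi : ∀ g, Function.Injective
      ((algebraMap E[X] (RatFunc E)).comp (mapRingHom (γ g : E →+* E))) := fun g =>
    (IsFractionRing.injective E[X] (RatFunc E)).comp (map_injective _ (γ g).injective)
  let ρ0 : G → (RatFunc E →+* RatFunc E) := fun g => IsFractionRing.lift (hi g)
  have hρ0 : ∀ g p, ρ0 g (algebraMap E[X] (RatFunc E) p) =
      algebraMap E[X] (RatFunc E) (p.map (γ g : E →+* E)) := fun g p =>
    IsFractionRing.lift_algebraMap (hi g) p
  have hρE : ∀ g e, ρ0 g (algebraMap E (RatFunc E) e) = algebraMap E (RatFunc E) (γ g e) := by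
    intro g e
    rw [← hC, hρ0, Polynomial.map_C, hC]; rfl
  have hρt : ∀ g, ρ0 g t = t := by
    intro g
    rw [ht, hρ0]
    congr 1
    simp [hu, hγω]
  have hρF : ∀ g, ∀ x ∈ IntermediateField.adjoin k1 {t}, ρ0 g x = x := by
    intro g x hx
    induction hx using IntermediateField.adjoin_induction with
    | mem x hx => rw [Set.mem_singleton_iff.1 hx]; exact hρt g
    | algebraMap r =>
      rw [IsScalarTower.algebraMap_apply k1 E (RatFunc E), hρE, AlgEquiv.commutes]
    | add x y _ _ hx hy => rw [map_add, hx, hy]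
    | inv x _ hx => rw [map_inv₀, hx]
    | mul x y _ _ hx hy => rw [map_mul, hx, hy]
  let ρ1 : G → (RatFunc E →ₐ[IntermediateField.adjoin k1 {t}] RatFunc E) := fun g =>
    { ρ0 g with commutes' := fun x => hρF g x x.2 }
  let ρ2 : G → (RatFunc E ≃ₐ[IntermediateField.adjoin k1 {t}] RatFunc E) := fun g =>
    AlgEquiv.ofBijective (ρ1 g) (Algebra.IsAlgebraic.algHom_bijective _)
  have hρ2 : ∀ g x, ρ2 g x = ρ0 g x := fun g x => rfl
  let ρ : G →* (RatFunc E ≃ₐ[IntermediateField.adjoin k1 {t}] RatFunc E) := MonoidHom.mk' ρ2 (by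
    intro g h
    have := hext (ρ0 (g * h)) ((ρ0 g).comp (ρ0 h)) (by rw [RingHom.comp_apply, hρ0, hρ0, hρ0, map_X, map_X, map_X]) (by
      intro e
      rw [RingHom.comp_apply, hρE, hρE, hρE, map_mul]; rfl)
    ext x
    rw [AlgEquiv.mul_apply, hρ2, hρ2, hρ2, this]; rfl)
  have hb : Function.Bijective ρ := by
    constructor
    · intro g h hgh
      apply hγ
      ext e
      apply (algebraMap E (RatFunc E)).injective
      rw [← hρE, ← hρE]
      exact DFunLike.congr_fun hgh _
    · intro σ
      obtain ⟨hX, s, hs, hse⟩ := ratfunc_rigid ω h0 h1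
        ((σ : RatFunc E →ₐ[IntermediateField.adjoin k1 {t}] RatFunc E).restrictScalars k1)
        (σ.commutes ⟨t, IntermediateField.mem_adjoin_simple_self k1 t⟩)
      obtain ⟨g, rfl⟩ := hω s hs
      refine ⟨g, ?_⟩
      have := hext (ρ0 g) (σ : RatFunc E →+* RatFunc E) (by rw [hρ0, map_X]; exact hX.symm) (by
        intro e
        rw [hρE]; exact (hse e).symm)
      ext x
      exact DFunLike.congr_fun this x
  exact ⟨MulEquiv.ofBijective ρ hb, hρE⟩


theorem esymm_indep {k L G E : Type} [Field k] [Field L] [Algebra k L] [Fintype G] [Field E]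
    [Algebra (MvPolynomial G L) E] [IsFractionRing (MvPolynomial G L) E] [Algebra k E]
    [IsScalarTower k (MvPolynomial G L) E] :
    AlgebraicIndependent k (fun i : Fin (Fintype.card G) =>
      algebraMap (MvPolynomial G L) E (MvPolynomial.esymm G L (i + 1))) := by
  have h1 : AlgebraicIndependent k (fun i : Fin (Fintype.card G) => MvPolynomial.esymm G k (i + 1)) := by
    rw [algebraicIndependent_iff_injective_aeval]
    intro p q hpq
    apply MvPolynomial.esymmAlgHom_injective (σ := G) k (le_refl _)
    apply Subtype.ext
    rw [MvPolynomial.esymmAlgHom_apply, MvPolynomial.esymmAlgHom_apply]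
    exact hpq
  let f : MvPolynomial G k →ₐ[k] E := (IsScalarTower.toAlgHom k (MvPolynomial G L) E).comp
    (MvPolynomial.mapAlgHom (Algebra.ofId k L))
  have hf : Function.Injective f :=
    (IsFractionRing.injective (MvPolynomial G L) E).comp
      (MvPolynomial.map_injective _ (algebraMap k L).injective)
  have h2 := h1.map' hf
  convert h2 using 1
  ext i
  change _ = algebraMap (MvPolynomial G L) E (MvPolynomial.map (algebraMap k L) _)
  rw [MvPolynomial.map_esymm]

theorem esymm_sep {k L G E : Type} [Field k] [Field L] [Algebra k L] [Fintype G] [Field E]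
    [FiniteDimensional k L] [Algebra.IsSeparable k L]
    [Algebra (MvPolynomial G L) E] [IsFractionRing (MvPolynomial G L) E] [Algebra k E]
    [IsScalarTower k (MvPolynomial G L) E] (k1 : IntermediateField k E)
    (hk1 : ∀ i < Fintype.card G, algebraMap (MvPolynomial G L) E (MvPolynomial.esymm G L (i + 1)) ∈ k1) :
    FiniteDimensional k1 E ∧ Algebra.IsSeparable k1 E := by
  let x : G → E := fun h => algebraMap (MvPolynomial G L) E (MvPolynomial.X h)
  have hxinj : Function.Injective x := (IsFractionRing.injective (MvPolynomial G L) E).comp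
    (MvPolynomial.X_injective)
  let ι : L →ₐ[k] E := (IsScalarTower.toAlgHom k (MvPolynomial G L) E).comp
    (IsScalarTower.toAlgHom k L (MvPolynomial G L))
  have hmem : ∀ i ≤ Fintype.card G, algebraMap (MvPolynomial G L) E (MvPolynomial.esymm G L i) ∈ k1 := by
    intro i hi
    cases i with
    | zero => rw [MvPolynomial.esymm_zero, map_one]; exact one_mem k1
    | succ i => exact hk1 i hi
  have hq : ∃ q : k1[X], q.map (algebraMap k1 E) = ∏ i : G, (X - C (-x i)) := by
    have h := congrArg (Polynomial.map (algebraMap (MvPolynomial G L) E))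
      (MvPolynomial.prod_C_add_X_eq_sum_esymm L G)
    rw [Polynomial.map_prod, Polynomial.map_sum] at h
    refine ⟨∑ j : Finset.range (Fintype.card G + 1),
      C ⟨_, hmem j (Nat.lt_succ_iff.1 (Finset.mem_range.1 j.2))⟩ * X ^ (Fintype.card G - j), ?_⟩
    rw [Polynomial.map_sum]
    refine Eq.trans ?_ (h.symm.trans ?_)
    · rw [← Finset.sum_coe_sort (Finset.range (Fintype.card G + 1))]
      refine Finset.sum_congr rfl fun j _ => ?_
      simp only [Polynomial.map_mul, Polynomial.map_pow, map_X, map_C]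
      rfl
    · refine Finset.prod_congr rfl fun i _ => ?_
      simp [x]
  obtain ⟨q, hq⟩ := hq
  have hqs : q.Separable := by
    rw [← Polynomial.separable_map (algebraMap k1 E), hq]
    exact Polynomial.separable_prod_X_sub_C_iff.2 (neg_injective.comp hxinj)
  have hxs : ∀ h, IsSeparable k1 (x h) := by
    intro h
    have h1 : IsSeparable k1 (-x h) := by
      refine hqs.of_dvd (minpoly.dvd _ _ ?_)
      rw [aeval_def, ← eval_map, hq, eval_prod]
      exact Finset.prod_eq_zero (Finset.mem_univ h) (by simp)
    have := (mem_separableClosure_iff (F := k1) (E := E)).2 h1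
    rw [neg_mem_iff] at this
    exact mem_separableClosure_iff.1 this
  obtain ⟨θ, hθ⟩ := Field.exists_primitive_element k L
  have hsθ : IsSeparable k1 (ι θ) :=
    (IsSeparable.map ι ι.injective (Algebra.IsSeparable.isSeparable k θ)).tower_top k1
  let S : Set E := insert (ι θ) (Set.range x)
  have hS : ∀ s ∈ S, IsSeparable k1 s := by
    rintro s (rfl | ⟨h, rfl⟩)
    · exact hsθ
    · exact hxs h
  have hSf : Finite S := ((Set.finite_range x).insert _)
  have f1 : FiniteDimensional k1 (IntermediateField.adjoin k1 S) :=
    IntermediateField.finiteDimensional_adjoin fun s hs => (hS s hs).isIntegral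
  have s1 : Algebra.IsSeparable k1 (IntermediateField.adjoin k1 S) :=
    (IntermediateField.isSeparable_adjoin_iff_isSeparable _ _).2 hS
  have hL : ∀ l, ι l ∈ IntermediateField.adjoin k1 S := by
    have hle : IntermediateField.adjoin k {θ} ≤
        ((IntermediateField.adjoin k1 S).restrictScalars k).comap ι := by
      rw [IntermediateField.adjoin_simple_le_iff]
      exact IntermediateField.subset_adjoin k1 S (Set.mem_insert _ _)
    rw [hθ] at hle
    intro l
    exact hle (IntermediateField.mem_top (x := l))
  have hR : ∀ p, algebraMap (MvPolynomial G L) E p ∈ IntermediateField.adjoin k1 S := by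
    intro p
    induction p using MvPolynomial.induction_on with
    | C a => exact hL a
    | add p q hp hq => rw [map_add]; exact add_mem hp hq
    | mul_X p n hp =>
      rw [map_mul]
      exact mul_mem hp (IntermediateField.subset_adjoin k1 S (Set.mem_insert_of_mem _ ⟨n, rfl⟩))
  have htop : IntermediateField.adjoin k1 S = ⊤ := by
    rw [eq_top_iff]
    intro z _
    obtain ⟨a, b, _, rfl⟩ := IsFractionRing.div_surjective (A := MvPolynomial G L) z
    exact div_mem (hR a) (hR b)
  rw [htop] at f1 s1
  exact ⟨Module.Finite.equiv (IntermediateField.topEquiv (F := k1) (E := E)).toLinearEquiv,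
    Algebra.IsSeparable.of_algHom k1 _
      (IntermediateField.topEquiv (F := k1) (E := E)).symm.toAlgHom⟩


theorem noether_action {k L G E : Type} [Field k] [Field L] [Algebra k L] [Fintype G] [Group G]
    [Field E] [FiniteDimensional k L] [Algebra.IsSeparable k L]
    [Algebra (MvPolynomial G L) E] [IsFractionRing (MvPolynomial G L) E] [Algebra k E]
    [IsScalarTower k (MvPolynomial G L) E] (α : G →* (L ≃ₐ[k] L)) (k1 : IntermediateField k E)
    (hk1 : k1 = IntermediateField.adjoin k (Set.range (fun i : Fin (Fintype.card G) =>
      algebraMap (MvPolynomial G L) E (MvPolynomial.esymm G L (i + 1))))) :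
    FiniteDimensional k1 E ∧ Algebra.IsSeparable k1 E ∧ Infinite k1 ∧
    ∃ γ : G →* (E ≃ₐ[k1] E), Function.Injective γ ∧
      ∀ g l, γ g (algebraMap (MvPolynomial G L) E (MvPolynomial.C l)) =
        algebraMap (MvPolynomial G L) E (MvPolynomial.C (α g l)) := by
  obtain ⟨hfin, hsep⟩ := esymm_sep (k := k) (L := L) (G := G) (E := E) k1 (by
    intro i hi
    rw [hk1]
    exact IntermediateField.subset_adjoin _ _ ⟨⟨i, hi⟩, rfl⟩)
  have hRinj := IsFractionRing.injective (MvPolynomial G L) E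
  refine ⟨hfin, hsep, ?_, ?_⟩
  · by_contra h
    rw [not_infinite_iff_finite] at h
    have : Finite E := Module.finite_of_finite k1
    have : Finite (MvPolynomial G L) := Finite.of_injective _ hRinj
    exact not_finite (MvPolynomial G L)
  let act : G → (MvPolynomial G L →+* MvPolynomial G L) := fun g =>
    ((MvPolynomial.rename (Equiv.mulLeft g)).toRingHom).comp
      (MvPolynomial.map ((α g : L ≃ₐ[k] L) : L →+* L))
  have hactX : ∀ g h, act g (MvPolynomial.X h) = MvPolynomial.X (g * h) := by
    intro g h
    simp [act]
  have hactC : ∀ g l, act g (MvPolynomial.C l) = MvPolynomial.C (α g l) := by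
    intro g l
    simp [act]
  have hacte : ∀ g n, act g (MvPolynomial.esymm G L n) = MvPolynomial.esymm G L n := by
    intro g n
    change MvPolynomial.rename (Equiv.mulLeft g) (MvPolynomial.map _ _) = _
    rw [MvPolynomial.map_esymm, MvPolynomial.rename_esymm]
  have hi : ∀ g, Function.Injective ((algebraMap (MvPolynomial G L) E).comp (act g)) := fun g =>
    hRinj.comp ((MvPolynomial.rename_injective _ (Equiv.mulLeft g).injective).comp
      (MvPolynomial.map_injective _ (α g).injective))
  let ρ0 : G → (E →+* E) := fun g => IsFractionRing.lift (hi g)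
  have hρ0 : ∀ g p, ρ0 g (algebraMap (MvPolynomial G L) E p) =
      algebraMap (MvPolynomial G L) E (act g p) := fun g p =>
    IsFractionRing.lift_algebraMap (hi g) p
  have hρF : ∀ g, ∀ x ∈ k1, ρ0 g x = x := by
    intro g x hx
    rw [hk1] at hx
    induction hx using IntermediateField.adjoin_induction with
    | mem x hx =>
      obtain ⟨i, rfl⟩ := hx
      change ρ0 g (algebraMap (MvPolynomial G L) E _) = algebraMap (MvPolynomial G L) E _
      rw [hρ0, hacte]
    | algebraMap r =>
      rw [IsScalarTower.algebraMap_apply k (MvPolynomial G L) E, hρ0,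
        MvPolynomial.algebraMap_apply, hactC, AlgEquiv.commutes]
    | add x y _ _ hx hy => rw [map_add, hx, hy]
    | inv x _ hx => rw [map_inv₀, hx]
    | mul x y _ _ hx hy => rw [map_mul, hx, hy]
  let ρ1 : G → (E →ₐ[k1] E) := fun g =>
    { ρ0 g with commutes' := fun x => hρF g x x.2 }
  let ρ2 : G → (E ≃ₐ[k1] E) := fun g =>
    AlgEquiv.ofBijective (ρ1 g) (Algebra.IsAlgebraic.algHom_bijective _)
  have hρ2 : ∀ g x, ρ2 g x = ρ0 g x := fun g x => rfl
  let ρ : G →* (E ≃ₐ[k1] E) := MonoidHom.mk' ρ2 (by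
    intro g h
    have : ρ0 (g * h) = (ρ0 g).comp (ρ0 h) := by
      apply IsLocalization.ringHom_ext (nonZeroDivisors (MvPolynomial G L))
      apply MvPolynomial.ringHom_ext
      · intro l
        rw [RingHom.comp_apply, RingHom.comp_apply, RingHom.comp_apply, hρ0, hρ0, hρ0,
          hactC, hactC, hactC, map_mul]
        rfl
      · intro l
        rw [RingHom.comp_apply, RingHom.comp_apply, RingHom.comp_apply, hρ0, hρ0, hρ0,
          hactX, hactX, hactX, mul_assoc]
    ext x
    rw [AlgEquiv.mul_apply, hρ2, hρ2, hρ2, this]; rfl)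
  refine ⟨ρ, ?_, ?_⟩
  · intro g h hgh
    have h1 : ρ0 g (algebraMap (MvPolynomial G L) E (MvPolynomial.X 1)) =
      ρ0 h (algebraMap (MvPolynomial G L) E (MvPolynomial.X 1)) := DFunLike.congr_fun hgh _
    rw [hρ0, hρ0, hactX, hactX, mul_one, mul_one] at h1
    exact MvPolynomial.X_injective (hRinj h1)
  · intro g l
    change ρ0 g _ = _
    rw [hρ0, hactC]


theorem spec_gen {k F Ω0 G : Type} [Field k] (hk : IsHilbertianField k) {n : ℕ} (hn : 0 < n)
    [Field F] [Field Ω0] [Algebra k F] [Algebra F Ω0] [FiniteDimensional F Ω0]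
    [Algebra.IsSeparable F Ω0] [Group G] (v : Fin n → F) (hv : AlgebraicIndependent k v)
    (hs : ∀ z : F, ∃ r s : MvPolynomial (Fin n) k, z = MvPolynomial.aeval v r / MvPolynomial.aeval v s)
    (L : IntermediateField k (AlgebraicClosure k)) (α : G →* (L ≃ₐ[k] L))
    (γ : G ≃* (Ω0 ≃ₐ[F] Ω0)) (ι : L →+* Ω0)
    (hι : ∀ x : k, ι (algebraMap k L x) = algebraMap F Ω0 (algebraMap k F x))
    (hγ : ∀ g l, γ g (ι l) = ι (α g l)) :
    ∃ (E : IntermediateField k (AlgebraicClosure k)) (hLE : L ≤ E),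
      FiniteDimensional k E ∧ Algebra.IsSeparable k E ∧
      ∃ β : (E ≃ₐ[k] E) ≃* G,
        ∀ (σ : E ≃ₐ[k] E) (x : AlgebraicClosure k) (hx : x ∈ L),
          ((σ ⟨x, hLE hx⟩ : E) : AlgebraicClosure k) =
            ((α (β σ) ⟨x, hx⟩ : L) : AlgebraicClosure k) := by
  letI a1 : Algebra (MvPolynomial (Fin n) k) F := (MvPolynomial.aeval v).toRingHom.toAlgebra
  letI a2 : Algebra (MvPolynomial (Fin n) k) Ω0 :=
    ((algebraMap F Ω0).comp (MvPolynomial.aeval v).toRingHom).toAlgebra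
  haveI : IsScalarTower (MvPolynomial (Fin n) k) F Ω0 := IsScalarTower.of_algebraMap_eq' rfl
  haveI : FaithfulSMul (MvPolynomial (Fin n) k) F :=
    (faithfulSMul_iff_algebraMap_injective _ _).2 hv
  haveI : IsFractionRing (MvPolynomial (Fin n) k) F := IsFractionRing.of_field _ _ hs
  refine spec_final (F := F) hk hn L α γ ι ?_ hγ
  intro x
  rw [hι]
  change _ = algebraMap F Ω0 (MvPolynomial.aeval v (MvPolynomial.C x))
  rw [MvPolynomial.aeval_C]

theorem mid_aux (k : Type) [Field k] (hk : IsHilbertianField k)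
    (G : Type) [Group G]
    (L : IntermediateField k (AlgebraicClosure k))
    (α : G →* (L ≃ₐ[k] L)) {k1 E1 : Type} [Field E1] [Field k1] [Algebra k k1] [Algebra k1 E1]
    [Algebra k E1] [IsScalarTower k k1 E1] [FiniteDimensional k1 E1] [Algebra.IsSeparable k1 E1]
    [Infinite k1] {m : ℕ} (w : Fin m → E1) (hind : AlgebraicIndependent k w)
    (hwk1 : ∀ i, ∃ y : k1, algebraMap k1 E1 y = w i)
    (hk1 : ∀ y : k1, algebraMap k1 E1 y ∈ IntermediateField.adjoin k (Set.range w))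
    (γ : G →* (E1 ≃ₐ[k1] E1)) (hγ : Function.Injective γ) (ι : L →ₐ[k] E1)
    (hγL : ∀ g l, γ g (ι l) = ι (α g l)) :
    ∃ (E : IntermediateField k (AlgebraicClosure k)) (hLE : L ≤ E),
      FiniteDimensional k E ∧ Algebra.IsSeparable k E ∧
      ∃ β : (E ≃ₐ[k] E) ≃* G,
        ∀ (σ : E ≃ₐ[k] E) (x : AlgebraicClosure k) (hx : x ∈ L),
          ((σ ⟨x, hLE hx⟩ : E) : AlgebraicClosure k) =
            ((α (β σ) ⟨x, hx⟩ : L) : AlgebraicClosure k) := by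
  obtain ⟨t, ht, hfin, hsep, γ', hγ'⟩ := lemmaX γ hγ
  haveI : IsScalarTower k k1 (RatFunc E1) := IsScalarTower.of_algebraMap_eq' (by
    ext x
    change algebraMap k (RatFunc E1) x = algebraMap k1 (RatFunc E1) (algebraMap k k1 x)
    rw [IsScalarTower.algebraMap_apply k E1 (RatFunc E1),
      IsScalarTower.algebraMap_apply k1 E1 (RatFunc E1), ← IsScalarTower.algebraMap_apply k k1 E1])
  have hy : AlgebraicIndependent E1 (fun _ : Unit => t) :=
    algebraicIndependent_unique_type_iff.2 ht
  have hvw := AlgebraicIndependent.sumElim_comp hind hy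
  set v0 : Unit ⊕ Fin (m) → RatFunc E1 :=
    Sum.elim (fun _ : Unit => t) (algebraMap E1 (RatFunc E1) ∘ w) with hv0
  have hmem : ∀ i, v0 i ∈ IntermediateField.adjoin k1 {t} := by
    rintro (i | i)
    · exact IntermediateField.mem_adjoin_simple_self k1 t
    · obtain ⟨y, hy⟩ := hwk1 i
      have h2 := (IntermediateField.adjoin k1 {t}).algebraMap_mem y
      rw [IsScalarTower.algebraMap_apply k1 E1 (RatFunc E1), hy] at h2
      exact h2
  have hk1mem : ∀ x ∈ IntermediateField.adjoin k (Set.range w),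
      algebraMap E1 (RatFunc E1) x ∈ IntermediateField.adjoin k (Set.range v0) := by
    intro x hx
    induction hx using IntermediateField.adjoin_induction with
    | mem x hx =>
      obtain ⟨i, rfl⟩ := hx
      exact IntermediateField.subset_adjoin _ _ ⟨Sum.inr i, rfl⟩
    | algebraMap r =>
      rw [← IsScalarTower.algebraMap_apply k E1 (RatFunc E1)]
      exact IntermediateField.algebraMap_mem _ _
    | add x y _ _ hx hy => rw [map_add]; exact add_mem hx hy
    | inv x _ hx => rw [map_inv₀]; exact inv_mem hx
    | mul x y _ _ hx hy => rw [map_mul]; exact mul_mem hx hy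
  have hFmem : ∀ x ∈ IntermediateField.adjoin k1 {t},
      x ∈ IntermediateField.adjoin k (Set.range v0) := by
    intro x hx
    induction hx using IntermediateField.adjoin_induction with
    | mem x hx =>
      rw [Set.mem_singleton_iff.1 hx]
      exact IntermediateField.subset_adjoin _ _ ⟨Sum.inl (), rfl⟩
    | algebraMap r =>
      rw [IsScalarTower.algebraMap_apply k1 E1 (RatFunc E1)]
      exact hk1mem _ (hk1 r)
    | add x y _ _ hx hy => exact add_mem hx hy
    | inv x _ hx => exact inv_mem hx
    | mul x y _ _ hx hy => exact mul_mem hx hy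
  let e : Fin (1 + m) ≃ Unit ⊕ Fin (m) :=
    finSumFinEquiv.symm.trans (Equiv.sumCongr (Equiv.ofUnique _ _) (Equiv.refl _))
  let v : Fin (1 + m) → IntermediateField.adjoin k1 {t} := fun i => ⟨v0 (e i), hmem _⟩
  letI : Algebra k (IntermediateField.adjoin k1 {t}) :=
    ((algebraMap k1 (IntermediateField.adjoin k1 {t})).comp (algebraMap k k1)).toAlgebra
  haveI : IsScalarTower k (IntermediateField.adjoin k1 {t}) (RatFunc E1) :=
    IsScalarTower.of_algebraMap_eq' (by
      rw [IsScalarTower.algebraMap_eq k k1 (RatFunc E1)]; rfl)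
  let j : IntermediateField.adjoin k1 {t} →ₐ[k] RatFunc E1 := IsScalarTower.toAlgHom _ _ _
  have hj : Function.Injective j := Subtype.val_injective
  have hjv : j ∘ v = v0 ∘ e := rfl
  have hv : AlgebraicIndependent k v := by
    apply AlgebraicIndependent.of_comp j
    rw [hjv]
    exact hvw.comp e e.injective
  have hae : ∀ p : MvPolynomial (Fin (1 + m)) k, j (MvPolynomial.aeval v p) = MvPolynomial.aeval (v0 ∘ e) p := by
    intro p
    rw [← hjv]
    exact MvPolynomial.comp_aeval_apply v j p
  refine spec_gen hk (by omega) v hv ?_ L α γ'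
    ((algebraMap E1 (RatFunc E1)).comp (ι : L →+* E1)) ?_ ?_
  · intro z
    have h1 := hFmem z z.2
    have h2 : Set.range v0 = Set.range (v0 ∘ e) := by
      rw [Set.range_comp, e.surjective.range_eq, Set.image_univ]
    rw [h2, IntermediateField.mem_adjoin_range_iff] at h1
    obtain ⟨r, s, h⟩ := h1
    refine ⟨r, s, hj ?_⟩
    rw [map_div₀, hae, hae]
    exact h
  · intro x
    rw [← IsScalarTower.algebraMap_apply k (IntermediateField.adjoin k1 {t}) (RatFunc E1),
      IsScalarTower.algebraMap_apply k E1 (RatFunc E1), ← ι.commutes]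
    rfl
  · intro g l
    change γ' g (algebraMap E1 (RatFunc E1) _) = algebraMap E1 (RatFunc E1) _
    rw [hγ']
    exact congrArg _ (hγL g l)

theorem main_aux (k : Type) [Field k] (hk : IsHilbertianField k)
    (G : Type) [Group G] [Fintype G]
    (L : IntermediateField k (AlgebraicClosure k))
    [FiniteDimensional k L] [Algebra.IsSeparable k L]
    (α : G →* (L ≃ₐ[k] L)) {E1 : Type} [Field E1]
    [Algebra (MvPolynomial G L) E1] [IsFractionRing (MvPolynomial G L) E1] [Algebra k E1]
    [IsScalarTower k (MvPolynomial G L) E1] :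
    ∃ (E : IntermediateField k (AlgebraicClosure k)) (hLE : L ≤ E),
      FiniteDimensional k E ∧ Algebra.IsSeparable k E ∧
      ∃ β : (E ≃ₐ[k] E) ≃* G,
        ∀ (σ : E ≃ₐ[k] E) (x : AlgebraicClosure k) (hx : x ∈ L),
          ((σ ⟨x, hLE hx⟩ : E) : AlgebraicClosure k) =
            ((α (β σ) ⟨x, hx⟩ : L) : AlgebraicClosure k) := by
  have hind := esymm_indep (k := k) (L := L) (G := G) (E := E1)
  set w : Fin (Fintype.card G) → E1 := fun i =>
      algebraMap (MvPolynomial G L) E1 (MvPolynomial.esymm G L (i + 1)) with hw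
  obtain ⟨k1, hk1⟩ : ∃ k1 : IntermediateField k E1, k1 = IntermediateField.adjoin k (Set.range w) :=
    ⟨_, rfl⟩
  obtain ⟨_, _, _, γ, hγ, hγL⟩ := noether_action (E := E1) α k1 hk1
  have hk1' : ∀ x, x ∈ k1 ↔ x ∈ IntermediateField.adjoin k (Set.range w) := fun x => by rw [hk1]
  exact mid_aux k hk G L α (k1 := k1) w hind
    (fun i => ⟨⟨w i, (hk1' _).2 (IntermediateField.subset_adjoin _ _ ⟨i, rfl⟩)⟩, rfl⟩)
    (fun y => (hk1' _).1 y.2) γ hγ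
    ((IsScalarTower.toAlgHom k (MvPolynomial G L) E1).comp
      (IsScalarTower.toAlgHom k L (MvPolynomial G L))) hγL

end

/-- **Every finite embedding problem over a Hilbertian field has a solution.**
For every finite group `G`, finite separable extension `L/k` (inside a fixed algebraic
closure of `k`) and surjective homomorphism `α : G → Aut(L/k)`, there are a finite
separable extension `E/k` with `L ⊆ E` and an isomorphism `β : Aut(E/k) ≃ G` such that
every `σ ∈ Aut(E/k)` maps `L` onto itself and `σ|_L = α (β σ)`. -/
theorem statement_2 (k : Type) [Field k] (hk : IsHilbertianField k)
    (G : Type) [Group G] [Finite G]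
    (L : IntermediateField k (AlgebraicClosure k))
    [FiniteDimensional k L] [Algebra.IsSeparable k L]
    (α : G →* (L ≃ₐ[k] L)) (hα : Function.Surjective α) :
    ∃ (E : IntermediateField k (AlgebraicClosure k)) (hLE : L ≤ E),
      FiniteDimensional k E ∧ Algebra.IsSeparable k E ∧
      ∃ β : (E ≃ₐ[k] E) ≃* G,
        ∀ (σ : E ≃ₐ[k] E) (x : AlgebraicClosure k) (hx : x ∈ L),
          ((σ ⟨x, hLE hx⟩ : E) : AlgebraicClosure k) =
            ((α (β σ) ⟨x, hx⟩ : L) : AlgebraicClosure k) := by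
  cases nonempty_fintype G
  exact main_aux k hk G L α (E1 := FractionRing (MvPolynomial G L))
end
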